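/- arXiv:0908.1885 — 4 statements merged into one kernel-verified Lean document; each statement's English description precedes it below -/
import Mathlib

section
/- Let p ≥ 1 be a real number, ω > 0, and fix any constant α with 0 < α < 1. Suppose k : ℝ × [0, ω) → ℝ is a smooth function, 2π-periodic in its first (angular) variable θ, with k(θ,t) > 0 everywhere, satisfying the general curve shortening equation ∂k/∂t = k²·(∂²(k^p)/∂θ² + k^p) on ℝ × (0, ω), and suppose that sup_θ |k(θ,t)·((p+1)(ω−t))^{1/(p+1)} − 1| → 0 as t → ω⁻. Then for each integer l ≥ 1 there exists a positive constant C(l,p), depending only on l, p and the initial data k(·,0), such that for all t ∈ [0, ω): sup_θ |∂^l k/∂θ^l (θ,t)| ≤ C(l,p)·(ω−t)^{2αp/(p+1) − 1/(p+1)}. -/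
open Real Filter Set

lemma HasFDerivAt.hasDerivAt_apply_curve {E : Type*} [NormedAddCommGroup E] [NormedSpace ℝ E]
    {D : E → E →L[ℝ] ℝ} {D' : E →L[ℝ] E →L[ℝ] ℝ} {c : ℝ → E} {x : ℝ} {v : E}
    (hD : HasFDerivAt D D' (c x)) (hc : HasDerivAt c v x) (w : E) :
    HasDerivAt (fun y => D (c y) w) (D' v w) x := by
  have h1 := hD.comp_hasDerivAt x hc
  have h2 := h1.clm_apply (hasDerivAt_const x w)
  simpa using h2

/-- `F t θ` depends smoothly on `(θ, t) ∈ ℝ × I`. -/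
def SmoothStrip (I : Set ℝ) (F : ℝ → ℝ → ℝ) : Prop :=
  ContDiffOn ℝ (⊤ : ℕ∞) (fun q : ℝ × ℝ => F q.2 q.1) (univ ×ˢ I)

namespace SmoothStrip

variable {I J : Set ℝ} {F G : ℝ → ℝ → ℝ}

lemma mono (hF : SmoothStrip I F) (h : J ⊆ I) : SmoothStrip J F :=
  ContDiffOn.mono hF (prod_mono_right h)

lemma contDiff (hF : SmoothStrip I F) {t : ℝ} (ht : t ∈ I) :
    ContDiff ℝ (⊤ : ℕ∞) (F t) := by
  have h := ContDiffOn.comp (f := fun x : ℝ => (x, t)) (s := univ) hF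
    (by fun_prop) (fun x _ => ⟨trivial, ht⟩)
  exact contDiffOn_univ.1 h

lemma hasDerivAt (hF : SmoothStrip I F) {t : ℝ} (ht : t ∈ I) (θ : ℝ) :
    HasDerivAt (F t) (deriv (F t) θ) θ :=
  ((hF.contDiff ht).differentiable (by simp) θ).hasDerivAt

lemma continuousOn (hF : SmoothStrip I F) :
    ContinuousOn (fun q : ℝ × ℝ => F q.2 q.1) (univ ×ˢ I) :=
  ContDiffOn.continuousOn hF

protected lemma deriv (hF : SmoothStrip I F) (hI : UniqueDiffOn ℝ I) :
    SmoothStrip I (fun t => deriv (F t)) := by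
  have h := ContDiffOn.fderivWithin hF (uniqueDiffOn_univ.prod hI)
    (m := (⊤ : ℕ∞)) (by simp)
  have h1 := h.clm_apply (contDiffOn_const (c := ((1 : ℝ), (0 : ℝ))))
  refine h1.congr ?_
  rintro ⟨x, t⟩ ⟨-, ht⟩
  have h2 := (ContDiffOn.differentiableOn hF (by simp) (x, t) ⟨trivial, ht⟩).hasFDerivWithinAt
  have h3 : HasDerivWithinAt (fun y : ℝ => (y, t)) ((1 : ℝ), (0 : ℝ)) univ x :=
    ((hasDerivAt_id x).prodMk (hasDerivAt_const x t)).hasDerivWithinAt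
  have h4 := h2.comp_hasDerivWithinAt (f := fun y : ℝ => (y, t)) x h3
    (by intro y _; exact ⟨trivial, ht⟩)
  exact (hasDerivWithinAt_univ.1 h4).deriv

lemma iteratedDeriv (hF : SmoothStrip I F) (hI : UniqueDiffOn ℝ I) (n : ℕ) :
    SmoothStrip I (fun t => iteratedDeriv n (F t)) := by
  induction n with
  | zero => simpa using hF
  | succ n ih => simpa only [iteratedDeriv_succ] using ih.deriv hI

lemma contDiffAt (hI : IsOpen I) (hF : SmoothStrip I F) {t : ℝ} (ht : t ∈ I) (θ : ℝ) :
    ContDiffAt ℝ (⊤ : ℕ∞) (fun q : ℝ × ℝ => F q.2 q.1) (θ, t) :=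
  ContDiffOn.contDiffAt hF ((isOpen_univ.prod hI).mem_nhds ⟨trivial, ht⟩)

/-- The time derivative of a smooth function is smooth, and commutes with the angular one. -/
lemma time_deriv (hI : IsOpen I) (hF : SmoothStrip I F)
    (hG : ∀ t ∈ I, ∀ θ, HasDerivAt (fun s => F s θ) (G t θ) t) :
    SmoothStrip I G ∧
      ∀ t ∈ I, ∀ θ, HasDerivAt (fun s => deriv (F s) θ) (deriv (G t) θ) t := by
  set f : ℝ × ℝ → ℝ := fun q => F q.2 q.1 with hf
  have hO : IsOpen ((univ : Set ℝ) ×ˢ I) := isOpen_univ.prod hI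
  have hfd : ∀ t ∈ I, ∀ θ, HasFDerivAt f (fderiv ℝ f (θ, t)) (θ, t) := fun t ht θ =>
    ((hF.contDiffAt hI ht θ).differentiableAt (by simp)).hasFDerivAt
  have hx : ∀ t ∈ I, ∀ θ, deriv (F t) θ = fderiv ℝ f (θ, t) (1, 0) := by
    intro t ht θ
    have h3 : HasDerivAt (fun y : ℝ => (y, t)) ((1 : ℝ), (0 : ℝ)) θ :=
      (hasDerivAt_id θ).prodMk (hasDerivAt_const θ t)
    exact ((hfd t ht θ).comp_hasDerivAt θ h3).deriv
  have hcurve : ∀ t θ : ℝ, HasDerivAt (fun s : ℝ => (θ, s)) ((0 : ℝ), (1 : ℝ)) t := fun t θ =>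
    (hasDerivAt_const t θ).prodMk (hasDerivAt_id t)
  have ht' : ∀ t ∈ I, ∀ θ, G t θ = fderiv ℝ f (θ, t) (0, 1) := by
    intro t ht θ
    exact (hG t ht θ).unique ((hfd t ht θ).comp_hasDerivAt t (hcurve t θ))
  have hD : ContDiffOn ℝ (⊤ : ℕ∞) (fderiv ℝ f) (univ ×ˢ I) :=
    ContDiffOn.fderiv_of_isOpen hF hO (by simp)
  refine ⟨?_, ?_⟩
  · have h1 := hD.clm_apply (contDiffOn_const (c := ((0 : ℝ), (1 : ℝ))))
    refine h1.congr ?_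
    rintro ⟨x, t⟩ ⟨-, ht⟩
    exact ht' t ht x
  · intro t ht θ
    have hDd : HasFDerivAt (fderiv ℝ f) (fderiv ℝ (fderiv ℝ f) (θ, t)) (θ, t) :=
      ((hD.contDiffAt (hO.mem_nhds ⟨trivial, ht⟩)).differentiableAt (by simp)).hasFDerivAt
    have hsymm : IsSymmSndFDerivAt ℝ f (θ, t) :=
      (hF.contDiffAt hI ht θ).isSymmSndFDerivAt
        (by simpa using WithTop.coe_le_coe.2 (le_top : (2 : ℕ∞) ≤ ⊤))
    have h1 : HasDerivAt (fun s => fderiv ℝ f (θ, s) (1, 0))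
        (fderiv ℝ (fderiv ℝ f) (θ, t) (0, 1) (1, 0)) t := by
      exact hDd.hasDerivAt_apply_curve (hcurve t θ) (1, 0)
    have h2 : HasDerivAt (fun y => fderiv ℝ f (y, t) (0, 1))
        (fderiv ℝ (fderiv ℝ f) (θ, t) (1, 0) (0, 1)) θ := by
      have h3 : HasDerivAt (fun y : ℝ => (y, t)) ((1 : ℝ), (0 : ℝ)) θ :=
        (hasDerivAt_id θ).prodMk (hasDerivAt_const θ t)
      exact HasFDerivAt.hasDerivAt_apply_curve (c := fun y : ℝ => (y, t)) (x := θ) hDd h3 (0, 1)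
    have h4 : deriv (G t) θ = fderiv ℝ (fderiv ℝ f) (θ, t) (0, 1) (1, 0) := by
      rw [← hsymm (1, 0) (0, 1), ← h2.deriv]
      congr 1
      ext y
      exact ht' t ht y
    rw [h4]
    refine h1.congr_of_eventuallyEq ?_
    filter_upwards [hI.mem_nhds ht] with s hs
    exact hx s hs θ

lemma time_iteratedDeriv (hI : IsOpen I) (hF : SmoothStrip I F)
    (hG : ∀ t ∈ I, ∀ θ, HasDerivAt (fun s => F s θ) (G t θ) t) (n : ℕ) :
    ∀ t ∈ I, ∀ θ,
      HasDerivAt (fun s => _root_.iteratedDeriv n (F s) θ) (_root_.iteratedDeriv n (G t) θ) t := by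
  induction n with
  | zero => simpa using hG
  | succ n ih =>
    simpa only [iteratedDeriv_succ] using
      ((hF.iteratedDeriv hI.uniqueDiffOn n).time_deriv hI ih).2

/-- Differentiation of the integral over a period. -/
lemma hasDerivAt_integral (hI : IsOpen I) (hF : SmoothStrip I F)
    (hG : ∀ t ∈ I, ∀ θ, HasDerivAt (fun s => F s θ) (G t θ) t) {t : ℝ} (ht : t ∈ I) (a b : ℝ) :
    HasDerivAt (fun s => ∫ θ in a..b, F s θ) (∫ θ in a..b, G t θ) t := by
  have hGs := (hF.time_deriv hI hG).1
  obtain ⟨ε, hε, hball⟩ := Metric.nhds_basis_closedBall.mem_iff.1 (hI.mem_nhds ht)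
  have hK : IsCompact (uIcc a b ×ˢ Metric.closedBall t ε) :=
    isCompact_uIcc.prod (isCompact_closedBall t ε)
  obtain ⟨C, hC⟩ := hK.exists_bound_of_continuousOn
    (hGs.continuousOn.mono (prod_mono (subset_univ _) hball))
  have hci : ∀ {H : ℝ → ℝ → ℝ}, SmoothStrip I H → ∀ s ∈ I, Continuous (H s) :=
    fun hH s hs => (hH.contDiff hs).continuous
  refine (intervalIntegral.hasDerivAt_integral_of_dominated_loc_of_deriv_le
    (F := F) (F' := G) (bound := fun _ => C) (Metric.closedBall_mem_nhds t hε) ?_ ?_ ?_ ?_ ?_ ?_).2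
  · filter_upwards [hI.mem_nhds ht] with s hs
    exact (hci hF s hs).aestronglyMeasurable
  · exact (hci hF t ht).intervalIntegrable _ _
  · exact (hci hGs t ht).aestronglyMeasurable
  · refine Eventually.of_forall fun θ hθ s hs => hC (θ, s) ⟨uIoc_subset_uIcc hθ, hs⟩
  · simp
  · exact Eventually.of_forall fun θ _ s hs => hG s (hball hs) θ

end SmoothStrip

/-- The second derivative test at a local maximum. -/
lemma IsLocalMax.deriv_deriv_nonpos {f : ℝ → ℝ} {x : ℝ} (h : IsLocalMax f x)
    (hf : ContinuousAt f x) : deriv (deriv f) x ≤ 0 := by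
  by_contra! hpos
  have hmin := isLocalMin_of_deriv_deriv_pos hpos h.deriv_eq_zero hf
  have heq : f =ᶠ[nhds x] fun _ => f x := by
    filter_upwards [h, hmin] with y h1 h2 using le_antisymm h1 h2
  have := heq.deriv.deriv_eq
  simp at this
  exact hpos.ne' this

/-- Maximum principle for functions periodic in the space variable. -/
lemma periodic_maximum_principle {φ : ℝ → ℝ → ℝ} {P T S K : ℝ} (hP : 0 < P)
    (hper : ∀ t, Function.Periodic (φ t) P)
    (hcont : ContinuousOn (fun q : ℝ × ℝ => φ q.2 q.1) (univ ×ˢ Ico T S))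
    (hinit : ∀ θ, φ T θ ≤ K)
    (hdec : ∀ t ∈ Ioo T S, ∀ θ, K < φ t θ → IsLocalMax (φ t) θ →
      ∃ d < 0, HasDerivAt (fun s => φ s θ) d t) :
    ∀ t ∈ Ico T S, ∀ θ, φ t θ ≤ K := by
  intro t₁ ht₁ θ₁
  by_contra! hbig
  have hK : IsCompact (Icc 0 P ×ˢ Icc T t₁) := isCompact_Icc.prod isCompact_Icc
  have hred : ∀ t θ, ∃ y ∈ Icc 0 P, φ t θ = φ t y := by
    intro t θ
    obtain ⟨y, hy, h⟩ := (hper t).exists_mem_Ico₀ hP θ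
    exact ⟨y, Ico_subset_Icc_self hy, h⟩
  obtain ⟨⟨θ₀, t₀⟩, ⟨hθ₀, ht₀⟩, hmax⟩ := hK.exists_isMaxOn
    ⟨(0, t₁), ⟨le_rfl, hP.le⟩, ht₁.1, le_rfl⟩
    (hcont.mono (prod_mono (subset_univ _) fun s hs => ⟨hs.1, hs.2.trans_lt ht₁.2⟩))
  have hmax' : ∀ t ∈ Icc T t₁, ∀ θ, φ t θ ≤ φ t₀ θ₀ := by
    intro t ht θ
    obtain ⟨y, hy, h⟩ := hred t θ
    rw [h]
    exact hmax (show (y, t) ∈ Icc 0 P ×ˢ Icc T t₁ from ⟨hy, ht⟩)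
  have hgt : K < φ t₀ θ₀ := hbig.trans_le (hmax' t₁ ⟨ht₁.1, le_rfl⟩ θ₁)
  have hTt : T < t₀ := by
    rcases ht₀.1.eq_or_lt with h | h
    · have := hinit θ₀
      change T = t₀ at h
      rw [h] at this
      linarith
    · exact h
  obtain ⟨d, hd, hderiv⟩ := hdec t₀ ⟨hTt, ht₀.2.trans_lt ht₁.2⟩ θ₀ hgt
    (Eventually.of_forall fun y => hmax' t₀ ht₀ y)
  have hslope := hderiv.hasDerivWithinAt (s := Iio t₀)
  rw [hasDerivWithinAt_iff_tendsto_slope' self_notMem_Iio] at hslope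
  have hge : 0 ≤ d := by
    refine ge_of_tendsto hslope ?_
    filter_upwards [Ioo_mem_nhdsLT hTt] with s hs
    rw [slope_def_field]
    exact div_nonneg_of_nonpos
      (sub_nonpos.2 (hmax' s ⟨hs.1.le, hs.2.le.trans ht₀.2⟩ θ₀)) (by linarith [hs.2])
  linarith

lemma rpow_le_two_rpow_abs {y : ℝ} (h1 : 1 / 2 ≤ y) (h2 : y ≤ 2) (r : ℝ) :
    y ^ r ≤ (2 : ℝ) ^ |r| := by
  have hy : 0 < y := by linarith
  rcases le_total 0 r with hr | hr
  · rw [abs_of_nonneg hr]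
    exact rpow_le_rpow hy.le h2 hr
  · rw [abs_of_nonpos hr, rpow_neg zero_le_two, ← inv_rpow zero_le_two]
    exact rpow_le_rpow_of_nonpos (by norm_num) (by linarith) hr

/-- If the derivatives of `f` of order at most `n` are at most `Y` at a point, then so are those of
`f ^ r`, up to a constant. -/
def RpowDerivBound (n : ℕ) : Prop :=
  ∀ r Y : ℝ, ∃ C : ℝ, ∀ f : ℝ → ℝ, ContDiff ℝ (⊤ : ℕ∞) f → (∀ x, 1 / 2 ≤ f x ∧ f x ≤ 2) →
    ∀ x, (∀ i ≤ n, |iteratedDeriv i f x| ≤ Y) →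
      ∀ i ≤ n, |iteratedDeriv i (fun y => f y ^ r) x| ≤ C

lemma contDiff_rpow_const {f : ℝ → ℝ} (hf : ContDiff ℝ (⊤ : ℕ∞) f)
    (hr : ∀ x, 1 / 2 ≤ f x ∧ f x ≤ 2) (r : ℝ) : ContDiff ℝ (⊤ : ℕ∞) fun y => f y ^ r :=
  hf.rpow_const_of_ne fun x => by linarith [(hr x).1]

lemma ContDiff.contDiffAt_nat {f : ℝ → ℝ} (hf : ContDiff ℝ (⊤ : ℕ∞) f) (n : ℕ) (x : ℝ) :
    ContDiffAt ℝ n f x :=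
  (hf.of_le (by exact_mod_cast le_top)).contDiffAt

lemma contDiff_deriv_top {f : ℝ → ℝ} (hf : ContDiff ℝ (⊤ : ℕ∞) f) :
    ContDiff ℝ (⊤ : ℕ∞) (deriv f) :=
  (contDiff_infty_iff_deriv.1 hf).2

lemma contDiff_iteratedDeriv_top {f : ℝ → ℝ} (hf : ContDiff ℝ (⊤ : ℕ∞) f) (n : ℕ) :
    ContDiff ℝ (⊤ : ℕ∞) (iteratedDeriv n f) := by
  induction n with
  | zero => simpa using hf
  | succ n ih => simpa only [iteratedDeriv_succ] using contDiff_deriv_top ih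

lemma deriv_rpow_const_eq {f : ℝ → ℝ} (hf : ContDiff ℝ (⊤ : ℕ∞) f)
    (hr : ∀ x, 1 / 2 ≤ f x ∧ f x ≤ 2) (r : ℝ) :
    (deriv fun y => f y ^ r) = fun y => r * (f y ^ (r - 1) * deriv f y) := by
  ext y
  have h := (hf.differentiable (by simp) y).hasDerivAt.rpow_const (p := r)
    (Or.inl (by linarith [(hr y).1]))
  rw [h.deriv]
  ring

lemma RpowDerivBound.succ_le {n : ℕ} (hn : RpowDerivBound n) (r Y : ℝ) :
    ∃ C : ℝ, 0 ≤ C ∧ ∀ f : ℝ → ℝ, ContDiff ℝ (⊤ : ℕ∞) f → (∀ x, 1 / 2 ≤ f x ∧ f x ≤ 2) →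
      ∀ x, (∀ i ≤ n, |iteratedDeriv i f x| ≤ Y) →
        |iteratedDeriv (n + 1) (fun y => f y ^ r) x| ≤
          C * (1 + |iteratedDeriv (n + 1) f x|) := by
  obtain ⟨C, hC⟩ := hn (r - 1) Y
  refine ⟨|r| * (2 ^ n * (|C| * (|Y| + 1))), by positivity, fun f hf hr x hx => ?_⟩
  set W := |iteratedDeriv (n + 1) f x|
  have hW : 0 ≤ W := abs_nonneg _
  have hYW : |Y| + W ≤ (|Y| + 1) * (1 + W) := by nlinarith [abs_nonneg Y]
  have hCf := hC f hf hr x hx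
  rw [iteratedDeriv_succ', deriv_rpow_const_eq hf hr, iteratedDeriv_const_mul_field,
    iteratedDeriv_fun_mul ((contDiff_rpow_const hf hr _).contDiffAt_nat n x)
      ((contDiff_deriv_top hf).contDiffAt_nat n x), abs_mul]
  have hterm : ∀ i ∈ Finset.range (n + 1),
      |(n.choose i : ℝ) * iteratedDeriv i (fun y => f y ^ (r - 1)) x *
        iteratedDeriv (n - i) (deriv f) x| ≤ n.choose i * (|C| * (|Y| + W)) := by
    intro i hi
    have hi' : i ≤ n := Nat.lt_succ_iff.1 (Finset.mem_range.1 hi)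
    rw [abs_mul, abs_mul, Nat.abs_cast, mul_assoc]
    refine mul_le_mul_of_nonneg_left ?_ (Nat.cast_nonneg _)
    refine mul_le_mul ((hCf i hi').trans (le_abs_self C)) ?_ (abs_nonneg _) (abs_nonneg _)
    rw [← iteratedDeriv_succ']
    rcases Nat.eq_zero_or_pos i with rfl | hpos
    · exact le_add_of_nonneg_left (abs_nonneg Y)
    · have := hx (n - i + 1) (by omega)
      linarith [le_abs_self Y]
  calc |r| * |∑ i ∈ Finset.range (n + 1), (n.choose i : ℝ) *
        iteratedDeriv i (fun y => f y ^ (r - 1)) x * iteratedDeriv (n - i) (deriv f) x|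
      ≤ |r| * ∑ i ∈ Finset.range (n + 1), n.choose i * (|C| * (|Y| + W)) := by
        gcongr
        exact (Finset.abs_sum_le_sum_abs _ _).trans (Finset.sum_le_sum hterm)
    _ = |r| * (2 ^ n * (|C| * (|Y| + W))) := by
        rw [← Finset.sum_mul]
        congr 2
        exact_mod_cast Nat.sum_range_choose n
    _ ≤ |r| * (2 ^ n * (|C| * ((|Y| + 1) * (1 + W)))) := by gcongr
    _ = _ := by ring

lemma rpowDerivBound (n : ℕ) : RpowDerivBound n := by
  induction n with
  | zero =>
    refine fun r Y => ⟨2 ^ |r|, fun f hf hr x hx i hi => ?_⟩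
    obtain rfl : i = 0 := by omega
    rw [iteratedDeriv_zero, abs_of_nonneg (rpow_nonneg (by linarith [(hr x).1]) _)]
    exact rpow_le_two_rpow_abs (hr x).1 (hr x).2 r
  | succ n ih =>
    intro r Y
    obtain ⟨C, hC⟩ := ih r Y
    obtain ⟨D, hD0, hD⟩ := ih.succ_le r Y
    refine ⟨max C (D * (1 + Y)), fun f hf hr x hx i hi => ?_⟩
    have hx' : ∀ i ≤ n, |iteratedDeriv i f x| ≤ Y := fun i hi => hx i (by omega)
    rcases Nat.lt_or_ge i (n + 1) with h | h
    · exact (hC f hf hr x hx' i (by omega)).trans (le_max_left _ _)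
    · obtain rfl : i = n + 1 := by omega
      refine (hD f hf hr x hx').trans (le_trans ?_ (le_max_right _ _))
      gcongr
      exact hx _ le_rfl

/-- Leibniz' formula for `f * g''`, with all but the two leading terms estimated. -/
lemma abs_iteratedDeriv_mul_deriv_deriv_sub_le {f g : ℝ → ℝ} (hf : ContDiff ℝ (⊤ : ℕ∞) f)
    (hg : ContDiff ℝ (⊤ : ℕ∞) g) (n : ℕ) (x : ℝ) {A B : ℝ} (hA0 : 0 ≤ A) (hB0 : 0 ≤ B)
    (hA : ∀ i ≤ n, 2 ≤ i → |iteratedDeriv i f x| ≤ A)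
    (hB : ∀ i ≤ n, 2 ≤ i → |iteratedDeriv i g x| ≤ B) :
    |iteratedDeriv n (fun y => f y * deriv (deriv g) y) x - f x * iteratedDeriv (n + 2) g x
      - n * deriv f x * iteratedDeriv (n + 1) g x| ≤ 2 ^ n * (A * B) := by
  have hg2 : ∀ m, iteratedDeriv m (deriv (deriv g)) x = iteratedDeriv (m + 2) g x := fun m => by
    rw [← iteratedDeriv_succ', ← iteratedDeriv_succ']
  rw [iteratedDeriv_fun_mul (hf.contDiffAt_nat n x)
    ((contDiff_deriv_top (contDiff_deriv_top hg)).contDiffAt_nat n x)]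
  rcases n with - | m
  · simp only [hg2]
    simp
    positivity
  · rw [Finset.sum_range_succ', Finset.sum_range_succ']
    have hterm : ∀ i ∈ Finset.range m,
        |((m + 1).choose (i + 1 + 1) : ℝ) * iteratedDeriv (i + 1 + 1) f x *
          iteratedDeriv (m + 1 - (i + 1 + 1)) (deriv (deriv g)) x| ≤
          (m + 1).choose (i + 1 + 1) * (A * B) := by
      intro i hi
      have hi' := Finset.mem_range.1 hi
      rw [abs_mul, abs_mul, Nat.abs_cast, mul_assoc, hg2]
      refine mul_le_mul_of_nonneg_left ?_ (Nat.cast_nonneg _)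
      exact mul_le_mul (hA _ (by omega) (by omega)) (hB _ (by omega) (by omega))
        (abs_nonneg _) hA0
    have hsum : (∑ i ∈ Finset.range m, ((m + 1).choose (i + 1 + 1) : ℝ)) ≤ 2 ^ (m + 1) := by
      have h : ((∑ i ∈ Finset.range (m + 1 + 1), (m + 1).choose i : ℕ) : ℝ) = 2 ^ (m + 1) := by
        exact_mod_cast Nat.sum_range_choose (m + 1)
      rw [Finset.sum_range_succ', Finset.sum_range_succ'] at h
      push_cast at h
      rw [← h]
      have : (0 : ℝ) ≤ (m + 1).choose (0 + 1) := Nat.cast_nonneg _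
      have : (0 : ℝ) ≤ (m + 1).choose 0 := Nat.cast_nonneg _
      linarith
    simp only [hg2]
    simp only [hg2] at hterm
    have hrew : ∀ S : ℝ, S + ((m + 1).choose (0 + 1) : ℝ) * iteratedDeriv (0 + 1) f x *
        iteratedDeriv (m + 1 - (0 + 1) + 2) g x + ((m + 1).choose 0 : ℝ) * iteratedDeriv 0 f x *
        iteratedDeriv (m + 1 - 0 + 2) g x - f x * iteratedDeriv (m + 1 + 2) g x -
        ((m + 1 : ℕ) : ℝ) * deriv f x * iteratedDeriv (m + 1 + 1) g x = S := by
      intro S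
      simp
    rw [hrew]
    calc _ ≤ ∑ i ∈ Finset.range m, ((m + 1).choose (i + 1 + 1) : ℝ) * (A * B) :=
          (Finset.abs_sum_le_sum_abs _ _).trans (Finset.sum_le_sum hterm)
      _ ≤ _ := by
          rw [← Finset.sum_mul]
          gcongr

/-- The right-hand side of the rescaled speed equation. -/
noncomputable def speedRHS (q : ℝ) (f : ℝ → ℝ) (y : ℝ) : ℝ :=
  f y ^ q * deriv (deriv f) y + (f y ^ (q + 1) - f y)

lemma iteratedDeriv_speedRHS {f : ℝ → ℝ} (hf : ContDiff ℝ (⊤ : ℕ∞) f)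
    (hr : ∀ x, 1 / 2 ≤ f x ∧ f x ≤ 2) (q : ℝ) (n : ℕ) (x : ℝ) :
    iteratedDeriv n (speedRHS q f) x =
      iteratedDeriv n (fun y => f y ^ q * deriv (deriv f) y) x +
        (iteratedDeriv n (fun y => f y ^ (q + 1)) x - iteratedDeriv n f x) := by
  have h1 := contDiff_rpow_const hf hr q
  have h2 := contDiff_rpow_const hf hr (q + 1)
  have h3 := contDiff_deriv_top (contDiff_deriv_top hf)
  unfold speedRHS
  rw [iteratedDeriv_fun_add ((h1.mul h3).contDiffAt_nat n x) ((h2.sub hf).contDiffAt_nat n x),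
    iteratedDeriv_fun_sub (h2.contDiffAt_nat n x) (hf.contDiffAt_nat n x)]

lemma one_add_abs_le (w : ℝ) : 1 + |w| ≤ 2 * (1 + w ^ 2) := by
  rw [← sq_abs w]
  nlinarith [sq_nonneg (1 - |w|)]

lemma one_add_abs_sq_le (w : ℝ) : (1 + |w|) ^ 2 ≤ 2 * (1 + w ^ 2) := by
  rw [← sq_abs w]
  nlinarith [sq_nonneg (1 - |w|)]

lemma speedRHS_deriv_bounds (q : ℝ) (hq : 0 ≤ q) (l : ℕ) (Y : ℝ) :
    ∃ C : ℝ, 0 ≤ C ∧ ∀ f : ℝ → ℝ, ContDiff ℝ (⊤ : ℕ∞) f → (∀ x, 1 / 2 ≤ f x ∧ f x ≤ 2) →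
      ∀ x, (∀ i ≤ l, |iteratedDeriv i f x| ≤ Y) →
        |iteratedDeriv l (speedRHS q f) x - f x ^ q * iteratedDeriv (l + 2) f x
          - l * deriv (fun y => f y ^ q) x * iteratedDeriv (l + 1) f x| ≤ C ∧
        |iteratedDeriv (l + 1) (speedRHS q f) x - f x ^ q * iteratedDeriv (l + 3) f x
          - (l + 1) * deriv (fun y => f y ^ q) x * iteratedDeriv (l + 2) f x| ≤
            C * (1 + iteratedDeriv (l + 1) f x ^ 2) ∧
        -(deriv (fun y => f y ^ q) x * iteratedDeriv l f x * iteratedDeriv (l + 1) f x) ≤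
          C * |iteratedDeriv (l + 1) f x| := by
  obtain ⟨C₁, hC₁⟩ := rpowDerivBound l q Y
  obtain ⟨C₂, hC₂⟩ := rpowDerivBound l (q + 1) Y
  obtain ⟨D₁, hD₁0, hD₁⟩ := (rpowDerivBound l).succ_le q Y
  obtain ⟨D₂, hD₂0, hD₂⟩ := (rpowDerivBound l).succ_le (q + 1) Y
  set Z : ℝ := 1 + |Y| + |C₁| + |C₂| + D₁ + D₂ with hZ
  have hZ1 : 1 ≤ Z := by
    have := abs_nonneg Y; have := abs_nonneg C₁; have := abs_nonneg C₂; linarith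
  have hYZ : Y ≤ Z := by
    have := le_abs_self Y; have := abs_nonneg C₁; have := abs_nonneg C₂; linarith
  have hC₁Z : C₁ ≤ Z := by
    have := abs_nonneg Y; have := le_abs_self C₁; have := abs_nonneg C₂; linarith
  have hC₂Z : C₂ ≤ Z := by
    have := abs_nonneg Y; have := abs_nonneg C₁; have := le_abs_self C₂; linarith
  have hD₁Z : D₁ ≤ Z := by
    have := abs_nonneg Y; have := abs_nonneg C₁; have := abs_nonneg C₂; linarith
  have hD₂Z : D₂ ≤ Z := by
    have := abs_nonneg Y; have := abs_nonneg C₁; have := abs_nonneg C₂; linarith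
  refine ⟨2 * (2 ^ (l + 1) * (Z * Z) + Z + Z), by positivity, fun f hf hr x hx => ?_⟩
  have hfq := contDiff_rpow_const hf hr q
  have e1 := hC₁ f hf hr x hx
  have e2 := hC₂ f hf hr x hx
  have e3 := hD₁ f hf hr x hx
  have e4 := hD₂ f hf hr x hx
  set W := iteratedDeriv (l + 1) f x with hW
  have hW0 : 0 ≤ |W| := abs_nonneg W
  refine ⟨?_, ?_, ?_⟩
  · have h := abs_iteratedDeriv_mul_deriv_deriv_sub_le hfq hf l x (A := Z) (B := Z)
      (by linarith) (by linarith) (fun i hi _ => (e1 i hi).trans hC₁Z)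
      (fun i hi _ => (hx i hi).trans hYZ)
    rw [iteratedDeriv_speedRHS hf hr]
    have h5 := abs_le.1 (e2 l le_rfl)
    have h6 := abs_le.1 (hx l le_rfl)
    have h7 := abs_le.1 h
    have h8 : (2 : ℝ) ^ l * (Z * Z) ≤ 2 ^ (l + 1) * (Z * Z) := by
      gcongr
      · norm_num
      · omega
    have h9 : (0 : ℝ) ≤ 2 ^ (l + 1) * (Z * Z) := by positivity
    rw [abs_le]
    constructor <;> linarith
  · have hbig : ∀ {c : ℝ}, c ≤ Z → c ≤ Z * (1 + |W|) := fun hc => by nlinarith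
    have hWZ : |W| ≤ Z * (1 + |W|) :=
      (le_add_of_nonneg_left zero_le_one).trans (le_mul_of_one_le_left (by positivity) hZ1)
    have hA : ∀ i ≤ l + 1, 2 ≤ i → |iteratedDeriv i (fun y => f y ^ q) x| ≤ Z * (1 + |W|) := by
      intro i hi _
      rcases Nat.lt_or_ge i (l + 1) with h | h
      · exact hbig ((e1 i (by omega)).trans hC₁Z)
      · obtain rfl : i = l + 1 := by omega
        exact e3.trans (by gcongr)
    have hB : ∀ i ≤ l + 1, 2 ≤ i → |iteratedDeriv i f x| ≤ 1 * (Z * (1 + |W|)) := by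
      intro i hi _
      rw [one_mul]
      rcases Nat.lt_or_ge i (l + 1) with h | h
      · exact hbig ((hx i (by omega)).trans hYZ)
      · obtain rfl : i = l + 1 := by omega
        exact hWZ
    have h := abs_iteratedDeriv_mul_deriv_deriv_sub_le hfq hf (l + 1) x
      (by positivity) (by positivity) hA hB
    rw [iteratedDeriv_speedRHS hf hr]
    have h5 := abs_le.1 (e4.trans (mul_le_mul_of_nonneg_right hD₂Z (by positivity)))
    have h6 := neg_abs_le W
    have h6' := le_abs_self W
    have h7 := abs_le.1 h
    have h10 : (1 + |W|) ^ 2 ≤ 2 * (1 + W ^ 2) := one_add_abs_sq_le W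
    have h11 : (2 : ℝ) ^ (l + 1) * (Z * (1 + |W|) * (1 * (Z * (1 + |W|)))) ≤
        2 ^ (l + 1) * (Z * Z) * (2 * (1 + W ^ 2)) := by
      have : (2 : ℝ) ^ (l + 1) * (Z * (1 + |W|) * (1 * (Z * (1 + |W|)))) =
        2 ^ (l + 1) * (Z * Z) * (1 + |W|) ^ 2 := by ring
      rw [this]
      gcongr
    have h12 : Z * (1 + |W|) ≤ Z * (2 * (1 + W ^ 2)) := by
      gcongr
      exact one_add_abs_le W
    have h13 : |W| ≤ Z * (2 * (1 + W ^ 2)) := hWZ.trans h12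
    push_cast at h7
    have e : l + 1 + 2 = l + 3 := by ring
    have e' : l + 1 + 1 = l + 2 := by ring
    rw [e, e'] at h7
    rw [abs_le]
    constructor <;> linarith
  · rcases Nat.eq_zero_or_pos l with rfl | hl
    · rw [deriv_rpow_const_eq hf hr, hW, zero_add, iteratedDeriv_one, iteratedDeriv_zero]
      have h0 : 0 ≤ f x := by linarith [(hr x).1]
      have : 0 ≤ q * (f x ^ (q - 1)) * f x * deriv f x ^ 2 := by positivity
      have h1 : 0 ≤ 2 * (2 ^ (0 + 1) * (Z * Z) + Z + Z) * |deriv f x| := by positivity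
      calc -(q * (f x ^ (q - 1) * deriv f x) * f x * deriv f x)
          = -(q * (f x ^ (q - 1)) * f x * deriv f x ^ 2) := by ring
        _ ≤ _ := (neg_nonpos.2 this).trans h1
    · have h1 := e1 1 hl
      rw [iteratedDeriv_one] at h1
      have h2 := hx l le_rfl
      refine (neg_le_abs _).trans ?_
      rw [abs_mul, abs_mul]
      refine mul_le_mul_of_nonneg_right ?_ hW0
      have h3 : |deriv (fun y => f y ^ q) x| * |iteratedDeriv l f x| ≤ Z * Z :=
        mul_le_mul (h1.trans hC₁Z) (h2.trans hYZ) (abs_nonneg _) (by linarith)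
      have h4 : (1 : ℝ) ≤ 2 ^ (l + 1) := one_le_pow₀ (by norm_num)
      nlinarith [mul_le_mul_of_nonneg_right h4 (show 0 ≤ Z * Z by positivity)]

lemma bernstein_negativity {σ M C Y B a₀ a a' V W Z Q N N' l : ℝ} (hσ : |σ| = 1) (hM : 0 ≤ M)
    (hC : 0 ≤ C) (ha : a₀ ≤ a) (ha₀ : 0 < a₀) (hMa : 2 * M * a₀ = C + 1) (hV : |V| ≤ Y)
    (h1 : |N - a * Z - l * a' * W| ≤ C)
    (h2 : |N' - a * Q - (l + 1) * a' * Z| ≤ C * (1 + W ^ 2))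
    (h3 : -(a' * V * W) ≤ C * |W|)
    (h4 : σ * Z + 2 * M * (V * W) = 0)
    (h5 : σ * Q + 2 * M * (W ^ 2 + V * Z) ≤ 0)
    (hB : B = 2 * M * C + C + 2 * M * Y * C) (hW : B + 1 ≤ |W|) :
    σ * N' + 2 * M * V * N < 0 := by
  have hY : 0 ≤ Y := (abs_nonneg V).trans hV
  have e1 : σ * (N' - a * Q - (l + 1) * a' * Z) ≤ C * (1 + W ^ 2) := by
    refine (le_abs_self _).trans ?_
    rwa [abs_mul, hσ, one_mul]
  have e2 : a * (σ * Q + 2 * M * (W ^ 2 + V * Z)) ≤ 0 :=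
    mul_nonpos_of_nonneg_of_nonpos (ha₀.le.trans ha) h5
  have e3 : 2 * M * (V * (N - a * Z - l * a' * W)) ≤ 2 * M * (Y * C) := by
    refine mul_le_mul_of_nonneg_left ?_ (by positivity)
    refine (le_abs_self _).trans ?_
    rw [abs_mul]
    exact mul_le_mul hV h1 (abs_nonneg _) hY
  have e4 : 2 * M * -(a' * V * W) ≤ 2 * M * (C * |W|) :=
    mul_le_mul_of_nonneg_left h3 (by positivity)
  have e5 : 2 * M * a₀ * W ^ 2 ≤ 2 * M * a * W ^ 2 := by gcongr
  rw [hMa] at e5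
  have e6 : (l + 1) * a' * (σ * Z + 2 * M * (V * W)) = 0 := by rw [h4, mul_zero]
  have hB0 : 0 ≤ 2 * M * Y * C := by positivity
  have hB1 : 0 ≤ 2 * M * C := by positivity
  have e7 : 2 * M * C * |W| + C + 2 * M * Y * C < W ^ 2 := by
    rw [← sq_abs W]
    have hW1 : 1 ≤ |W| := by linarith
    have e8 : (B + 1) * |W| ≤ |W| ^ 2 := by
      rw [sq]
      exact mul_le_mul_of_nonneg_right hW (abs_nonneg W)
    have e9 : C + 2 * M * Y * C ≤ (C + 2 * M * Y * C) * |W| :=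
      le_mul_of_one_le_right (by positivity) hW1
    rw [hB] at e8
    linarith
  linarith

lemma Function.Periodic.iteratedDeriv {f : ℝ → ℝ} {c : ℝ} (hf : Function.Periodic f c) (n : ℕ) :
    Function.Periodic (iteratedDeriv n f) c := by
  intro x
  have h : (fun y => f (y + c)) = f := funext hf
  have := congrFun (iteratedDeriv_comp_add_const n f c) x
  rw [h] at this
  exact this.symm

lemma Function.Periodic.exists_abs_le {f : ℝ → ℝ} {c : ℝ} (hf : Function.Periodic f c)
    (hc : 0 < c) (hcont : Continuous f) : ∃ C, ∀ x, |f x| ≤ C := by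
  obtain ⟨C, hC⟩ := isCompact_Icc.exists_bound_of_continuousOn (s := Icc 0 c) hcont.continuousOn
  refine ⟨C, fun x => ?_⟩
  obtain ⟨y, hy, h⟩ := hf.exists_mem_Ico₀ hc x
  rw [h]
  exact hC y (Ico_subset_Icc_self hy)

/-- `U` solves the equation satisfied by the rescaled speed `k ^ p * ((p+1)(ω-t)) ^ (p/(p+1))`. -/
structure RescaledFlow (p ω : ℝ) (U : ℝ → ℝ → ℝ) : Prop where
  smooth : SmoothStrip (Ioo 0 ω) U
  periodic : ∀ t, Function.Periodic (U t) (2 * π)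
  evolution : ∀ t ∈ Ioo 0 ω, ∀ θ,
    HasDerivAt (fun s => U s θ) (p / ((p + 1) * (ω - t)) * speedRHS (1 + 1 / p) (U t) θ) t

namespace RescaledFlow

variable {p ω T : ℝ} {U : ℝ → ℝ → ℝ}

lemma evolution_iteratedDeriv (h : RescaledFlow p ω U) (n : ℕ) {t : ℝ} (ht : t ∈ Ioo 0 ω) (θ : ℝ) :
    HasDerivAt (fun s => iteratedDeriv n (U s) θ)
      (p / ((p + 1) * (ω - t)) * iteratedDeriv n (speedRHS (1 + 1 / p) (U t)) θ) t := by
  have := h.smooth.time_iteratedDeriv isOpen_Ioo h.evolution n t ht θ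
  rwa [iteratedDeriv_const_mul_field] at this

lemma exists_bound_succ (h : RescaledFlow p ω U) (hp : 1 ≤ p) (hT : T ∈ Ioo 0 ω)
    (hrange : ∀ t ∈ Ico T ω, ∀ x, 1 / 2 ≤ U t x ∧ U t x ≤ 2) (l : ℕ) {Y : ℝ}
    (hY : ∀ t ∈ Ico T ω, ∀ x, ∀ i ≤ l, |iteratedDeriv i (U t) x| ≤ Y) :
    ∃ K : ℝ, ∀ t ∈ Ico T ω, ∀ x, |iteratedDeriv (l + 1) (U t) x| ≤ K := by
  set q : ℝ := 1 + 1 / p with hq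
  have hq0 : 0 ≤ q := by positivity
  obtain ⟨C, hC0, hC⟩ := speedRHS_deriv_bounds q hq0 l Y
  have hsub : Ico T ω ⊆ Ioo 0 ω := fun s hs => ⟨hT.1.trans_le hs.1, hs.2⟩
  have hTI : T ∈ Ico T ω := ⟨le_rfl, hT.2⟩
  have hY0 : 0 ≤ Y := (abs_nonneg _).trans (hY T hTI 0 0 (Nat.zero_le l))
  set a₀ : ℝ := (1 / 2) ^ q with ha₀
  have ha₀pos : 0 < a₀ := by positivity
  set M : ℝ := (C + 1) / (2 * a₀) with hM
  have hM0 : 0 ≤ M := by positivity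
  have hMa : 2 * M * a₀ = C + 1 := by rw [hM]; field_simp
  set B : ℝ := 2 * M * C + C + 2 * M * Y * C with hB
  have hB0 : 0 ≤ B := by positivity
  have hper := fun n t => (h.periodic t).iteratedDeriv n
  have hsm := fun n => h.smooth.iteratedDeriv isOpen_Ioo.uniqueDiffOn n
  obtain ⟨K₀, hK₀⟩ := (hper (l + 1) T).exists_abs_le two_pi_pos
    ((hsm (l + 1)).contDiff (hsub hTI)).continuous
  set K : ℝ := B + 1 + M * Y ^ 2 + |K₀| with hK
  have hVsq : ∀ t ∈ Ico T ω, ∀ x, iteratedDeriv l (U t) x ^ 2 ≤ Y ^ 2 := fun t ht x => by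
    rw [← sq_abs]
    gcongr
    exact hY t ht x l le_rfl
  have key : ∀ σ : ℝ, |σ| = 1 → ∀ t ∈ Ico T ω, ∀ x,
      σ * iteratedDeriv (l + 1) (U t) x + M * iteratedDeriv l (U t) x ^ 2 ≤ K := by
    intro σ hσ
    refine periodic_maximum_principle (P := 2 * π)
      (φ := fun t x => σ * iteratedDeriv (l + 1) (U t) x + M * iteratedDeriv l (U t) x ^ 2)
      two_pi_pos ?_ ?_ ?_ ?_
    · intro t x
      simp only [hper (l + 1) t x, hper l t x]
    · have c1 := ((hsm (l + 1)).mono hsub).continuousOn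
      have c2 := ((hsm l).mono hsub).continuousOn
      exact (continuousOn_const.mul c1).add (continuousOn_const.mul (c2.pow 2))
    · intro x
      have e1 : σ * iteratedDeriv (l + 1) (U T) x ≤ |K₀| := by
        refine (le_abs_self _).trans ?_
        rw [abs_mul, hσ, one_mul]
        exact (hK₀ x).trans (le_abs_self _)
      have e2 := mul_le_mul_of_nonneg_left (hVsq T hTI x) hM0
      linarith
    · intro t ht x hgt hmax
      have htI : t ∈ Ico T ω := ⟨ht.1.le, ht.2⟩
      have ht0 : t ∈ Ioo 0 ω := hsub htI
      have hUt := h.smooth.contDiff ht0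
      have hd : ∀ n y, HasDerivAt (iteratedDeriv n (U t)) (iteratedDeriv (n + 1) (U t) y) y := by
        intro n y
        rw [iteratedDeriv_succ]
        exact (hsm n).hasDerivAt ht0 y
      have hφ1 : ∀ y, HasDerivAt
          (fun x => σ * iteratedDeriv (l + 1) (U t) x + M * iteratedDeriv l (U t) x ^ 2)
          (σ * iteratedDeriv (l + 2) (U t) y +
            2 * M * (iteratedDeriv l (U t) y * iteratedDeriv (l + 1) (U t) y)) y := by
        intro y
        have := ((hd (l + 1) y).const_mul σ).add (((hd l y).pow 2).const_mul M)
        refine this.congr_deriv ?_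
        norm_num
        ring
      have hφ2 : HasDerivAt (fun y => σ * iteratedDeriv (l + 2) (U t) y +
            2 * M * (iteratedDeriv l (U t) y * iteratedDeriv (l + 1) (U t) y))
          (σ * iteratedDeriv (l + 3) (U t) x + 2 * M * (iteratedDeriv (l + 1) (U t) x ^ 2 +
            iteratedDeriv l (U t) x * iteratedDeriv (l + 2) (U t) x)) x := by
        have := ((hd (l + 2) x).const_mul σ).add (((hd l x).mul (hd (l + 1) x)).const_mul (2 * M))
        refine this.congr_deriv ?_
        ring
      have h4 := hmax.deriv_eq_zero
      rw [(hφ1 x).deriv] at h4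
      have h5 := hmax.deriv_deriv_nonpos (hφ1 x).continuousAt
      rw [show deriv (fun x => σ * iteratedDeriv (l + 1) (U t) x +
        M * iteratedDeriv l (U t) x ^ 2) = _ from funext fun y => (hφ1 y).deriv, hφ2.deriv] at h5
      obtain ⟨b1, b2, b3⟩ := hC (U t) hUt (hrange t htI) x (hY t htI x)
      have hWbig : B + 1 ≤ |iteratedDeriv (l + 1) (U t) x| := by
        have e2 := mul_le_mul_of_nonneg_left (hVsq t htI x) hM0
        have e3 : σ * iteratedDeriv (l + 1) (U t) x ≤ |iteratedDeriv (l + 1) (U t) x| := by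
          refine (le_abs_self _).trans ?_
          rw [abs_mul, hσ, one_mul]
        have := abs_nonneg K₀
        linarith
      have hneg := bernstein_negativity hσ hM0 hC0
        (rpow_le_rpow (by norm_num) (hrange t htI x).1 hq0) ha₀pos hMa (hY t htI x l le_rfl)
        b1 b2 b3 h4 h5 hB hWbig
      have hpos : 0 < p / ((p + 1) * (ω - t)) := by
        have : 0 < ω - t := sub_pos.2 ht.2
        positivity
      refine ⟨_, mul_neg_of_pos_of_neg hpos hneg, ?_⟩
      have := ((h.evolution_iteratedDeriv (l + 1) ht0 x).const_mul σ).add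
        (((h.evolution_iteratedDeriv l ht0 x).pow 2).const_mul M)
      refine this.congr_deriv ?_
      rw [← hq]
      norm_num
      ring
  refine ⟨K, fun t ht x => ?_⟩
  have hsq : 0 ≤ M * iteratedDeriv l (U t) x ^ 2 := by positivity
  rw [abs_le']
  have h1 := key 1 (by norm_num) t ht x
  have h2 := key (-1) (by norm_num) t ht x
  constructor <;> linarith

/-- All angular derivatives of the rescaled speed are bounded. -/
lemma exists_bound (h : RescaledFlow p ω U) (hp : 1 ≤ p) (hT : T ∈ Ioo 0 ω)
    (hrange : ∀ t ∈ Ico T ω, ∀ x, 1 / 2 ≤ U t x ∧ U t x ≤ 2) (n : ℕ) :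
    ∃ Y : ℝ, ∀ t ∈ Ico T ω, ∀ x, ∀ i ≤ n, |iteratedDeriv i (U t) x| ≤ Y := by
  induction n with
  | zero =>
    refine ⟨2, fun t ht x i hi => ?_⟩
    obtain rfl : i = 0 := by omega
    have := hrange t ht x
    rw [iteratedDeriv_zero, abs_le]
    constructor <;> linarith
  | succ n ih =>
    obtain ⟨Y, hY⟩ := ih
    obtain ⟨K, hK⟩ := h.exists_bound_succ hp hT hrange n hY
    refine ⟨max Y K, fun t ht x i hi => ?_⟩
    rcases Nat.lt_or_ge i (n + 1) with hi' | hi'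
    · exact (hY t ht x i (by omega)).trans (le_max_left _ _)
    · obtain rfl : i = n + 1 := by omega
      exact (hK t ht x).trans (le_max_right _ _)

end RescaledFlow

lemma sq_integral_mul_le {f g : ℝ → ℝ} (hf : Continuous f) (hg : Continuous g) {a b : ℝ}
    (hab : a ≤ b) :
    (∫ x in a..b, f x * g x) ^ 2 ≤ (∫ x in a..b, f x ^ 2) * ∫ x in a..b, g x ^ 2 := by
  have h : ∀ y : ℝ, 0 ≤ (∫ x in a..b, f x ^ 2) * (y * y) + (2 * ∫ x in a..b, f x * g x) * y +
      ∫ x in a..b, g x ^ 2 := by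
    intro y
    have h0 : 0 ≤ ∫ x in a..b, (y * f x + g x) ^ 2 :=
      intervalIntegral.integral_nonneg hab fun x _ => sq_nonneg _
    have h1 : ∀ x, (y * f x + g x) ^ 2 = y * y * f x ^ 2 + 2 * y * (f x * g x) + g x ^ 2 :=
      fun x => by ring
    simp only [h1] at h0
    rw [intervalIntegral.integral_add, intervalIntegral.integral_add,
      intervalIntegral.integral_const_mul, intervalIntegral.integral_const_mul] at h0
    · linarith
    all_goals exact Continuous.intervalIntegrable (by fun_prop) _ _
  have := discrim_le_zero h
  rw [discrim] at this
  linarith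

lemma integral_mul_deriv_periodic {u v : ℝ → ℝ} (hu : ContDiff ℝ (⊤ : ℕ∞) u)
    (hv : ContDiff ℝ (⊤ : ℕ∞) v) {c : ℝ} (hup : Function.Periodic u c)
    (hvp : Function.Periodic v c) :
    ∫ x in 0..c, u x * deriv v x = -∫ x in 0..c, deriv u x * v x := by
  rw [intervalIntegral.integral_mul_deriv_eq_deriv_mul
    (fun x _ => (hu.differentiable (by simp) x).hasDerivAt)
    (fun x _ => (hv.differentiable (by simp) x).hasDerivAt)
    ((contDiff_deriv_top hu).continuous.intervalIntegrable _ _)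
    ((contDiff_deriv_top hv).continuous.intervalIntegrable _ _), hup.eq, hvp.eq]
  ring

/-- The oscillation of a periodic function is controlled by the energy of its derivative. -/
lemma sq_sub_le_integral_deriv_sq {f : ℝ → ℝ} (hf : ContDiff ℝ (⊤ : ℕ∞) f) {c : ℝ} (hc : 0 < c)
    (hper : Function.Periodic f c) (x y : ℝ) :
    (f x - f y) ^ 2 ≤ c * ∫ z in 0..c, deriv f z ^ 2 := by
  have hd := (contDiff_deriv_top hf).continuous
  have key : ∀ x ∈ Ico 0 c, ∀ y ∈ Ico 0 c, y ≤ x →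
      (f x - f y) ^ 2 ≤ c * ∫ z in 0..c, deriv f z ^ 2 := by
    intro x hx y hy hyx
    have h1 : ∫ z in y..x, 1 * deriv f z = f x - f y := by
      simp only [one_mul]
      exact intervalIntegral.integral_deriv_eq_sub
        (fun z _ => hf.differentiable (by simp) z) (hd.intervalIntegrable _ _)
    rw [← h1]
    refine (sq_integral_mul_le continuous_const hd hyx).trans ?_
    have h2 : ∫ z in y..x, deriv f z ^ 2 ≤ ∫ z in 0..c, deriv f z ^ 2 :=
      intervalIntegral.integral_mono_interval hy.1 hyx hx.2.le
        (Eventually.of_forall fun z => sq_nonneg _)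
        ((hd.pow 2).intervalIntegrable _ _)
    have h3 : ∫ _ in y..x, (1 : ℝ) ^ 2 = x - y := by simp
    rw [h3]
    refine mul_le_mul (by linarith [hx.2, hy.1]) h2 ?_ hc.le
    exact intervalIntegral.integral_nonneg hyx fun z _ => sq_nonneg _
  obtain ⟨x', hx', ex⟩ := hper.exists_mem_Ico₀ hc x
  obtain ⟨y', hy', ey⟩ := hper.exists_mem_Ico₀ hc y
  rw [ex, ey]
  rcases le_total y' x' with h | h
  · exact key x' hx' y' hy' h
  · rw [← neg_sub, neg_sq]
    exact key y' hy' x' hx' h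

lemma deriv_sq_le_integral_deriv_deriv_sq {f : ℝ → ℝ} (hf : ContDiff ℝ (⊤ : ℕ∞) f) {c : ℝ}
    (hc : 0 < c) (hper : Function.Periodic f c) (x : ℝ) :
    deriv f x ^ 2 ≤ c * ∫ z in 0..c, deriv (deriv f) z ^ 2 := by
  obtain ⟨z, -, hz⟩ := exists_deriv_eq_zero hc hf.continuous.continuousOn hper.eq.symm
  have h := sq_sub_le_integral_deriv_sq (contDiff_deriv_top hf) hc
    (by simpa using hper.iteratedDeriv 1) x z
  rwa [hz, sub_zero] at h

/-- The squared `L²` norm over a period of the `n`-th derivative. -/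
noncomputable def derivEnergy (n : ℕ) (f : ℝ → ℝ) : ℝ :=
  ∫ x in 0..2 * π, iteratedDeriv n f x ^ 2

lemma derivEnergy_nonneg (n : ℕ) (f : ℝ → ℝ) : 0 ≤ derivEnergy n f :=
  intervalIntegral.integral_nonneg two_pi_pos.le fun _ _ => sq_nonneg _

lemma derivEnergy_le_of_abs_le {n : ℕ} {f : ℝ → ℝ} (hf : ContDiff ℝ (⊤ : ℕ∞) f) {Y : ℝ}
    (h : ∀ x, |iteratedDeriv n f x| ≤ Y) : derivEnergy n f ≤ 2 * π * Y ^ 2 := by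
  have h1 : derivEnergy n f ≤ ∫ _ in 0..2 * π, Y ^ 2 := by
    refine intervalIntegral.integral_mono_on two_pi_pos.le
      (((contDiff_iteratedDeriv_top hf n).continuous.pow 2).intervalIntegrable _ _) (by simp) ?_
    intro x _
    rw [← sq_abs]
    gcongr
    exact h x
  simpa using h1

lemma derivEnergy_sq_le {f : ℝ → ℝ} (hf : ContDiff ℝ (⊤ : ℕ∞) f)
    (hper : Function.Periodic f (2 * π)) (n : ℕ) :
    derivEnergy (n + 1) f ^ 2 ≤ derivEnergy n f * derivEnergy (n + 2) f := by
  have hn := contDiff_iteratedDeriv_top hf n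
  have hn1 := contDiff_iteratedDeriv_top hf (n + 1)
  have hn2 := contDiff_iteratedDeriv_top hf (n + 2)
  have h := integral_mul_deriv_periodic hn1 hn (hper.iteratedDeriv _) (hper.iteratedDeriv _)
  simp only [← iteratedDeriv_succ] at h
  have h1 : derivEnergy (n + 1) f =
      -∫ x in 0..2 * π, iteratedDeriv (n + 1 + 1) f x * iteratedDeriv n f x := by
    rw [← h]
    simp only [derivEnergy, sq]
  rw [h1, neg_sq, mul_comm (derivEnergy n f)]
  exact sq_integral_mul_le hn2.continuous hn.continuous two_pi_pos.le

lemma pow_succ_le_of_log_convex {a : ℕ → ℝ} (h0 : ∀ n, 0 ≤ a n)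
    (h : ∀ n, a (n + 1) ^ 2 ≤ a n * a (n + 2)) (n : ℕ) :
    a n ^ (n + 1) ≤ a 0 * a (n + 1) ^ n := by
  induction n with
  | zero => simp
  | succ n ih =>
    rcases (h0 (n + 1)).eq_or_lt with hz | hpos
    · rw [← hz, zero_pow (by omega)]
      exact mul_nonneg (h0 0) (pow_nonneg (h0 _) _)
    · refine le_of_mul_le_mul_right ?_ (pow_pos hpos n)
      calc a (n + 1) ^ (n + 1 + 1) * a (n + 1) ^ n = (a (n + 1) ^ 2) ^ (n + 1) := by ring
        _ ≤ (a n * a (n + 2)) ^ (n + 1) := by gcongr; exact h n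
        _ = a n ^ (n + 1) * a (n + 2) ^ (n + 1) := by ring
        _ ≤ (a 0 * a (n + 1) ^ n) * a (n + 2) ^ (n + 1) := by
          gcongr
          exact pow_nonneg (h0 _) _
        _ = _ := by ring

/-- Interpolation between the zeroth and the `(l + m)`-th term of a log-convex sequence. -/
lemma pow_add_le_of_log_convex {a : ℕ → ℝ} (h0 : ∀ n, 0 ≤ a n)
    (h : ∀ n, a (n + 1) ^ 2 ≤ a n * a (n + 2)) (l m : ℕ) :
    a l ^ (l + m) ≤ a 0 ^ m * a (l + m) ^ l := by
  induction m with
  | zero => simp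
  | succ m ih =>
    rcases Nat.eq_zero_or_pos (l + m) with hz | hpos
    · obtain rfl : l = 0 := by omega
      simp
    · have h1 := pow_succ_le_of_log_convex h0 h (l + m)
      have hN : l + m ≠ 0 := hpos.ne'
      refine (pow_le_pow_iff_left₀ (pow_nonneg (h0 _) _)
        (mul_nonneg (pow_nonneg (h0 _) _) (pow_nonneg (h0 _) _)) hN).1 ?_
      calc (a l ^ (l + (m + 1))) ^ (l + m) = (a l ^ (l + m)) ^ (l + m + 1) := by ring
        _ ≤ (a 0 ^ m * a (l + m) ^ l) ^ (l + m + 1) := by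
          gcongr
          exact pow_nonneg (h0 _) _
        _ = a 0 ^ (m * (l + m + 1)) * (a (l + m) ^ (l + m + 1)) ^ l := by ring
        _ ≤ a 0 ^ (m * (l + m + 1)) * (a 0 * a (l + m + 1) ^ (l + m)) ^ l := by
          have := h0 0
          have := h0 (l + m)
          gcongr
        _ = _ := by ring_nf

open Complex in
lemma norm_fourierCoeffOn_sq {g : ℝ → ℝ} (hg : Continuous g) {n : ℤ} (hn : n = 1 ∨ n = -1) :
    ‖fourierCoeffOn two_pi_pos (fun x => (g x : ℂ)) n‖ ^ 2 = (2 * π)⁻¹ ^ 2 *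
      ((∫ x in 0..2 * π, Real.cos x * g x) ^ 2 + (∫ x in 0..2 * π, Real.sin x * g x) ^ 2) := by
  rw [fourierCoeffOn_eq_integral]
  have hpt : ∀ x : ℝ, (fourier (-n)) (x : AddCircle (2 * π - 0)) • (g x : ℂ) =
      ((Real.cos x * g x : ℝ) : ℂ) + (-(n : ℂ) * I) * ((Real.sin x * g x : ℝ) : ℂ) := by
    intro x
    rw [fourier_coe_apply, smul_eq_mul]
    have : 2 * (π : ℂ) * I * ((-n : ℤ) : ℂ) * x / ((2 * π - 0 : ℝ) : ℂ) = (-(n : ℝ) * x : ℝ) * I := by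
      have : (π : ℂ) ≠ 0 := by exact_mod_cast pi_ne_zero
      push_cast
      field_simp
      ring
    rw [this, Complex.exp_mul_I, ← ofReal_cos, ← ofReal_sin]
    rcases hn with rfl | rfl <;> simp <;> ring
  simp only [hpt]
  rw [intervalIntegral.integral_add, intervalIntegral.integral_const_mul,
    intervalIntegral.integral_ofReal, intervalIntegral.integral_ofReal]
  · rw [norm_smul, mul_pow, ← normSq_eq_norm_sq (_ + _), normSq_apply, Real.norm_eq_abs, sq_abs]
    rcases hn with rfl | rfl <;> simp <;> ring
  all_goals exact Continuous.intervalIntegrable (by fun_prop) _ _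

/-- Wirtinger's inequality with the constant of the second eigenvalue, up to the first modes. -/
lemma four_mul_integral_sq_le {g : ℝ → ℝ} (hg : ContDiff ℝ (⊤ : ℕ∞) g)
    (hper : Function.Periodic g (2 * π)) (hmean : ∫ x in 0..2 * π, g x = 0) :
    4 * ∫ x in 0..2 * π, g x ^ 2 ≤ (∫ x in 0..2 * π, deriv g x ^ 2) +
      3 * ((∫ x in 0..2 * π, cos x * g x) ^ 2 + (∫ x in 0..2 * π, sin x * g x) ^ 2) := by
  have hd := (contDiff_deriv_top hg).continuous
  have hsum : ∀ {u : ℝ → ℝ}, Continuous u →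
      HasSum (fun i => ‖fourierCoeffOn two_pi_pos (fun x => (u x : ℂ)) i‖ ^ 2)
        ((2 * π)⁻¹ * ∫ x in 0..2 * π, u x ^ 2) := by
    intro u hu
    have hm : MeasureTheory.MemLp (fun x => (u x : ℂ)) 2
        (MeasureTheory.volume.restrict (Ioc 0 (2 * π))) := by
      obtain ⟨C, hC⟩ := isCompact_Icc.exists_bound_of_continuousOn (s := Icc 0 (2 * π))
        hu.continuousOn
      refine MeasureTheory.MemLp.of_bound
        (Complex.continuous_ofReal.comp hu).aestronglyMeasurable C ?_
      filter_upwards [MeasureTheory.ae_restrict_mem measurableSet_Ioc] with x hx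
      simpa using hC x (Ioc_subset_Icc_self hx)
    have := hasSum_sq_fourierCoeffOn two_pi_pos hm
    simpa using this
  set c := fun i => ‖fourierCoeffOn two_pi_pos (fun x => (g x : ℂ)) i‖ ^ 2 with hc
  set S := (∫ x in 0..2 * π, cos x * g x) ^ 2 + (∫ x in 0..2 * π, sin x * g x) ^ 2 with hS
  have h1 : c 1 = (2 * π)⁻¹ ^ 2 * S := norm_fourierCoeffOn_sq hg.continuous (Or.inl rfl)
  have h2 : c (-1) = (2 * π)⁻¹ ^ 2 * S := norm_fourierCoeffOn_sq hg.continuous (Or.inr rfl)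
  have h0 : c 0 = 0 := by
    simp only [hc]
    rw [fourierCoeffOn_eq_integral]
    simp only [neg_zero, fourier_zero, one_smul]
    rw [intervalIntegral.integral_ofReal, hmean]
    simp
  have hcd : ∀ n : ℤ, n ≠ 0 → ‖fourierCoeffOn two_pi_pos (fun x => ((deriv g x : ℝ) : ℂ)) n‖ ^ 2 =
      (n : ℝ) ^ 2 * c n := by
    intro n hn
    have h := fourierCoeffOn_of_hasDerivAt two_pi_pos (f := fun x => (g x : ℂ))
      (f' := fun x => ((deriv g x : ℝ) : ℂ)) hn
      (fun x _ => ((hg.differentiable (by simp) x).hasDerivAt).ofReal_comp)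
      ((Complex.continuous_ofReal.comp hd).intervalIntegrable _ _)
    have hgp : g (2 * π) = g 0 := hper.eq
    rw [hgp, sub_self, mul_zero, zero_sub] at h
    simp only [hc]
    rw [h]
    have : (π : ℝ) ≠ 0 := pi_ne_zero
    have : (n : ℝ) ≠ 0 := by exact_mod_cast hn
    simp only [norm_mul, norm_div, norm_neg, norm_one, Complex.norm_I, Complex.norm_intCast,
      Complex.ofReal_zero, sub_zero, Complex.norm_real, Complex.norm_ofNat, Real.norm_eq_abs,
      abs_of_pos pi_pos, Complex.ofReal_mul, Complex.ofReal_ofNat, mul_pow, div_pow, sq_abs]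
    field_simp
  have hle : ∀ n : ℤ, 4 * c n ≤ ‖fourierCoeffOn two_pi_pos (fun x => ((deriv g x : ℝ) : ℂ)) n‖ ^ 2 +
      ((if n = 1 then 3 * ((2 * π)⁻¹ ^ 2 * S) else 0) +
        (if n = -1 then 3 * ((2 * π)⁻¹ ^ 2 * S) else 0)) := by
    intro n
    have hc0 : 0 ≤ c n := by positivity
    have hS0 : 0 ≤ 3 * ((2 * π)⁻¹ ^ 2 * S) := by positivity
    rcases eq_or_ne n 0 with rfl | hn0
    · rw [h0]
      simp
    · rw [hcd n hn0]
      by_cases hn1 : n = 1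
      · subst hn1
        rw [h1]
        norm_num
        linarith
      · by_cases hn2 : n = -1
        · subst hn2
          rw [h2]
          norm_num
          linarith
        · rw [if_neg hn1, if_neg hn2, add_zero, add_zero]
          have h4 : (4 : ℤ) ≤ n ^ 2 := by
            rcases le_or_gt n 0 with h | h
            · have : n ≤ -2 := by omega
              nlinarith
            · have : 2 ≤ n := by omega
              nlinarith
          have h5 : (4 : ℝ) ≤ (n : ℝ) ^ 2 := by exact_mod_cast h4
          exact mul_le_mul_of_nonneg_right h5 hc0
  have := hasSum_le hle ((hsum hg.continuous).mul_left 4)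
    ((hsum hd).add ((hasSum_ite_eq (1 : ℤ) _).add (hasSum_ite_eq (-1 : ℤ) _)))
  have hpi : 0 < 2 * π := two_pi_pos
  have h6 := mul_le_mul_of_nonneg_left this hpi.le
  have hS0 : 0 ≤ S := by positivity
  have h7 : 2 * π * (4 * ((2 * π)⁻¹ * ∫ x in 0..2 * π, g x ^ 2)) =
      4 * ∫ x in 0..2 * π, g x ^ 2 := by field_simp
  have h8 : 2 * π * ((2 * π)⁻¹ * (∫ x in 0..2 * π, deriv g x ^ 2) +
      (3 * ((2 * π)⁻¹ ^ 2 * S) + 3 * ((2 * π)⁻¹ ^ 2 * S))) =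
      (∫ x in 0..2 * π, deriv g x ^ 2) + 3 * S * π⁻¹ := by field_simp; ring
  rw [h7, h8] at h6
  have h9 : 3 * S * π⁻¹ ≤ 3 * S :=
    mul_le_of_le_one_right (by positivity) (inv_le_one_of_one_le₀ (by linarith [pi_gt_three]))
  linarith

lemma exists_abs_sub_le_mul_abs_sub {g g' : ℝ → ℝ} {a η : ℝ}
    (hg : ∀ᶠ x in nhds a, HasDerivAt g (g' x) x) (hg' : ContinuousAt g' a) (h0 : g' a = 0)
    (hη : 0 < η) :
    ∃ δ > 0, ∀ x y, |x - a| ≤ δ → |y - a| ≤ δ → |g x - g y| ≤ η * |x - y| := by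
  have h1 : ∀ᶠ x in nhds a, HasDerivAt g (g' x) x ∧ |g' x| ≤ η := by
    refine hg.and ?_
    exact (hg'.abs.eventually_lt (continuousAt_const (y := η)) (by simpa [h0] using hη)).mono
      fun x hx => hx.le
  obtain ⟨δ, hδ, hball⟩ := Metric.nhds_basis_closedBall.mem_iff.1 h1
  refine ⟨δ, hδ, fun x y hx hy => ?_⟩
  simpa [Real.norm_eq_abs] using (convex_closedBall a δ).norm_image_sub_le_of_norm_hasDerivWithin_le
    (fun z hz => (hball hz).1.hasDerivWithinAt) (fun z hz => (hball hz).2)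
    (by simpa [Real.dist_eq] using hy) (by simpa [Real.dist_eq] using hx)

/-- A function near `1` whose power `-1/p` is orthogonal to `w` is almost orthogonal to `w`. -/
lemma sq_integral_mul_le_of_orthogonal {p δ η : ℝ} (hp : 0 < p)
    (hδ : ∀ x y, |x - 1| ≤ δ → |y - 1| ≤ δ →
      |(x ^ (-(1 / p)) + x / p) - (y ^ (-(1 / p)) + y / p)| ≤ η * |x - y|)
    {w f : ℝ → ℝ} (hw : Continuous w) (hw1 : ∀ x, |w x| ≤ 1) (hw0 : ∫ x in 0..2 * π, w x = 0)
    (hf : ContDiff ℝ (⊤ : ℕ∞) f) (hfper : Function.Periodic f (2 * π))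
    (hf0 : ∀ x, 0 < f x) (hf1 : ∀ x, |f x - 1| ≤ δ)
    (horth : ∫ x in 0..2 * π, w x * f x ^ (-(1 / p)) = 0) :
    (∫ x in 0..2 * π, w x * f x) ^ 2 ≤ 8 * π ^ 3 * p ^ 2 * η ^ 2 * derivEnergy 1 f := by
  set g : ℝ → ℝ := fun x => x ^ (-(1 / p)) + x / p with hg
  have hfr : Continuous fun x => f x ^ (-(1 / p)) :=
    hf.continuous.rpow_const fun x => Or.inl (hf0 x).ne'
  have hfc := hf.continuous
  have hgf : Continuous fun x => g (f x) - g (f 0) := by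
    simp only [hg]
    fun_prop
  have h1 : ∫ x in 0..2 * π, w x * f x = p * ∫ x in 0..2 * π, w x * (g (f x) - g (f 0)) := by
    have : ∀ x, w x * (g (f x) - g (f 0)) =
        w x * f x ^ (-(1 / p)) + p⁻¹ * (w x * f x) - g (f 0) * w x := fun x => by
      simp only [hg]
      field_simp
    simp only [this]
    rw [intervalIntegral.integral_sub, intervalIntegral.integral_add,
      intervalIntegral.integral_const_mul, intervalIntegral.integral_const_mul, horth, hw0]
    · field_simp
      ring
    all_goals exact Continuous.intervalIntegrable (by fun_prop) _ _
  have h2 : ∫ x in 0..2 * π, w x ^ 2 ≤ 2 * π := by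
    have : ∫ x in 0..2 * π, w x ^ 2 ≤ ∫ _ in 0..2 * π, (1 : ℝ) :=
      intervalIntegral.integral_mono_on two_pi_pos.le ((hw.pow 2).intervalIntegrable _ _) (by simp)
        fun x _ => (sq_le_one_iff_abs_le_one _).2 (hw1 x)
    simpa using this
  have h3 : ∫ x in 0..2 * π, (g (f x) - g (f 0)) ^ 2 ≤
      2 * π * (η ^ 2 * (2 * π * derivEnergy 1 f)) := by
    have : ∫ x in 0..2 * π, (g (f x) - g (f 0)) ^ 2 ≤
        ∫ _ in 0..2 * π, η ^ 2 * (2 * π * derivEnergy 1 f) := by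
      refine intervalIntegral.integral_mono_on two_pi_pos.le
        ((hgf.pow 2).intervalIntegrable _ _) (by simp) fun x _ => ?_
      have h4 := sq_sub_le_integral_deriv_sq hf two_pi_pos hfper x 0
      calc (g (f x) - g (f 0)) ^ 2 = |g (f x) - g (f 0)| ^ 2 := (sq_abs _).symm
        _ ≤ (η * |f x - f 0|) ^ 2 := by
          gcongr
          exact hδ _ _ (hf1 x) (hf1 0)
        _ = η ^ 2 * (f x - f 0) ^ 2 := by rw [mul_pow, sq_abs]
        _ ≤ _ := by
          gcongr
          simpa [derivEnergy] using h4
    rwa [intervalIntegral.integral_const, sub_zero, smul_eq_mul] at this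
  have h4 := sq_integral_mul_le hw hgf two_pi_pos.le
  have h5 : 0 ≤ ∫ x in 0..2 * π, (g (f x) - g (f 0)) ^ 2 :=
    intervalIntegral.integral_nonneg two_pi_pos.le fun x _ => sq_nonneg _
  rw [h1, mul_pow]
  calc p ^ 2 * (∫ x in 0..2 * π, w x * (g (f x) - g (f 0))) ^ 2
      ≤ p ^ 2 * ((2 * π) * (2 * π * (η ^ 2 * (2 * π * derivEnergy 1 f)))) := by
        gcongr
        refine h4.trans ?_
        gcongr
    _ = _ := by ring

/-- Near `1`, the closing condition upgrades Wirtinger's inequality to the second eigenvalue. -/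
lemma exists_wirtinger_of_closed {p ε : ℝ} (hp : 0 < p) (hε : 0 < ε) :
    ∃ δ > 0, ∀ f : ℝ → ℝ, ContDiff ℝ (⊤ : ℕ∞) f → Function.Periodic f (2 * π) →
      (∀ x, 0 < f x) → (∀ x, |f x - 1| ≤ δ) →
      ∫ x in 0..2 * π, cos x * f x ^ (-(1 / p)) = 0 →
      ∫ x in 0..2 * π, sin x * f x ^ (-(1 / p)) = 0 →
      (4 - ε) * derivEnergy 1 f ≤ derivEnergy 2 f := by
  have hpi := pi_pos
  set η := √(ε / (48 * π ^ 3 * p ^ 2)) with hη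
  have hη0 : 0 < η := sqrt_pos.2 (by positivity)
  have hη2 : η ^ 2 = ε / (48 * π ^ 3 * p ^ 2) := sq_sqrt (by positivity)
  obtain ⟨δ, hδ, hlip⟩ := exists_abs_sub_le_mul_abs_sub (a := 1) (η := η)
    (g := fun x : ℝ => x ^ (-(1 / p)) + x / p)
    (g' := fun x : ℝ => -(1 / p) * x ^ (-(1 / p) - 1) + 1 / p)
    (by
      filter_upwards [lt_mem_nhds one_pos] with x hx
      exact (Real.hasDerivAt_rpow_const (Or.inl hx.ne')).add ((hasDerivAt_id x).div_const p))
    (((Real.continuousAt_rpow_const _ _ (Or.inl one_ne_zero)).const_mul _).add_const _)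
    (by simp) hη0
  refine ⟨δ, hδ, fun f hf hper hf0 hf1 hcos hsin => ?_⟩
  have hfd := contDiff_deriv_top hf
  have hfdp : Function.Periodic (deriv f) (2 * π) := by simpa using hper.iteratedDeriv 1
  have c := sq_integral_mul_le_of_orthogonal hp hlip continuous_cos abs_cos_le_one (by simp)
    hf hper hf0 hf1 hcos
  have s := sq_integral_mul_le_of_orthogonal hp hlip continuous_sin abs_sin_le_one (by simp)
    hf hper hf0 hf1 hsin
  have hmean : ∫ x in 0..2 * π, deriv f x = 0 := by
    rw [intervalIntegral.integral_deriv_eq_sub (fun z _ => hf.differentiable (by simp) z)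
      (hfd.continuous.intervalIntegrable _ _), hper.eq, sub_self]
  have hw := four_mul_integral_sq_le hfd hfdp hmean
  have e1 : ∫ x in 0..2 * π, cos x * deriv f x = ∫ x in 0..2 * π, sin x * f x := by
    rw [integral_mul_deriv_periodic contDiff_cos hf cos_periodic hper]
    simp
  have e2 : ∫ x in 0..2 * π, sin x * deriv f x = -∫ x in 0..2 * π, cos x * f x := by
    rw [integral_mul_deriv_periodic contDiff_sin hf sin_periodic hper]
    simp
  rw [e1, e2, neg_sq] at hw
  have e3 : derivEnergy 1 f = ∫ x in 0..2 * π, deriv f x ^ 2 := by simp [derivEnergy]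
  have e4 : derivEnergy 2 f = ∫ x in 0..2 * π, deriv (deriv f) x ^ 2 := by
    simp [derivEnergy, iteratedDeriv_succ]
  rw [← e3, ← e4] at hw
  have e5 : 3 * (2 * (8 * π ^ 3 * p ^ 2 * η ^ 2 * derivEnergy 1 f)) = ε * derivEnergy 1 f := by
    rw [hη2]
    field_simp
    ring
  linarith

/-- The derivative of the energy along the rescaled flow, up to a time-dependent factor. -/
lemma exists_energy_dissipation {p β : ℝ} (hp : 1 ≤ p) (hβ0 : 0 < β) (hβ : β < 1) :
    ∃ δ > 0, δ ≤ 1 / 2 ∧ ∀ f : ℝ → ℝ, ContDiff ℝ (⊤ : ℕ∞) f → Function.Periodic f (2 * π) →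
      (∀ x, |f x - 1| ≤ δ) →
      ∫ x in 0..2 * π, cos x * f x ^ (-(1 / p)) = 0 →
      ∫ x in 0..2 * π, sin x * f x ^ (-(1 / p)) = 0 →
      ∫ x in 0..2 * π, deriv f x * deriv (speedRHS (1 + 1 / p) f) x ≤
        -(2 * β) * derivEnergy 1 f := by
  set q := 1 + 1 / p with hq
  have hq0 : 0 ≤ q := by positivity
  have hq2 : q ≤ 2 := by
    have : 1 / p ≤ 1 := by rw [div_le_one (by linarith)]; exact hp
    linarith
  set ε := (1 - β) / 8 with hε
  have hε0 : 0 < ε := by linarith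
  obtain ⟨δ₁, hδ₁, h1⟩ := exists_wirtinger_of_closed (p := p) (by linarith) hε0
  have hcont : ContinuousAt (fun x : ℝ => x ^ q) 1 :=
    Real.continuousAt_rpow_const _ _ (Or.inl one_ne_zero)
  obtain ⟨δ₂, hδ₂, h2⟩ := Metric.nhds_basis_closedBall.mem_iff.1
    (hcont.preimage_mem_nhds (Metric.closedBall_mem_nhds _ hε0))
  refine ⟨min (min δ₁ δ₂) (1 / 2), by positivity, min_le_right _ _,
    fun f hf hper hf1 hcos hsin => ?_⟩
  have hr : ∀ x, 1 / 2 ≤ f x ∧ f x ≤ 2 := fun x => by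
    have := abs_le.1 ((hf1 x).trans (min_le_right _ _))
    constructor <;> linarith
  have hw := h1 f hf hper (fun x => by linarith [(hr x).1])
    (fun x => (hf1 x).trans ((min_le_left _ _).trans (min_le_left _ _))) hcos hsin
  have hfq : ∀ x, |f x ^ q - 1| ≤ ε := fun x => by
    have := h2 (Metric.mem_closedBall.2 ((hf1 x).trans ((min_le_left _ _).trans (min_le_right _ _))))
    simpa [Real.dist_eq] using this
  have hd := contDiff_deriv_top hf
  have hdd := contDiff_deriv_top hd
  have hpq := contDiff_rpow_const hf hr q
  have hpq1 := contDiff_rpow_const hf hr (q + 1)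
  have hdp : Function.Periodic (deriv f) (2 * π) := by simpa using hper.iteratedDeriv 1
  have hddp : Function.Periodic (deriv (deriv f)) (2 * π) := by simpa using hdp.iteratedDeriv 1
  have hN : ContDiff ℝ (⊤ : ℕ∞) fun x => f x ^ (q + 1) - f x := hpq1.sub hf
  have hNp : Function.Periodic (fun x => f x ^ (q + 1) - f x) (2 * π) := fun x => by
    simp only [hper x]
  have hS : ContDiff ℝ (⊤ : ℕ∞) (speedRHS q f) := (hpq.mul hdd).add hN
  have hSp : Function.Periodic (speedRHS q f) (2 * π) := fun x => by
    simp only [speedRHS, hper x, hddp x]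
  have hdN : ∀ x, deriv (fun x => f x ^ (q + 1) - f x) x = ((q + 1) * f x ^ q - 1) * deriv f x := by
    intro x
    have a1 := (hf.differentiable (by simp) x).hasDerivAt
    have a2 := a1.rpow_const (p := q + 1) (Or.inl (by linarith [(hr x).1]))
    refine (a2.sub a1).deriv.trans ?_
    rw [add_sub_cancel_right]
    ring
  have i1 := integral_mul_deriv_periodic hd hS hdp hSp
  have i2 := integral_mul_deriv_periodic hN hd hNp hdp
  have hfc := hf.continuous
  have hdc := hd.continuous
  have hddc := hdd.continuous
  have hqc := hpq.continuous
  have hq1c := hpq1.continuous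
  have i3 : ∫ x in 0..2 * π, deriv (deriv f) x * speedRHS q f x =
      (∫ x in 0..2 * π, f x ^ q * deriv (deriv f) x ^ 2) +
        ∫ x in 0..2 * π, (f x ^ (q + 1) - f x) * deriv (deriv f) x := by
    rw [← intervalIntegral.integral_add]
    · congr 1
      ext x
      rw [speedRHS]
      ring
    all_goals exact Continuous.intervalIntegrable (by fun_prop) _ _
  rw [i1, i3, i2]
  have e1 : derivEnergy 1 f = ∫ x in 0..2 * π, deriv f x ^ 2 := by simp [derivEnergy]
  have e2 : derivEnergy 2 f = ∫ x in 0..2 * π, deriv (deriv f) x ^ 2 := by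
    simp [derivEnergy, iteratedDeriv_succ]
  have j1 : (1 - ε) * derivEnergy 2 f ≤ ∫ x in 0..2 * π, f x ^ q * deriv (deriv f) x ^ 2 := by
    rw [e2, ← intervalIntegral.integral_const_mul]
    refine intervalIntegral.integral_mono_on two_pi_pos.le
      (Continuous.intervalIntegrable (by fun_prop) _ _)
      (Continuous.intervalIntegrable (by fun_prop) _ _) fun x _ => ?_
    have := abs_le.1 (hfq x)
    gcongr
    linarith
  have j2 : ∫ x in 0..2 * π, deriv (fun x => f x ^ (q + 1) - f x) x * deriv f x ≤
      (q + 3 * ε) * derivEnergy 1 f := by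
    rw [e1, ← intervalIntegral.integral_const_mul]
    simp only [hdN]
    refine intervalIntegral.integral_mono_on two_pi_pos.le
      (Continuous.intervalIntegrable (by fun_prop) _ _)
      (Continuous.intervalIntegrable (by fun_prop) _ _) fun x _ => ?_
    have := abs_le.1 (hfq x)
    rw [mul_assoc, ← sq]
    gcongr
    nlinarith
  have hE := derivEnergy_nonneg 1 f
  have hε1 : ε ≤ 1 := by linarith
  have j3 := mul_le_mul_of_nonneg_left hw (sub_nonneg.2 hε1)
  have j4 : 0 ≤ ε ^ 2 * derivEnergy 1 f := by positivity
  have j5 := mul_nonneg (sub_nonneg.2 hq2) hE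
  have j6 : 8 * ε * derivEnergy 1 f = (1 - β) * derivEnergy 1 f := by
    rw [hε]
    ring
  have j7 := mul_nonneg (sub_nonneg.2 hβ.le) hE
  linarith

namespace RescaledFlow

variable {p ω T α β : ℝ} {U : ℝ → ℝ → ℝ}

lemma hasDerivAt_derivEnergy (h : RescaledFlow p ω U) {t : ℝ} (ht : t ∈ Ioo 0 ω) :
    HasDerivAt (fun s => derivEnergy 1 (U s)) (2 * (p / ((p + 1) * (ω - t))) *
      ∫ x in 0..2 * π, deriv (U t) x * deriv (speedRHS (1 + 1 / p) (U t)) x) t := by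
  have hF : SmoothStrip (Ioo 0 ω) (fun s x => iteratedDeriv 1 (U s) x ^ 2) :=
    ContDiffOn.pow (h.smooth.iteratedDeriv isOpen_Ioo.uniqueDiffOn 1) 2
  have hG := fun (t : ℝ) (ht : t ∈ Ioo 0 ω) (x : ℝ) => (h.evolution_iteratedDeriv 1 ht x).fun_pow 2
  have := hF.hasDerivAt_integral isOpen_Ioo hG ht 0 (2 * π)
  refine this.congr_deriv ?_
  rw [← intervalIntegral.integral_const_mul]
  congr 1
  ext x
  simp only [iteratedDeriv_one]
  norm_num
  ring

lemma exists_derivEnergy_le (h : RescaledFlow p ω U) (hp : 1 ≤ p) (hT : T ∈ Ioo 0 ω)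
    (hdiss : ∀ t ∈ Ico T ω,
      ∫ x in 0..2 * π, deriv (U t) x * deriv (speedRHS (1 + 1 / p) (U t)) x ≤
        -(2 * β) * derivEnergy 1 (U t)) :
    ∃ C, ∀ t ∈ Ico T ω, derivEnergy 1 (U t) ≤ C * (ω - t) ^ (4 * β * p / (p + 1)) := by
  set c := 4 * β * p / (p + 1) with hc
  have hsub : ∀ t ∈ Ico T ω, t ∈ Ioo 0 ω := fun s hs => ⟨hT.1.trans_le hs.1, hs.2⟩
  have hder : ∀ t ∈ Ico T ω, HasDerivAt (fun s => derivEnergy 1 (U s) * (ω - s) ^ (-c))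
      ((2 * (p / ((p + 1) * (ω - t))) *
        ∫ x in 0..2 * π, deriv (U t) x * deriv (speedRHS (1 + 1 / p) (U t)) x) * (ω - t) ^ (-c) +
        derivEnergy 1 (U t) * (c * (ω - t)⁻¹ * (ω - t) ^ (-c))) t := by
    intro t ht
    have h0 : 0 < ω - t := sub_pos.2 ht.2
    have h1 := ((hasDerivAt_id t).const_sub ω).rpow_const (p := -c) (Or.inl h0.ne')
    refine ((h.hasDerivAt_derivEnergy (hsub t ht)).mul h1).congr_deriv ?_
    simp only [id, rpow_sub_one h0.ne']
    ring
  have hanti : AntitoneOn (fun s => derivEnergy 1 (U s) * (ω - s) ^ (-c)) (Ico T ω) := by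
    refine antitoneOn_of_deriv_nonpos (convex_Ico T ω)
      (fun t ht => (hder t ht).continuousAt.continuousWithinAt)
      (fun t ht => (hder t (interior_subset ht)).differentiableAt.differentiableWithinAt) ?_
    intro t ht
    have ht' := interior_subset ht
    have h0 : 0 < ω - t := sub_pos.2 ht'.2
    rw [(hder t ht').deriv]
    have h1 := mul_le_mul_of_nonneg_left (hdiss t ht')
      (show 0 ≤ 2 * (p / ((p + 1) * (ω - t))) by positivity)
    have h2 : 2 * (p / ((p + 1) * (ω - t))) * (-(2 * β) * derivEnergy 1 (U t)) =
        -(c * (ω - t)⁻¹ * derivEnergy 1 (U t)) := by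
      rw [hc]
      field_simp
      ring
    have h3 := mul_le_mul_of_nonneg_right h1 (rpow_nonneg h0.le (-c))
    rw [h2] at h3
    linarith
  refine ⟨derivEnergy 1 (U T) * (ω - T) ^ (-c), fun t ht => ?_⟩
  have h0 : 0 < ω - t := sub_pos.2 ht.2
  have h1 := hanti ⟨le_rfl, hT.2⟩ ht ht.1
  simp only at h1
  rw [rpow_neg h0.le, ← div_eq_mul_inv, div_le_iff₀ (rpow_pos_of_pos h0 _)] at h1
  exact h1

/-- Interpolation turns the decay of the first energy into decay of all derivatives. -/
lemma exists_rate_of_derivEnergy_le (h : RescaledFlow p ω U) (hp : 1 ≤ p) (hT : T ∈ Ioo 0 ω)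
    (hrange : ∀ t ∈ Ico T ω, ∀ x, 1 / 2 ≤ U t x ∧ U t x ≤ 2) {l m : ℕ} (hl : 1 ≤ l)
    (hβ : β * m = α * (l + m)) {C : ℝ}
    (hC : ∀ t ∈ Ico T ω, derivEnergy 1 (U t) ≤ C * (ω - t) ^ (4 * β * p / (p + 1))) :
    ∃ D, ∀ t ∈ Ico T ω, ∀ x,
      |iteratedDeriv l (fun y => U t y ^ (1 / p)) x| ≤ D * (ω - t) ^ (2 * α * p / (p + 1)) := by
  have hsub : ∀ t ∈ Ico T ω, t ∈ Ioo 0 ω := fun s hs => ⟨hT.1.trans_le hs.1, hs.2⟩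
  obtain ⟨Y, hY⟩ := h.exists_bound hp hT hrange (l + m + 1)
  obtain ⟨K, hK⟩ := rpowDerivBound (l + m + 1) (1 / p) Y
  set M := (1 / p * 2 ^ |1 / p - 1|) ^ 2 with hM
  have hC0 : 0 ≤ C := by
    have := (derivEnergy_nonneg 1 (U T)).trans (hC T ⟨le_rfl, hT.2⟩)
    exact nonneg_of_mul_nonneg_left this (rpow_pos_of_pos (sub_pos.2 hT.2) _)
  set D := 1 + (M * C) ^ m * (2 * π * K ^ 2) ^ l with hD
  have hD1 : 1 ≤ D := le_add_of_nonneg_right (by positivity)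
  refine ⟨√(2 * π * D), fun t ht x => ?_⟩
  have h0 : 0 < ω - t := sub_pos.2 ht.2
  have hU := h.smooth.contDiff (hsub t ht)
  set κ : ℝ → ℝ := fun y => U t y ^ (1 / p) with hκ
  have hκs : ContDiff ℝ (⊤ : ℕ∞) κ := contDiff_rpow_const hU (hrange t ht) _
  have hκp : Function.Periodic κ (2 * π) := fun y => by simp only [hκ, h.periodic t y]
  have ha0 : derivEnergy 1 κ ≤ M * derivEnergy 1 (U t) := by
    simp only [derivEnergy, iteratedDeriv_one]
    rw [← intervalIntegral.integral_const_mul]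
    refine intervalIntegral.integral_mono_on two_pi_pos.le
      (((contDiff_deriv_top hκs).continuous.pow 2).intervalIntegrable _ _)
      ((((contDiff_deriv_top hU).continuous.pow 2).const_mul _).intervalIntegrable _ _)
      fun y _ => ?_
    rw [hκ, deriv_rpow_const_eq hU (hrange t ht)]
    beta_reduce
    rw [← mul_assoc, mul_pow, hM]
    have := hrange t ht y
    gcongr
    · exact mul_nonneg (by positivity) (rpow_nonneg (by linarith) _)
    · exact rpow_le_two_rpow_abs this.1 this.2 _
  have haN : derivEnergy (l + m + 1) κ ≤ 2 * π * K ^ 2 :=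
    derivEnergy_le_of_abs_le hκs fun y =>
      hK (U t) hU (hrange t ht) y (fun i hi => hY t ht y i hi) _ le_rfl
  have hconv := pow_add_le_of_log_convex (a := fun n => derivEnergy (n + 1) κ)
    (fun n => derivEnergy_nonneg _ _) (fun n => derivEnergy_sq_le hκs hκp (n + 1)) l m
  have hN : l + m ≠ 0 := by omega
  have hal : derivEnergy (l + 1) κ ≤ D * (ω - t) ^ (4 * α * p / (p + 1)) := by
    refine (pow_le_pow_iff_left₀ (derivEnergy_nonneg _ _) (by positivity) hN).1 ?_
    refine hconv.trans ?_
    have he : ((ω - t) ^ (4 * β * p / (p + 1))) ^ m = ((ω - t) ^ (4 * α * p / (p + 1))) ^ (l + m) := by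
      rw [← rpow_natCast, ← rpow_mul h0.le, ← rpow_natCast, ← rpow_mul h0.le]
      congr 1
      have : (4 * p / (p + 1)) * (β * m) = (4 * p / (p + 1)) * (α * (l + m)) := by rw [hβ]
      push_cast
      linear_combination this
    calc derivEnergy (0 + 1) κ ^ m * derivEnergy (l + m + 1) κ ^ l
        ≤ (M * (C * (ω - t) ^ (4 * β * p / (p + 1)))) ^ m * (2 * π * K ^ 2) ^ l := by
          have e0 := derivEnergy_nonneg (0 + 1) κ
          have e1 := derivEnergy_nonneg (l + m + 1) κ
          gcongr
          exact ha0.trans (mul_le_mul_of_nonneg_left (hC t ht) (by positivity))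
      _ = ((M * C) ^ m * (2 * π * K ^ 2) ^ l) * ((ω - t) ^ (4 * β * p / (p + 1))) ^ m := by ring
      _ ≤ D ^ (l + m) * ((ω - t) ^ (4 * α * p / (p + 1))) ^ (l + m) := by
          rw [he]
          gcongr
          exact (le_add_of_nonneg_left zero_le_one).trans (le_self_pow₀ hD1 hN)
      _ = _ := by ring_nf
  obtain ⟨n, rfl⟩ : ∃ n, l = n + 1 := ⟨l - 1, by omega⟩
  have hsq := deriv_sq_le_integral_deriv_deriv_sq (contDiff_iteratedDeriv_top hκs n) two_pi_pos
    (hκp.iteratedDeriv n) x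
  simp only [← iteratedDeriv_succ] at hsq
  change _ ≤ 2 * π * derivEnergy (n + 1 + 1) κ at hsq
  have hx : (ω - t) ^ (4 * α * p / (p + 1)) = ((ω - t) ^ (2 * α * p / (p + 1))) ^ 2 := by
    rw [← rpow_natCast, ← rpow_mul h0.le]
    congr 1
    push_cast
    ring
  refine abs_le_of_sq_le_sq ?_ (by positivity)
  rw [mul_pow, sq_sqrt (by positivity), ← hx, mul_assoc]
  exact hsq.trans (mul_le_mul_of_nonneg_left hal two_pi_pos.le)

lemma exists_rate (h : RescaledFlow p ω U) (hp : 1 ≤ p) (hα0 : 0 < α) (hα1 : α < 1)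
    (hlim : ∀ ε > 0, ∃ T ∈ Ioo 0 ω, ∀ t ∈ Ico T ω, ∀ x, |U t x - 1| ≤ ε)
    (hcos : ∀ t ∈ Ioo 0 ω, ∫ x in 0..2 * π, cos x * U t x ^ (-(1 / p)) = 0)
    (hsin : ∀ t ∈ Ioo 0 ω, ∫ x in 0..2 * π, sin x * U t x ^ (-(1 / p)) = 0)
    {l : ℕ} (hl : 1 ≤ l) :
    ∃ T ∈ Ioo 0 ω, ∃ D, ∀ t ∈ Ico T ω, ∀ x,
      |iteratedDeriv l (fun y => U t y ^ (1 / p)) x| ≤ D * (ω - t) ^ (2 * α * p / (p + 1)) := by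
  obtain ⟨m, hm⟩ := exists_nat_gt (α * l / (1 - α))
  rw [div_lt_iff₀ (sub_pos.2 hα1)] at hm
  have hl0 : (0 : ℝ) < l := by exact_mod_cast hl
  have hm0 : (0 : ℝ) < m := by
    have : 0 < α * l := by positivity
    exact pos_of_mul_pos_left (this.trans hm) (sub_pos.2 hα1).le
  set β := α * (l + m) / m with hβ
  have hβ1 : β < 1 := by
    rw [hβ, div_lt_one hm0]
    linarith
  obtain ⟨δ, hδ, hδ2, hdiss⟩ := exists_energy_dissipation (β := β) hp (by positivity) hβ1
  obtain ⟨T, hT, hTδ⟩ := hlim δ hδ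
  have hsub : ∀ t ∈ Ico T ω, t ∈ Ioo 0 ω := fun s hs => ⟨hT.1.trans_le hs.1, hs.2⟩
  have hrange : ∀ t ∈ Ico T ω, ∀ x, 1 / 2 ≤ U t x ∧ U t x ≤ 2 := fun t ht x => by
    have := abs_le.1 (hTδ t ht x)
    constructor <;> linarith
  obtain ⟨C, hC⟩ := h.exists_derivEnergy_le hp hT fun t ht =>
    hdiss (U t) (h.smooth.contDiff (hsub t ht)) (h.periodic t) (hTδ t ht)
      (hcos t (hsub t ht)) (hsin t (hsub t ht))
  exact ⟨T, hT, h.exists_rate_of_derivEnergy_le hp hT hrange hl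
    (div_mul_cancel₀ _ hm0.ne') hC⟩

end RescaledFlow

/-- `K t θ` solves the curvature equation of the flow on the open time interval `(0, ω)`. -/
structure CurvatureFlow (p ω : ℝ) (K : ℝ → ℝ → ℝ) : Prop where
  smooth : SmoothStrip (Ioo 0 ω) K
  periodic : ∀ t, Function.Periodic (K t) (2 * π)
  pos : ∀ t ∈ Ioo 0 ω, ∀ θ, 0 < K t θ
  evolution : ∀ t ∈ Ioo 0 ω, ∀ θ, HasDerivAt (fun s => K s θ)
    (K t θ ^ 2 * (deriv (deriv fun x => K t x ^ p) θ + K t θ ^ p)) t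

namespace CurvatureFlow

variable {p ω : ℝ} {K : ℝ → ℝ → ℝ}

lemma contDiff_rpow (h : CurvatureFlow p ω K) {t : ℝ} (ht : t ∈ Ioo 0 ω) (r : ℝ) :
    ContDiff ℝ (⊤ : ℕ∞) fun x => K t x ^ r :=
  (h.smooth.contDiff ht).rpow_const_of_ne fun x => (h.pos t ht x).ne'

lemma rescaled (h : CurvatureFlow p ω K) (hp : 1 ≤ p) :
    RescaledFlow p ω fun t θ => (K t θ * ((p + 1) * (ω - t)) ^ (1 / (p + 1))) ^ p where
  smooth := by
    have h1 : ContDiffOn ℝ (⊤ : ℕ∞) (fun q : ℝ × ℝ => ((p + 1) * (ω - q.2)) ^ (1 / (p + 1)))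
        (univ ×ˢ Ioo 0 ω) := by
      refine ContDiffOn.rpow_const_of_ne (by fun_prop) fun q hq => ?_
      have := sub_pos.2 hq.2.2
      positivity
    refine ContDiffOn.rpow_const_of_ne (ContDiffOn.mul h.smooth h1) fun q hq => ?_
    have := sub_pos.2 hq.2.2
    have := h.pos q.2 hq.2 q.1
    positivity
  periodic t θ := by simp only [h.periodic t θ]
  evolution t ht θ := by
    have hs : 0 < (p + 1) * (ω - t) := mul_pos (by linarith) (sub_pos.2 ht.2)
    set s := (p + 1) * (ω - t) with hsdef
    set σ := s ^ (1 / (p + 1)) with hσ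
    have hσ0 : 0 < σ := rpow_pos_of_pos hs _
    have hσp : σ ^ p * σ = s := by
      rw [← rpow_add_one hσ0.ne', hσ, ← rpow_mul hs.le, one_div_mul_cancel (by linarith), rpow_one]
    have hK := h.pos t ht θ
    have hσd : HasDerivAt (fun r => ((p + 1) * (ω - r)) ^ (1 / (p + 1))) (-(σ / s)) t := by
      have h1 := (((hasDerivAt_id t).const_sub ω).const_mul (p + 1)).rpow_const
        (p := 1 / (p + 1)) (Or.inl hs.ne')
      refine h1.congr_deriv ?_
      simp only [id, ← hsdef]
      rw [rpow_sub_one hs.ne', ← hσ]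
      field_simp
    have hd := ((h.evolution t ht θ).fun_mul hσd).rpow_const (p := p) (Or.inl (mul_pos hK hσ0).ne')
    simp only [← hsdef, ← hσ] at hd
    refine hd.congr_deriv ?_
    have hU : (fun x => (K t x * σ) ^ p) = fun x => σ ^ p * K t x ^ p := by
      ext x
      rw [mul_rpow (h.pos t ht x).le hσ0.le, mul_comm]
    have hU2 : deriv (deriv fun x => (K t x * σ) ^ p) θ =
        σ ^ p * deriv (deriv fun x => K t x ^ p) θ := by
      rw [hU, deriv_const_mul_field', deriv_const_mul_field']
    have hκ : 0 < K t θ * σ := mul_pos hK hσ0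
    have hq : ((K t θ * σ) ^ p) ^ (1 + 1 / p) = (K t θ * σ) ^ p * (K t θ * σ) := by
      rw [← rpow_mul hκ.le, ← rpow_add_one hκ.ne']
      congr 1
      field_simp
    have hq1 : ((K t θ * σ) ^ p) ^ (1 + 1 / p + 1) =
        (K t θ * σ) ^ p * (K t θ * σ) * (K t θ * σ) ^ p := by
      rw [rpow_add_one (rpow_pos_of_pos hκ _).ne', hq]
    rw [speedRHS, hU2, hq, hq1, rpow_sub_one hκ.ne', mul_rpow hK.le hσ0.le, ← hσp]
    set u := K t θ ^ p
    set τ := σ ^ p with hτ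
    have hτ0 : 0 < τ := rpow_pos_of_pos hσ0 _
    field_simp
    ring

lemma integral_mul_inv_eq (h : CurvatureFlow p ω K) {w : ℝ → ℝ} (hw : ContDiff ℝ (⊤ : ℕ∞) w)
    (hwp : Function.Periodic w (2 * π)) (hw2 : ∀ x, deriv (deriv w) x = -w x) {t r : ℝ}
    (ht : t ∈ Ioo 0 ω) (hr : r ∈ Ioo 0 ω) :
    ∫ x in 0..2 * π, w x * (K t x)⁻¹ = ∫ x in 0..2 * π, w x * (K r x)⁻¹ := by
  have hF : SmoothStrip (Ioo 0 ω) fun s x => w x * (K s x)⁻¹ :=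
    ContDiffOn.mul (hw.comp contDiff_fst).contDiffOn
      (ContDiffOn.inv h.smooth fun q hq => (h.pos q.2 hq.2 q.1).ne')
  have hG : ∀ s ∈ Ioo 0 ω, ∀ x, HasDerivAt (fun s => w x * (K s x)⁻¹)
      (-(w x * deriv (deriv fun y => K s y ^ p) x + w x * K s x ^ p)) s := by
    intro s hs x
    have hK := (h.pos s hs x).ne'
    refine (((h.evolution s hs x).fun_inv hK).const_mul (w x)).congr_deriv ?_
    field_simp
  have hd : ∀ s ∈ Ioo 0 ω, HasDerivAt (fun s => ∫ x in 0..2 * π, w x * (K s x)⁻¹) 0 s := by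
    intro s hs
    refine (hF.hasDerivAt_integral isOpen_Ioo hG hs 0 (2 * π)).congr_deriv ?_
    have hu := h.contDiff_rpow hs p
    have hup : Function.Periodic (fun x => K s x ^ p) (2 * π) := fun x => by
      simp only [h.periodic s x]
    have hud := contDiff_deriv_top hu
    have hudp : Function.Periodic (deriv fun x => K s x ^ p) (2 * π) := by
      simpa using hup.iteratedDeriv 1
    have hwd := contDiff_deriv_top hw
    have hwdp : Function.Periodic (deriv w) (2 * π) := by simpa using hwp.iteratedDeriv 1
    have hwc := hw.continuous
    have huc := hu.continuous
    have huddc := (contDiff_deriv_top hud).continuous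
    rw [intervalIntegral.integral_neg, intervalIntegral.integral_add,
      integral_mul_deriv_periodic hw hud hwp hudp, integral_mul_deriv_periodic hwd hu hwdp hup]
    · simp only [hw2, neg_mul, intervalIntegral.integral_neg]
      ring
    all_goals exact Continuous.intervalIntegrable (by fun_prop) _ _
  exact isOpen_Ioo.is_const_of_deriv_eq_zero isPreconnected_Ioo
    (fun s hs => (hd s hs).differentiableAt.differentiableWithinAt)
    (fun s hs => (hd s hs).deriv) ht hr

/-- The curves are closed: `1/k` is orthogonal to the first harmonics. -/
lemma integral_mul_inv_eq_zero (h : CurvatureFlow p ω K) (hp : 1 ≤ p)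
    (hconv : TendstoUniformly (fun t θ => K t θ * ((p + 1) * (ω - t)) ^ (1 / (p + 1)))
      (fun _ => 1) (nhdsWithin ω (Iio ω)))
    {w : ℝ → ℝ} (hw : ContDiff ℝ (⊤ : ℕ∞) w) (hw1 : ∀ x, |w x| ≤ 1)
    (hwp : Function.Periodic w (2 * π)) (hw2 : ∀ x, deriv (deriv w) x = -w x) {t : ℝ}
    (ht : t ∈ Ioo 0 ω) : ∫ x in 0..2 * π, w x * (K t x)⁻¹ = 0 := by
  have hω := ht.1.trans ht.2
  have hlim : Tendsto (fun s => 2 * ((p + 1) * (ω - s)) ^ (1 / (p + 1)) * |2 * π - 0|)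
      (nhdsWithin ω (Iio ω)) (nhds 0) := by
    have hc : ContinuousAt (fun s => 2 * ((p + 1) * (ω - s)) ^ (1 / (p + 1)) * |2 * π - 0|) ω :=
      ((ContinuousAt.rpow_const (by fun_prop) (Or.inr (by positivity))).const_mul 2).mul_const _
    have := hc.tendsto.mono_left (nhdsWithin_le_nhds (s := Iio ω))
    rwa [sub_self, mul_zero, zero_rpow (by positivity), mul_zero, zero_mul] at this
  refine abs_nonpos_iff.1 (ge_of_tendsto hlim ?_)
  have h1 := Metric.tendstoUniformly_iff.1 hconv (1 / 2) one_half_pos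
  filter_upwards [h1, Ioo_mem_nhdsLT hω] with s hs hsI
  rw [h.integral_mul_inv_eq hw hwp hw2 ht hsI, ← Real.norm_eq_abs]
  refine intervalIntegral.norm_integral_le_of_norm_le_const fun x _ => ?_
  have hK := h.pos s hsI x
  have hσ : 0 < ((p + 1) * (ω - s)) ^ (1 / (p + 1)) :=
    rpow_pos_of_pos (mul_pos (by linarith) (sub_pos.2 hsI.2)) _
  have h2 := (abs_lt.1 (Real.dist_eq _ _ ▸ hs x)).2
  rw [norm_mul, Real.norm_eq_abs, Real.norm_eq_abs, abs_of_pos (inv_pos.2 hK)]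
  refine (mul_le_of_le_one_left (inv_pos.2 hK).le (hw1 x)).trans ?_
  rw [inv_le_iff_one_le_mul₀ hK]
  linarith

lemma exists_rescaled_near_one (hω : 0 < ω)
    (hconv : TendstoUniformly (fun t θ => K t θ * ((p + 1) * (ω - t)) ^ (1 / (p + 1)))
      (fun _ => 1) (nhdsWithin ω (Iio ω))) {ε : ℝ} (hε : 0 < ε) :
    ∃ T ∈ Ioo 0 ω, ∀ t ∈ Ico T ω, ∀ x,
      |(K t x * ((p + 1) * (ω - t)) ^ (1 / (p + 1))) ^ p - 1| ≤ ε := by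
  have hcont : ContinuousAt (fun x : ℝ => x ^ p) 1 :=
    Real.continuousAt_rpow_const _ _ (Or.inl one_ne_zero)
  obtain ⟨δ, hδ, hball⟩ := Metric.continuousAt_iff.1 hcont ε hε
  have h1 := (Metric.tendstoUniformly_iff.1 hconv δ hδ).and (Ioo_mem_nhdsLT hω)
  obtain ⟨T, hT, hsub⟩ := mem_nhdsLT_iff_exists_Ico_subset.1 h1
  refine ⟨T, (hsub ⟨le_rfl, hT⟩).2, fun t ht x => ?_⟩
  have := hball (x := K t x * ((p + 1) * (ω - t)) ^ (1 / (p + 1)))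
    (by simpa [dist_comm] using (hsub ht).1 x)
  simpa [Real.dist_eq] using this.le

lemma exists_rate (h : CurvatureFlow p ω K) (hω : 0 < ω) (hp : 1 ≤ p) {α : ℝ} (hα0 : 0 < α)
    (hα1 : α < 1)
    (hconv : TendstoUniformly (fun t θ => K t θ * ((p + 1) * (ω - t)) ^ (1 / (p + 1)))
      (fun _ => 1) (nhdsWithin ω (Iio ω))) {l : ℕ} (hl : 1 ≤ l) :
    ∃ T ∈ Ioo 0 ω, ∃ C, ∀ t ∈ Ico T ω, ∀ θ,
      |iteratedDeriv l (K t) θ| ≤ C * (ω - t) ^ (2 * α * p / (p + 1) - 1 / (p + 1)) := by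
  have hroot : ∀ t ∈ Ioo 0 ω, ∀ x r : ℝ,
      ((K t x * ((p + 1) * (ω - t)) ^ (1 / (p + 1))) ^ p) ^ (r / p) =
        (K t x * ((p + 1) * (ω - t)) ^ (1 / (p + 1))) ^ r := by
    intro t ht x r
    have := h.pos t ht x
    have := sub_pos.2 ht.2
    rw [← rpow_mul (by positivity)]
    congr 1
    field_simp
  have horth : ∀ w : ℝ → ℝ, ContDiff ℝ (⊤ : ℕ∞) w → (∀ x, |w x| ≤ 1) →
      Function.Periodic w (2 * π) → (∀ x, deriv (deriv w) x = -w x) → ∀ t ∈ Ioo 0 ω,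
      ∫ x in 0..2 * π,
        w x * ((K t x * ((p + 1) * (ω - t)) ^ (1 / (p + 1))) ^ p) ^ (-(1 / p)) = 0 := by
    intro w hw hw1 hwp hw2 t ht
    simp only [← neg_div, hroot t ht, rpow_neg_one, mul_inv, ← mul_assoc]
    rw [intervalIntegral.integral_mul_const,
      h.integral_mul_inv_eq_zero hp hconv hw hw1 hwp hw2 ht, zero_mul]
  obtain ⟨T, hT, D, hD⟩ := (h.rescaled hp).exists_rate hp hα0 hα1
    (fun ε hε => exists_rescaled_near_one hω hconv hε)
    (horth cos contDiff_cos abs_cos_le_one cos_periodic (by simp))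
    (horth sin contDiff_sin abs_sin_le_one sin_periodic (by simp)) hl
  refine ⟨T, hT, D * ((p + 1) ^ (1 / (p + 1)))⁻¹, fun t ht θ => ?_⟩
  have htI : t ∈ Ioo 0 ω := ⟨hT.1.trans_le ht.1, ht.2⟩
  have h0 : 0 < ω - t := sub_pos.2 ht.2
  have h1 := hD t ht θ
  simp only [hroot t htI, rpow_one] at h1
  simp only [mul_comm (K t _)] at h1
  rw [iteratedDeriv_const_mul_field, mul_rpow (by linarith) h0.le] at h1
  have hc : 0 < (p + 1) ^ (1 / (p + 1)) := by positivity
  have hσ : 0 < (ω - t) ^ (1 / (p + 1)) := rpow_pos_of_pos h0 _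
  rw [abs_mul, abs_of_pos (mul_pos hc hσ)] at h1
  rw [rpow_sub h0]
  calc |iteratedDeriv l (K t) θ|
      = ((p + 1) ^ (1 / (p + 1)) * (ω - t) ^ (1 / (p + 1)) * |iteratedDeriv l (K t) θ|) /
          ((p + 1) ^ (1 / (p + 1)) * (ω - t) ^ (1 / (p + 1))) := by field_simp
    _ ≤ (D * (ω - t) ^ (2 * α * p / (p + 1))) /
          ((p + 1) ^ (1 / (p + 1)) * (ω - t) ^ (1 / (p + 1))) := by gcongr
    _ = _ := by field_simp

end CurvatureFlow

/-- On a compact time interval, all angular derivatives of a periodic smooth function are bounded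
by any positive continuous weight. -/
lemma SmoothStrip.exists_iteratedDeriv_le {F : ℝ → ℝ → ℝ} {I : Set ℝ} {a b c : ℝ}
    (hF : SmoothStrip I F) (hI : UniqueDiffOn ℝ I) (hab : Icc a b ⊆ I) (hc : 0 < c)
    (hper : ∀ t, Function.Periodic (F t) c) (l : ℕ) {w : ℝ → ℝ} (hw : ContinuousOn w (Icc a b))
    (hw0 : ∀ t ∈ Icc a b, 0 < w t) :
    ∃ C, ∀ t ∈ Icc a b, ∀ θ, |_root_.iteratedDeriv l (F t) θ| ≤ C * w t := by
  have hcont : ContinuousOn (fun q : ℝ × ℝ => _root_.iteratedDeriv l (F q.2) q.1 / w q.2)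
      (Icc 0 c ×ˢ Icc a b) :=
    ((hF.iteratedDeriv hI l).continuousOn.mono (prod_mono (subset_univ _) hab)).div
      (hw.comp continuousOn_snd fun q hq => hq.2) fun q hq => (hw0 q.2 hq.2).ne'
  obtain ⟨C, hC⟩ := (isCompact_Icc.prod isCompact_Icc).exists_bound_of_continuousOn hcont
  refine ⟨C, fun t ht θ => ?_⟩
  obtain ⟨x, hx, e⟩ := ((hper t).iteratedDeriv l).exists_mem_Ico₀ hc θ
  have h := hC (x, t) ⟨Ico_subset_Icc_self hx, ht⟩
  rw [norm_div, Real.norm_eq_abs, Real.norm_eq_abs, abs_of_pos (hw0 t ht),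
    div_le_iff₀ (hw0 t ht)] at h
  rwa [e]

/-- Main theorem: blow-up rates of the angular derivatives of the curvature
under the general curve shortening flow with `G(x) = |x|^(p-1)`. -/
theorem blow_up_rates_general_curve_shortening
    (p ω α : ℝ) (hp : 1 ≤ p) (hω : 0 < ω) (hα0 : 0 < α) (hα1 : α < 1)
    (k : ℝ → ℝ → ℝ)
    (hsmooth : ContDiffOn ℝ (⊤ : ℕ∞) (fun q : ℝ × ℝ => k q.1 q.2) (univ ×ˢ Ico 0 ω))
    (hper : ∀ t : ℝ, Function.Periodic (fun θ => k θ t) (2 * π))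
    (hpos : ∀ θ t : ℝ, t ∈ Ico (0:ℝ) ω → 0 < k θ t)
    (hpde : ∀ θ : ℝ, ∀ t ∈ Ioo (0:ℝ) ω,
      deriv (fun s => k θ s) t =
        (k θ t) ^ 2 * (deriv (deriv (fun x => (k x t) ^ p)) θ + (k θ t) ^ p))
    (hconv : TendstoUniformly
      (fun t θ => k θ t * ((p + 1) * (ω - t)) ^ (1 / (p + 1)))
      (fun _ => 1) (nhdsWithin ω (Iio ω))) :
    ∀ l : ℕ, 1 ≤ l → ∃ C : ℝ, 0 < C ∧
      ∀ t ∈ Ico (0:ℝ) ω, ∀ θ : ℝ,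
        |iteratedDeriv l (fun x => k x t) θ| ≤
          C * (ω - t) ^ (2 * α * p / (p + 1) - 1 / (p + 1)) := by
  intro l hl
  have hstrip : SmoothStrip (Ico 0 ω) fun t θ => k θ t := hsmooth
  have hflow : CurvatureFlow p ω fun t θ => k θ t :=
    { smooth := hstrip.mono Ioo_subset_Ico_self
      periodic := hper
      pos := fun t ht θ => hpos θ t (Ioo_subset_Ico_self ht)
      evolution := fun t ht θ => by
        have h1 := ((hstrip.mono Ioo_subset_Ico_self).contDiffAt isOpen_Ioo ht θ).differentiableAt
          (by simp)
        have h2 : DifferentiableAt ℝ (fun s => k θ s) t :=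
          h1.comp (f := fun s : ℝ => (θ, s)) t (by fun_prop)
        rw [← hpde θ t ht]
        exact h2.hasDerivAt }
  obtain ⟨T, hT, C₁, hC₁⟩ := hflow.exists_rate hω hp hα0 hα1 hconv hl
  have hw : ContinuousOn (fun t => (ω - t) ^ (2 * α * p / (p + 1) - 1 / (p + 1))) (Icc 0 T) :=
    ContinuousOn.rpow_const (by fun_prop) fun t ht => Or.inl (sub_pos.2 (ht.2.trans_lt hT.2)).ne'
  obtain ⟨C₂, hC₂⟩ := hstrip.exists_iteratedDeriv_le (uniqueDiffOn_Ico 0 ω)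
    (Icc_subset_Ico_right hT.2) two_pi_pos hper l hw
    fun t ht => rpow_pos_of_pos (sub_pos.2 (ht.2.trans_lt hT.2)) _
  refine ⟨max 1 (max C₁ C₂), by positivity, fun t ht θ => ?_⟩
  have hpow := rpow_nonneg (sub_pos.2 ht.2).le (2 * α * p / (p + 1) - 1 / (p + 1))
  rcases le_total T t with h | h
  · exact (hC₁ t ⟨h, ht.2⟩ θ).trans (mul_le_mul_of_nonneg_right
      ((le_max_left _ _).trans (le_max_right _ _)) hpow)
  · exact (hC₂ t ⟨ht.1, h⟩ θ).trans (mul_le_mul_of_nonneg_right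
      ((le_max_right _ _).trans (le_max_right _ _)) hpow)
end

section
/- Let p ≥ 1 be a real number. Let k̃ : ℝ × [0,∞) → ℝ be a smooth function, 2π-periodic in its first (angular) variable θ, with k̃(θ,τ) > 0 everywhere, satisfying the rescaled curve-shortening equation ∂k̃/∂τ = p·k̃^{1+1/p}·∂²k̃/∂θ² + p·k̃^{2+1/p} − p·k̃ on ℝ × (0,∞), and suppose sup_θ |k̃(θ,τ) − 1| → 0 as τ → ∞. Then there exists a constant C₁ > 0, depending only on p and the initial data k̃(·,0), such that for all τ ≥ 0: (∫₀^{2π} (∂k̃/∂θ)² dθ)^{1/2} ≤ C₁ and (∫₀^{2π} (∂k̃/∂θ)⁴ dθ)^{1/4} ≤ C₁. -/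
open Real Filter Set

theorem hasDerivAt_fst_slice {F : ℝ × ℝ → ℝ} {x t : ℝ} (h : DifferentiableAt ℝ F (x, t)) :
    HasDerivAt (fun y => F (y, t)) (fderiv ℝ F (x, t) (1, 0)) x :=
  h.hasFDerivAt.comp_hasDerivAt x ((hasDerivAt_id x).prodMk (hasDerivAt_const x t))

theorem hasDerivAt_snd_slice {F : ℝ × ℝ → ℝ} {x t : ℝ} (h : DifferentiableAt ℝ F (x, t)) :
    HasDerivAt (fun s => F (x, s)) (fderiv ℝ F (x, t) (0, 1)) t :=
  h.hasFDerivAt.comp_hasDerivAt t ((hasDerivAt_const t x).prodMk (hasDerivAt_id t))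

theorem ContDiffAt.fderiv_apply_const {F : ℝ × ℝ → ℝ} {q : ℝ × ℝ}
    (h : ContDiffAt ℝ (⊤ : ℕ∞) F q) (v : ℝ × ℝ) :
    ContDiffAt ℝ (⊤ : ℕ∞) (fun z => fderiv ℝ F z v) q :=
  (h.fderiv_right (by simp)).clm_apply contDiffAt_const

theorem fderiv_fderiv_apply_comm {F : ℝ × ℝ → ℝ} {q : ℝ × ℝ}
    (h : ContDiffAt ℝ (⊤ : ℕ∞) F q) (v w : ℝ × ℝ) :
    fderiv ℝ (fun z => fderiv ℝ F z v) q w = fderiv ℝ (fun z => fderiv ℝ F z w) q v := by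
  have hd : DifferentiableAt ℝ (fderiv ℝ F) q :=
    (h.fderiv_right (m := (⊤ : ℕ∞)) (by simp)).differentiableAt (by simp)
  have hs : IsSymmSndFDerivAt ℝ F q := h.isSymmSndFDerivAt
    (by simpa using WithTop.coe_le_coe.2 (le_top (a := (2 : ℕ∞))))
  rw [fderiv_clm_apply hd (differentiableAt_const v),
    fderiv_clm_apply hd (differentiableAt_const w)]
  simpa using hs.eq w v

/-- The second derivative test, in the necessary direction. -/
theorem IsLocalMax.second_deriv_nonpos {f g : ℝ → ℝ} {x c : ℝ} (h : IsLocalMax f x)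
    (hf : ∀ y, HasDerivAt f (g y) y) (hg : HasDerivAt g c x) : c ≤ 0 := by
  by_contra! hc
  have hfg : deriv f = g := funext fun y => (hf y).deriv
  have hmin : IsLocalMin f x := isLocalMin_of_deriv_deriv_pos (by rwa [hfg, hg.deriv])
    h.deriv_eq_zero (hf x).continuousAt
  have hconst : f =ᶠ[nhds x] fun _ => f x := by
    filter_upwards [h, hmin] with y h₁ h₂ using le_antisymm h₁ h₂
  have := hconst.deriv.deriv_eq
  rw [hfg, hg.deriv] at this
  simp at this
  exact hc.ne' this

theorem HasDerivAt.nonneg_of_forall_left_le {f : ℝ → ℝ} {a t c : ℝ} (h : HasDerivAt f c t)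
    (hat : a < t) (hle : ∀ s ∈ Icc a t, f s ≤ f t) : 0 ≤ c := by
  have ht : Tendsto (slope f t) (nhdsWithin t (Iio t)) (nhds c) :=
    (hasDerivAt_iff_tendsto_slope.1 h).mono_left
      (nhdsWithin_mono _ fun s hs => ne_of_lt hs)
  refine ge_of_tendsto ht ?_
  filter_upwards [Ioo_mem_nhdsLT hat] with s hs
  rw [slope_def_field]
  exact div_nonneg_of_nonpos (sub_nonpos.2 (hle s ⟨hs.1.le, hs.2.le⟩)) (sub_nonpos.2 hs.2.le)

/-- At a spatial maximum of `F ^ 2 + (∂F) ^ 2` where `∂F ≠ 0`, the quasilinear equation forces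
this quantity to decrease strictly in time. -/
theorem exists_hasDerivAt_sq_add_sq_neg {p : ℝ} (hp : 0 < p) {F : ℝ × ℝ → ℝ} {θ t : ℝ}
    (hF : ∀ x, ContDiffAt ℝ (⊤ : ℕ∞) F (x, t)) (hpos : ∀ x, 0 < F (x, t))
    (hpde : ∀ x, fderiv ℝ F (x, t) (0, 1) =
      p * F (x, t) ^ (1 + 1 / p) * fderiv ℝ (fun z => fderiv ℝ F z (1, 0)) (x, t) (1, 0)
        + p * F (x, t) ^ (2 + 1 / p) - p * F (x, t))
    (hmax : ∀ x, F (x, t) ^ 2 + fderiv ℝ F (x, t) (1, 0) ^ 2 ≤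
      F (θ, t) ^ 2 + fderiv ℝ F (θ, t) (1, 0) ^ 2)
    (hne : fderiv ℝ F (θ, t) (1, 0) ≠ 0) :
    ∃ c < 0, HasDerivAt (fun s => F (θ, s) ^ 2 + fderiv ℝ F (θ, s) (1, 0) ^ 2) c t := by
  set F₁ : ℝ × ℝ → ℝ := fun z => fderiv ℝ F z (1, 0) with hF₁
  set F₁₁ : ℝ × ℝ → ℝ := fun z => fderiv ℝ F₁ z (1, 0) with hF₁₁
  have hcF₁ : ∀ x, ContDiffAt ℝ (⊤ : ℕ∞) F₁ (x, t) := fun x => (hF x).fderiv_apply_const _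
  have hcF₁₁ : ∀ x, ContDiffAt ℝ (⊤ : ℕ∞) F₁₁ (x, t) := fun x => (hcF₁ x).fderiv_apply_const _
  have hcF₂ := (hF θ).fderiv_apply_const (0, 1)
  have d₀ : ∀ x, HasDerivAt (fun y => F (y, t)) (F₁ (x, t)) x := fun x =>
    hasDerivAt_fst_slice ((hF x).differentiableAt (by simp))
  have d₁ : ∀ x, HasDerivAt (fun y => F₁ (y, t)) (F₁₁ (x, t)) x := fun x =>
    hasDerivAt_fst_slice ((hcF₁ x).differentiableAt (by simp))
  obtain ⟨w, d₂⟩ : ∃ w, HasDerivAt (fun y => F₁₁ (y, t)) w θ :=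
    ⟨_, hasDerivAt_fst_slice ((hcF₁₁ θ).differentiableAt (by simp))⟩
  have hψ : ∀ x, HasDerivAt (fun y => F (y, t) ^ 2 + F₁ (y, t) ^ 2)
      (2 * F₁ (x, t) * (F (x, t) + F₁₁ (x, t))) x := fun x =>
    (((d₀ x).pow 2).add ((d₁ x).pow 2)).congr_deriv (by push_cast; ring)
  have hψ' : HasDerivAt (fun y => 2 * F₁ (y, t) * (F (y, t) + F₁₁ (y, t)))
      (2 * F₁₁ (θ, t) * (F (θ, t) + F₁₁ (θ, t)) + 2 * F₁ (θ, t) * (F₁ (θ, t) + w)) θ :=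
    ((d₁ θ).const_mul 2).mul ((d₀ θ).add d₂)
  have hloc : IsLocalMax (fun y => F (y, t) ^ 2 + F₁ (y, t) ^ 2) θ :=
    Filter.Eventually.of_forall hmax
  have hcrit : F (θ, t) + F₁₁ (θ, t) = 0 := by
    have := hloc.hasDerivAt_eq_zero (hψ θ)
    have hne' : F₁ (θ, t) ≠ 0 := hne
    simpa [hne'] using this
  have hsecond := hloc.second_deriv_nonpos hψ hψ'
  rw [hcrit] at hsecond
  set a : ℝ → ℝ := fun x => p * F (x, t) ^ (1 + 1 / p) with ha
  have ha0 : 0 < a θ := mul_pos hp (Real.rpow_pos_of_pos (hpos θ) _)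
  have hpde' : (fun x => fderiv ℝ F (x, t) (0, 1)) =
      fun x => a x * (F (x, t) + F₁₁ (x, t)) - p * F (x, t) := by
    funext x
    rw [hpde x, show (2 : ℝ) + 1 / p = (1 + 1 / p) + 1 by ring, Real.rpow_add_one (hpos x).ne']
    simp only [ha, hF₁₁]
    ring
  obtain ⟨b, db⟩ : ∃ b, HasDerivAt a b θ :=
    ⟨_, ((d₀ θ).rpow_const (Or.inl (hpos θ).ne')).const_mul p⟩
  have hmixed : fderiv ℝ F₁ (θ, t) (0, 1) = a θ * (F₁ (θ, t) + w) - p * F₁ (θ, t) := by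
    rw [hF₁, fderiv_fderiv_apply_comm (hF θ)]
    have h₁ := hasDerivAt_fst_slice (hcF₂.differentiableAt (by simp))
    rw [hpde'] at h₁
    have h₂ := (db.mul ((d₀ θ).add d₂)).sub ((d₀ θ).const_mul p)
    have h₃ := h₁.unique h₂
    simp only [Pi.add_apply, hcrit] at h₃
    rw [h₃]
    ring
  have htime : fderiv ℝ F (θ, t) (0, 1) = -(p * F (θ, t)) := by
    rw [congrFun hpde' θ, hcrit]
    ring
  have e₀ := hasDerivAt_snd_slice ((hF θ).differentiableAt (by simp))
  have e₁ := hasDerivAt_snd_slice ((hcF₁ θ).differentiableAt (by simp))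
  refine ⟨_, ?_, (e₀.pow 2).add (e₁.pow 2)⟩
  rw [hmixed, htime]
  push_cast
  have h₁ : F₁ (θ, t) * (F₁ (θ, t) + w) ≤ 0 := by linarith
  have h₂ := mul_nonneg ha0.le (neg_nonneg.2 h₁)
  have h₃ : 0 < p * F (θ, t) ^ 2 := mul_pos hp (pow_pos (hpos θ) 2)
  have h₄ : 0 ≤ p * F₁ (θ, t) ^ 2 := by positivity
  norm_num
  linarith

/-- The spatial derivative of a function smooth up to the boundary of the half space
is jointly continuous up to the boundary. -/
theorem continuousOn_deriv_fst {K : ℝ → ℝ → ℝ}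
    (h : ContDiffOn ℝ (⊤ : ℕ∞) (fun q : ℝ × ℝ => K q.1 q.2) (univ ×ˢ Ici 0)) :
    ContinuousOn (fun q : ℝ × ℝ => deriv (fun x => K x q.2) q.1) (univ ×ˢ Ici 0) := by
  have hu : UniqueDiffOn ℝ ((univ : Set ℝ) ×ˢ Ici (0 : ℝ)) :=
    uniqueDiffOn_univ.prod (uniqueDiffOn_Ici 0)
  refine ((h.continuousOn_fderivWithin hu (by simp)).clm_apply
    (continuousOn_const (c := ((1, 0) : ℝ × ℝ)))).congr fun q hq => ?_
  have hd := ((h.differentiableOn (by simp)) q hq).hasFDerivWithinAt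
  have hl : HasDerivWithinAt (fun y : ℝ => ((y, q.2) : ℝ × ℝ)) (1, 0) univ q.1 :=
    ((hasDerivAt_id q.1).prodMk (hasDerivAt_const q.1 q.2)).hasDerivWithinAt
  have := hd.comp_hasDerivWithinAt q.1 hl fun y _ =>
    (⟨mem_univ _, hq.2⟩ : (y, q.2) ∈ (univ : Set ℝ) ×ˢ Ici (0 : ℝ))
  exact (hasDerivWithinAt_univ.1 this).deriv

theorem exists_forall_le_of_tendstoUniformly {K : ℝ → ℝ → ℝ}
    (hcont : ContinuousOn (fun q : ℝ × ℝ => K q.1 q.2) (univ ×ˢ Ici 0))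
    (hper : ∀ τ : ℝ, Function.Periodic (fun θ => K θ τ) (2 * π))
    (hconv : TendstoUniformly (fun τ θ => K θ τ) (fun _ => 1) atTop) :
    ∃ B, ∀ θ τ, 0 ≤ τ → K θ τ ≤ B := by
  obtain ⟨T, hT⟩ := eventually_atTop.1 (Metric.tendstoUniformly_iff.1 hconv 1 one_pos)
  obtain ⟨B, hB⟩ := (isCompact_Icc.prod isCompact_Icc).bddAbove_image
    (hcont.mono (Set.prod_mono (subset_univ (Icc 0 (2 * π)))
      (Icc_subset_Ici_self : Icc 0 T ⊆ Ici 0)))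
  refine ⟨max B 2, fun θ τ hτ => ?_⟩
  rcases le_total T τ with h | h
  · have := abs_lt.1 (Real.dist_eq _ _ ▸ hT τ h θ)
    exact le_max_of_le_right (by linarith [this.1])
  · obtain ⟨y, hy, hyθ⟩ := (hper τ).exists_mem_Ico₀ two_pi_pos θ
    rw [hyθ]
    have hyτ : (y, τ) ∈ Icc 0 (2 * π) ×ˢ Icc 0 T := ⟨⟨hy.1, hy.2.le⟩, hτ, h⟩
    exact le_max_of_le_left (hB ⟨(y, τ), hyτ, rfl⟩)

/-- Maximum principle for `K ^ 2 + (∂K) ^ 2`. -/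
theorem exists_forall_deriv_sq_le
    (p : ℝ) (hp : 1 ≤ p) (K : ℝ → ℝ → ℝ)
    (hsmooth : ContDiffOn ℝ (⊤ : ℕ∞) (fun q : ℝ × ℝ => K q.1 q.2) (univ ×ˢ Ici 0))
    (hper : ∀ τ : ℝ, Function.Periodic (fun θ => K θ τ) (2 * π))
    (hpos : ∀ θ τ : ℝ, 0 ≤ τ → 0 < K θ τ)
    (hpde : ∀ θ : ℝ, ∀ τ ∈ Ioi (0:ℝ),
      deriv (fun s => K θ s) τ =
        p * K θ τ ^ (1 + 1 / p) * deriv (deriv (fun x => K x τ)) θ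
          + p * K θ τ ^ (2 + 1 / p) - p * K θ τ)
    (hconv : TendstoUniformly (fun τ θ => K θ τ) (fun _ => 1) atTop) :
    ∃ M : ℝ, 0 < M ∧ ∀ θ τ : ℝ, 0 ≤ τ → deriv (fun x => K x τ) θ ^ 2 ≤ M := by
  set F : ℝ × ℝ → ℝ := fun q => K q.1 q.2 with hF
  obtain ⟨B, hB⟩ := exists_forall_le_of_tendstoUniformly hsmooth.continuousOn hper hconv
  set ψ : ℝ × ℝ → ℝ := fun q => K q.1 q.2 ^ 2 + deriv (fun x => K x q.2) q.1 ^ 2 with hψ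
  have hψc : ContinuousOn ψ (univ ×ˢ Ici 0) :=
    (hsmooth.continuousOn.pow 2).add ((continuousOn_deriv_fst hsmooth).pow 2)
  have hψper : ∀ τ, Function.Periodic (fun θ => ψ (θ, τ)) (2 * π) := fun τ θ => by
    have h₁ := hper τ θ
    have h₂ : deriv (fun x => K x τ) (θ + 2 * π) = deriv (fun x => K x τ) θ := by
      rw [← deriv_comp_add_const, funext (hper τ)]
    simp only [hψ] at h₁ ⊢
    rw [h₁, h₂]
  obtain ⟨A, hA⟩ := (isCompact_Icc.prod isCompact_singleton).bddAbove_image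
    (hψc.mono (Set.prod_mono (subset_univ (Icc 0 (2 * π)))
      (singleton_subset_iff.2 (self_mem_Ici (a := (0 : ℝ))))))
  set M := max A (B ^ 2) + 1 with hM
  have hM0 : 0 < M := by positivity
  refine ⟨M, hM0, fun θ T hT => ?_⟩
  suffices h : ψ (θ, T) ≤ M from le_trans (le_add_of_nonneg_left (sq_nonneg _)) h
  by_contra! hlt
  obtain ⟨y, hy, hyθ⟩ := (hψper T).exists_mem_Ico₀ two_pi_pos θ
  have hyT : (y, T) ∈ Icc 0 (2 * π) ×ˢ Icc 0 T := ⟨⟨hy.1, hy.2.le⟩, hT, le_rfl⟩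
  obtain ⟨⟨x₀, t₀⟩, ⟨hx₀, ht₀⟩, hmax⟩ := (isCompact_Icc.prod isCompact_Icc).exists_isMaxOn
    ⟨_, hyT⟩ (hψc.mono (Set.prod_mono (subset_univ (Icc 0 (2 * π)))
      (Icc_subset_Ici_self : Icc 0 T ⊆ Ici 0)))
  simp only at hx₀ ht₀
  have hbig : M < ψ (x₀, t₀) := hlt.trans_le (hyθ.trans_le (hmax hyT))
  have ht₀pos : 0 < t₀ := by
    refine lt_of_le_of_ne ht₀.1 ?_
    rintro rfl
    have : ψ (x₀, 0) ≤ A := hA (mem_image_of_mem _ (⟨hx₀, rfl⟩ :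
      (x₀, (0 : ℝ)) ∈ Icc 0 (2 * π) ×ˢ {(0 : ℝ)}))
    linarith [le_max_left A (B ^ 2)]
  have hsm : ∀ x s : ℝ, 0 < s → ContDiffAt ℝ (⊤ : ℕ∞) F (x, s) := fun x s hs =>
    hsmooth.contDiffAt (prod_mem_nhds univ_mem (Ici_mem_nhds hs))
  have hderiv : ∀ x s : ℝ, 0 < s → deriv (fun y => K y s) x = fderiv ℝ F (x, s) (1, 0) :=
    fun x s hs => (hasDerivAt_fst_slice ((hsm x s hs).differentiableAt (by simp))).deriv
  have hψF : ∀ x s : ℝ, 0 < s → ψ (x, s) = F (x, s) ^ 2 + fderiv ℝ F (x, s) (1, 0) ^ 2 :=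
    fun x s hs => by simp only [hψ, hF, hderiv x s hs]
  obtain ⟨c, hc, hdc⟩ := exists_hasDerivAt_sq_add_sq_neg (p := p) (θ := x₀) (by linarith)
    (fun x => hsm x t₀ ht₀pos) (fun x => hpos x t₀ ht₀pos.le)
    (fun x => by
      rw [← (hasDerivAt_snd_slice ((hsm x t₀ ht₀pos).differentiableAt (by simp))).deriv,
        ← (hasDerivAt_fst_slice
          (((hsm x t₀ ht₀pos).fderiv_apply_const (1, 0)).differentiableAt (by simp))).deriv,
        ← funext fun y => hderiv y t₀ ht₀pos]
      exact hpde x t₀ ht₀pos)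
    (fun x => by
      rw [← hψF x t₀ ht₀pos, ← hψF x₀ t₀ ht₀pos]
      obtain ⟨z, hz, hzx⟩ := (hψper t₀).exists_mem_Ico₀ two_pi_pos x
      exact hzx.trans_le (hmax (⟨⟨hz.1, hz.2.le⟩, ht₀⟩ :
        (z, t₀) ∈ Icc 0 (2 * π) ×ˢ Icc 0 T)))
    (fun h₀ => by
      rw [hψF x₀ t₀ ht₀pos, h₀] at hbig
      have h₁ : F (x₀, t₀) ^ 2 ≤ B ^ 2 :=
        pow_le_pow_left₀ (hpos x₀ t₀ ht₀pos.le).le (hB x₀ t₀ ht₀pos.le) 2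
      have h₂ := le_max_right A (B ^ 2)
      simp only [ne_eq, OfNat.ofNat_ne_zero, not_false_eq_true, zero_pow] at hbig
      linarith)
  refine hc.not_ge (hdc.nonneg_of_forall_left_le (half_lt_self ht₀pos) fun s hs => ?_)
  have hs0 : 0 < s := (half_pos ht₀pos).trans_le hs.1
  rw [← hψF x₀ s hs0, ← hψF x₀ t₀ ht₀pos]
  exact hmax (⟨hx₀, hs0.le, hs.2.trans ht₀.2⟩ : (x₀, s) ∈ Icc 0 (2 * π) ×ˢ Icc 0 T)

theorem rpow_intervalIntegral_le {f : ℝ → ℝ} {a b c r : ℝ} (hab : a ≤ b) (hr : 0 ≤ r)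
    (h₀ : ∀ x, 0 ≤ f x) (hc : ∀ x, f x ≤ c) :
    (∫ x in a..b, f x) ^ r ≤ (c * (b - a)) ^ r := by
  refine Real.rpow_le_rpow (intervalIntegral.integral_nonneg hab fun x _ => h₀ x) ?_ hr
  have := intervalIntegral.norm_integral_le_of_norm_le_const (a := a) (b := b) (f := f) (C := c)
    fun x _ => by rw [Real.norm_of_nonneg (h₀ x)]; exact hc x
  rw [abs_of_nonneg (sub_nonneg.2 hab)] at this
  exact (le_abs_self _).trans this

/-- Lemma 3.1: uniform-in-time `L²` and `L⁴` bounds on the first angular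
derivative of the normalized curvature. -/
theorem first_derivative_L2_L4_bounds
    (p : ℝ) (hp : 1 ≤ p) (K : ℝ → ℝ → ℝ)
    (hsmooth : ContDiffOn ℝ (⊤ : ℕ∞) (fun q : ℝ × ℝ => K q.1 q.2) (univ ×ˢ Ici 0))
    (hper : ∀ τ : ℝ, Function.Periodic (fun θ => K θ τ) (2 * π))
    (hpos : ∀ θ τ : ℝ, 0 ≤ τ → 0 < K θ τ)
    (hpde : ∀ θ : ℝ, ∀ τ ∈ Ioi (0:ℝ),
      deriv (fun s => K θ s) τ =
        p * K θ τ ^ (1 + 1 / p) * deriv (deriv (fun x => K x τ)) θ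
          + p * K θ τ ^ (2 + 1 / p) - p * K θ τ)
    (hconv : TendstoUniformly (fun τ θ => K θ τ) (fun _ => 1) atTop) :
    ∃ C : ℝ, 0 < C ∧ ∀ τ : ℝ, 0 ≤ τ →
      (∫ θ in (0:ℝ)..(2 * π), (deriv (fun x => K x τ) θ) ^ 2) ^ ((1:ℝ) / 2) ≤ C ∧
      (∫ θ in (0:ℝ)..(2 * π), (deriv (fun x => K x τ) θ) ^ 4) ^ ((1:ℝ) / 4) ≤ C := by
  obtain ⟨M, hM, hb⟩ := exists_forall_deriv_sq_le p hp K hsmooth hper hpos hpde hconv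
  set C₂ := (M * (2 * π - 0)) ^ ((1:ℝ) / 2)
  set C₄ := (M ^ 2 * (2 * π - 0)) ^ ((1:ℝ) / 4)
  refine ⟨max C₂ C₄ + 1, ?_, fun τ hτ => ⟨?_, ?_⟩⟩
  · have : 0 ≤ C₂ := Real.rpow_nonneg (mul_nonneg hM.le (by linarith [two_pi_pos])) _
    linarith [le_max_left C₂ C₄]
  · have := rpow_intervalIntegral_le (r := (1:ℝ) / 2) two_pi_pos.le (by norm_num)
      (fun θ => sq_nonneg (deriv (fun x => K x τ) θ)) (fun θ => hb θ τ hτ)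
    linarith [le_max_left C₂ C₄]
  · have := rpow_intervalIntegral_le (f := fun θ => deriv (fun x => K x τ) θ ^ 4) (c := M ^ 2)
      (r := (1:ℝ) / 4) two_pi_pos.le (by norm_num) (fun θ => by positivity) fun θ => by
        calc deriv (fun x => K x τ) θ ^ 4 = (deriv (fun x => K x τ) θ ^ 2) ^ 2 := by ring
          _ ≤ M ^ 2 := pow_le_pow_left₀ (sq_nonneg _) (hb θ τ hτ) 2
    linarith [le_max_right C₂ C₄]
end

section
/- Let p ≥ 1 be a real number. Let k̃ : ℝ × [0,∞) → ℝ be a smooth function, 2π-periodic in its first (angular) variable θ, with k̃(θ,τ) > 0 everywhere, satisfying the rescaled curve-shortening equation ∂k̃/∂τ = p·k̃^{1+1/p}·∂²k̃/∂θ² + p·k̃^{2+1/p} − p·k̃ on ℝ × (0,∞), and suppose sup_θ |k̃(θ,τ) − 1| → 0 as τ → ∞. Then there exists a constant C₂ > 0, depending only on p and the initial data k̃(·,0), such that for all τ ≥ 0: (∫₀^{2π} (∂²k̃/∂θ²)² dθ)^{1/2} ≤ C₂. -/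
open Real Filter Set

/-- The function `x ↦ x * |x|` is differentiable with derivative `2 * |x|`. -/
theorem hasDerivAt_mul_abs_self (x : ℝ) : HasDerivAt (fun y : ℝ => y * |y|) (2 * |x|) x := by
  rcases eq_or_ne x 0 with rfl | hx
  · rw [hasDerivAt_iff_isLittleO]
    simp only [abs_zero, mul_zero, sub_zero, smul_eq_mul]
    have h1 : Tendsto (fun y : ℝ => |y|) (nhds 0) (nhds 0) := by
      simpa using (continuous_abs.tendsto (0 : ℝ))
    have h2 := (Asymptotics.isBigO_refl (fun y : ℝ => y) (nhds 0)).mul_isLittleO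
      ((Asymptotics.isLittleO_one_iff ℝ).2 h1)
    simpa using h2
  · have h := (hasDerivAt_id x).mul (hasDerivAt_abs hx)
    refine h.congr_deriv ?_
    rcases lt_or_gt_of_ne hx with h0 | h0
    · simp [h0, abs_of_neg h0]; ring
    · simp [h0, abs_of_pos h0]; ring

/-- Weighted Young inequality. -/
theorem mul_le_young {c M x y : ℝ} (hc : 0 < c) :
    M * (x * y) ≤ c / 2 * y ^ 2 + M ^ 2 / (2 * c) * x ^ 2 := by
  have h : c / 2 * y ^ 2 + M ^ 2 / (2 * c) * x ^ 2 - M * (x * y) = (c * y - M * x) ^ 2 / (2 * c) := by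
    field_simp
    ring
  have : 0 ≤ (c * y - M * x) ^ 2 / (2 * c) := by positivity
  linarith

/-- Pointwise dissipation inequality: the last three summands on the right form an exact derivative
when `u₁, u₂, u₃` are the successive derivatives of `u₀`. -/
theorem dissipation_pointwise {c C₁ C₂ ε : ℝ} (hc : 0 < c) (hC₁ : 0 ≤ C₁) (hC₂ : 0 ≤ C₂)
    (hε1 : ε ≤ 1) (hεN : 4 * ((C₁ + 1) ^ 2 / (2 * c)) * ε ≤ 1)
    {u₀ u₁ u₂ u₃ A B G : ℝ} (hu₀ : |u₀| ≤ ε) (hA : c ≤ A) (hB : |B| ≤ C₁) (hG : |G| ≤ C₂) :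
    -(u₃ * (A * u₃ + B * (u₁ * u₂) + G * u₁)) + u₂ ^ 2 / 2 ≤
      ((C₂ + 1) ^ 2 / (2 * c)) ^ 2 / 2
      + ((C₂ + 1) ^ 2 / (2 * c)) * (u₁ ^ 2 + u₀ * u₂)
      + (u₂ ^ 2 + u₁ * u₃)
      + ((C₁ + 1) ^ 2 / (2 * c)) * (u₁ ^ 2 * u₂ ^ 2 + u₀ * (u₂ ^ 3 + 2 * (u₁ * u₂ * u₃))
          + ε * (u₂ ^ 2 * |u₂| + 2 * (u₁ * |u₂| * u₃))) := by
  set N := (C₁ + 1) ^ 2 / (2 * c) with hN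
  set a := (C₂ + 1) ^ 2 / (2 * c) with ha
  have hN0 : 0 ≤ N := by positivity
  have ha0 : 0 ≤ a := by positivity
  have hε0 : 0 ≤ ε := (abs_nonneg _).trans hu₀
  have young₁ := mul_le_young (M := C₁ + 1) (x := |u₁ * u₂|) (y := |u₃|) hc
  have young₂ := mul_le_young (M := C₂ + 1) (x := |u₁|) (y := |u₃|) hc
  rw [← hN] at young₁
  rw [← ha] at young₂
  simp only [sq_abs] at young₁ young₂
  have hAu : c * u₃ ^ 2 ≤ A * u₃ ^ 2 := by gcongr
  have hBu : -(B * (u₁ * u₂ * u₃)) ≤ C₁ * (|u₁ * u₂| * |u₃|) := by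
    calc -(B * (u₁ * u₂ * u₃)) ≤ |B * (u₁ * u₂ * u₃)| := neg_le_abs _
      _ = |B| * (|u₁ * u₂| * |u₃|) := by simp only [abs_mul]
      _ ≤ _ := by gcongr
  have hGu : -(G * (u₁ * u₃)) ≤ C₂ * (|u₁| * |u₃|) := by
    calc -(G * (u₁ * u₃)) ≤ |G * (u₁ * u₃)| := neg_le_abs _
      _ = |G| * (|u₁| * |u₃|) := by simp only [abs_mul]
      _ ≤ _ := by gcongr
  have hflux₁ : -(u₁ * u₃) ≤ |u₁| * |u₃| := by
    rw [← abs_mul]; exact neg_le_abs _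
  have hcube : 0 ≤ N * (u₀ * u₂ ^ 3 + ε * (u₂ ^ 2 * |u₂|)) := by
    refine mul_nonneg hN0 ?_
    have h : -(u₀ * u₂ ^ 3) ≤ ε * (u₂ ^ 2 * |u₂|) := by
      calc -(u₀ * u₂ ^ 3) ≤ |u₀ * u₂ ^ 3| := neg_le_abs _
        _ = |u₀| * (u₂ ^ 2 * |u₂|) := by rw [abs_mul, abs_pow, ← sq_abs u₂]; ring
        _ ≤ _ := by gcongr
    linarith
  have hcross : -(2 * (u₀ * (u₁ * u₂ * u₃)) + 2 * (ε * (u₁ * |u₂| * u₃)))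
      ≤ 4 * ε * (|u₁ * u₂| * |u₃|) := by
    have h₁ : -(u₀ * (u₁ * u₂ * u₃)) ≤ ε * (|u₁ * u₂| * |u₃|) := by
      calc -(u₀ * (u₁ * u₂ * u₃)) ≤ |u₀ * (u₁ * u₂ * u₃)| := neg_le_abs _
        _ = |u₀| * (|u₁ * u₂| * |u₃|) := by simp only [abs_mul]
        _ ≤ _ := by gcongr
    have h₂ : -(ε * (u₁ * |u₂| * u₃)) ≤ ε * (|u₁ * u₂| * |u₃|) := by
      calc -(ε * (u₁ * |u₂| * u₃)) ≤ |ε * (u₁ * |u₂| * u₃)| := neg_le_abs _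
        _ = ε * (|u₁ * u₂| * |u₃|) := by simp only [abs_mul, abs_abs, abs_of_nonneg hε0]
    linarith
  have hcrossN := mul_le_mul_of_nonneg_left hcross hN0
  have hsmall : 4 * N * ε * (|u₁ * u₂| * |u₃|) ≤ 1 * (|u₁ * u₂| * |u₃|) := by gcongr
  have hlow : u₂ ^ 2 / 2 ≤ a ^ 2 / 2 + a * (u₀ * u₂) + u₂ ^ 2 := by
    have h : u₀ ^ 2 ≤ 1 := by
      rw [← sq_abs]
      nlinarith [abs_nonneg u₀]
    nlinarith [sq_nonneg (a * u₀ + u₂), mul_le_mul_of_nonneg_left h (sq_nonneg a)]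
  linarith

/-- Integrated dissipation inequality for functions with matching boundary values on `[0, L]`. -/
theorem integral_dissipation_le {c C₁ C₂ ε L : ℝ} (hL : 0 ≤ L)
    (hc : 0 < c) (hC₁ : 0 ≤ C₁) (hC₂ : 0 ≤ C₂)
    (hε1 : ε ≤ 1) (hεN : 4 * ((C₁ + 1) ^ 2 / (2 * c)) * ε ≤ 1)
    {u₀ u₁ u₂ u₃ A B G : ℝ → ℝ}
    (h₀ : ∀ x, HasDerivAt u₀ (u₁ x) x) (h₁ : ∀ x, HasDerivAt u₁ (u₂ x) x)
    (h₂ : ∀ x, HasDerivAt u₂ (u₃ x) x) (h₃ : Continuous u₃)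
    (hAc : Continuous A) (hBc : Continuous B) (hGc : Continuous G)
    (hp₀ : u₀ L = u₀ 0) (hp₁ : u₁ L = u₁ 0) (hp₂ : u₂ L = u₂ 0)
    (hu₀ : ∀ x, |u₀ x| ≤ ε) (hA : ∀ x, c ≤ A x) (hB : ∀ x, |B x| ≤ C₁) (hG : ∀ x, |G x| ≤ C₂) :
    2 * (∫ x in (0 : ℝ)..L, -(u₃ x * (A x * u₃ x + B x * (u₁ x * u₂ x) + G x * u₁ x)))
      ≤ -(∫ x in (0 : ℝ)..L, u₂ x ^ 2) + L * ((C₂ + 1) ^ 2 / (2 * c)) ^ 2 := by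
  set N := (C₁ + 1) ^ 2 / (2 * c) with hN
  set a := (C₂ + 1) ^ 2 / (2 * c) with ha
  have c₀ : Continuous u₀ := continuous_iff_continuousAt.2 fun x => (h₀ x).continuousAt
  have c₁ : Continuous u₁ := continuous_iff_continuousAt.2 fun x => (h₁ x).continuousAt
  have c₂ : Continuous u₂ := continuous_iff_continuousAt.2 fun x => (h₂ x).continuousAt
  let Φ : ℝ → ℝ := fun x => a * (u₀ x * u₁ x) + u₁ x * u₂ x
    + N * (u₀ x * (u₁ x * u₂ x ^ 2) + ε * (u₁ x * (u₂ x * |u₂ x|)))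
  let φ : ℝ → ℝ := fun x => a * (u₁ x ^ 2 + u₀ x * u₂ x) + (u₂ x ^ 2 + u₁ x * u₃ x)
    + N * (u₁ x ^ 2 * u₂ x ^ 2 + u₀ x * (u₂ x ^ 3 + 2 * (u₁ x * u₂ x * u₃ x))
      + ε * (u₂ x ^ 2 * |u₂ x| + 2 * (u₁ x * |u₂ x| * u₃ x)))
  have hΦ : ∀ x, HasDerivAt Φ (φ x) x := by
    intro x
    have habs : HasDerivAt (fun x => u₂ x * |u₂ x|) (2 * |u₂ x| * u₃ x) x :=
      (hasDerivAt_mul_abs_self (u₂ x)).comp x (h₂ x)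
    have h := ((((h₀ x).mul (h₁ x)).const_mul a).add ((h₁ x).mul (h₂ x))).add
      ((((h₀ x).mul ((h₁ x).mul ((h₂ x).pow 2))).add
        (((h₁ x).mul habs).const_mul ε)).const_mul N)
    refine h.congr_deriv ?_
    simp only [φ, Pi.mul_apply, Pi.pow_apply]
    push_cast
    ring
  have hφc : Continuous φ := by fun_prop
  have hφ : ∫ x in (0 : ℝ)..L, φ x = 0 := by
    rw [intervalIntegral.integral_eq_sub_of_hasDerivAt (fun x _ => hΦ x)
      (hφc.intervalIntegrable _ _)]
    simp only [Φ, hp₀, hp₁, hp₂, sub_self]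
  have hmono : ∫ x in (0 : ℝ)..L,
        (-(u₃ x * (A x * u₃ x + B x * (u₁ x * u₂ x) + G x * u₁ x)) + (1 / 2) * u₂ x ^ 2)
      ≤ ∫ x in (0 : ℝ)..L, (a ^ 2 / 2 + φ x) := by
    refine intervalIntegral.integral_mono_on hL
      (Continuous.intervalIntegrable (by fun_prop) _ _)
      (Continuous.intervalIntegrable (by fun_prop) _ _) fun x _ => ?_
    have h := dissipation_pointwise (u₁ := u₁ x) (u₂ := u₂ x) (u₃ := u₃ x)
      hc hC₁ hC₂ hε1 hεN (hu₀ x) (hA x) (hB x) (hG x)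
    simp only [φ]
    linarith
  rw [intervalIntegral.integral_add (Continuous.intervalIntegrable (by fun_prop) _ _)
      (Continuous.intervalIntegrable (by fun_prop) _ _),
    intervalIntegral.integral_add (Continuous.intervalIntegrable (by fun_prop) _ _)
      (Continuous.intervalIntegrable (by fun_prop) _ _), hφ,
    intervalIntegral.integral_const_mul, intervalIntegral.integral_const] at hmono
  simp only [smul_eq_mul, sub_zero] at hmono
  linarith

/-- A nonnegative function with `y' ≤ -y + M` beyond `T` stays below `y T + M`. -/
theorem le_add_of_deriv_le_neg_add {y y' : ℝ → ℝ} {T M : ℝ} (hM : 0 ≤ M) (hyT : 0 ≤ y T)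
    (hy : ∀ t, T ≤ t → HasDerivAt y (y' t) t) (hle : ∀ t, T ≤ t → y' t ≤ -y t + M)
    {t : ℝ} (ht : T ≤ t) : y t ≤ y T + M := by
  have hd : ∀ s, T ≤ s → HasDerivAt (fun s => exp (s - T) * (y s - M))
      (exp (s - T) * (y s - M) + exp (s - T) * y' s) s := by
    intro s hs
    have h := (((hasDerivAt_id s).sub_const T).exp).mul ((hy s hs).sub_const M)
    refine h.congr_deriv ?_
    simp
  have hanti : AntitoneOn (fun s => exp (s - T) * (y s - M)) (Ici T) := by
    refine antitoneOn_of_deriv_nonpos (convex_Ici T)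
      (fun s hs => (hd s hs).continuousAt.continuousWithinAt)
      (fun s hs => (hd s (interior_subset hs)).differentiableAt.differentiableWithinAt) ?_
    intro s hs
    rw [(hd s (interior_subset hs)).deriv, ← mul_add]
    have := hle s (interior_subset hs)
    exact mul_nonpos_of_nonneg_of_nonpos (exp_pos _).le (by linarith)
  have h := hanti self_mem_Ici ht ht
  simp only [sub_self, exp_zero, one_mul] at h
  have h1 : 1 ≤ exp (t - T) := one_le_exp (by linarith)
  by_contra! hcon
  have : 1 * (y t - M) ≤ exp (t - T) * (y t - M) :=
    mul_le_mul_of_nonneg_right h1 (by linarith)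
  linarith

/-- The derivative of `f` within the closed half-plane `ℝ × [0, ∞)` in the direction `v`. -/
noncomputable def halfPlaneDeriv (v : ℝ × ℝ) (f : ℝ × ℝ → ℝ) (q : ℝ × ℝ) : ℝ :=
  fderivWithin ℝ f (univ ×ˢ Ici 0) q v

theorem uniqueDiffOn_halfPlane : UniqueDiffOn ℝ ((univ : Set ℝ) ×ˢ Ici (0 : ℝ)) :=
  uniqueDiffOn_univ.prod (uniqueDiffOn_Ici 0)

theorem ContDiffOn.halfPlaneDeriv {f : ℝ × ℝ → ℝ}
    (hf : ContDiffOn ℝ (⊤ : ℕ∞) f (univ ×ˢ Ici 0)) (v : ℝ × ℝ) :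
    ContDiffOn ℝ (⊤ : ℕ∞) (halfPlaneDeriv v f) (univ ×ˢ Ici 0) :=
  (hf.fderivWithin uniqueDiffOn_halfPlane (by simp)).clm_apply contDiffOn_const

theorem hasDerivAt_fst_halfPlane {f : ℝ × ℝ → ℝ}
    (hf : ContDiffOn ℝ (⊤ : ℕ∞) f (univ ×ˢ Ici 0)) {τ : ℝ} (hτ : 0 ≤ τ) (θ : ℝ) :
    HasDerivAt (fun x => f (x, τ)) (halfPlaneDeriv (1, 0) f (θ, τ)) θ := by
  have h := ((hf.differentiableOn (by simp)) (θ, τ) ⟨mem_univ _, hτ⟩).hasFDerivWithinAt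
  have hg : HasDerivWithinAt (fun x : ℝ => (x, τ)) ((1 : ℝ), (0 : ℝ)) univ θ :=
    ((hasDerivAt_id θ).prodMk (hasDerivAt_const θ τ)).hasDerivWithinAt
  have hmaps : MapsTo (fun x : ℝ => (x, τ)) univ (univ ×ˢ Ici 0) := fun _ _ => ⟨mem_univ _, hτ⟩
  exact hasDerivWithinAt_univ.1 (h.comp_hasDerivWithinAt θ hg hmaps)

theorem hasDerivAt_snd_halfPlane {f : ℝ × ℝ → ℝ}
    (hf : ContDiffOn ℝ (⊤ : ℕ∞) f (univ ×ˢ Ici 0)) (θ : ℝ) {τ : ℝ} (hτ : 0 < τ) :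
    HasDerivAt (fun s => f (θ, s)) (halfPlaneDeriv (0, 1) f (θ, τ)) τ := by
  have h := ((hf.differentiableOn (by simp)) (θ, τ) ⟨mem_univ _, hτ.le⟩).hasFDerivWithinAt
  have hg : HasDerivWithinAt (fun s : ℝ => (θ, s)) ((0 : ℝ), (1 : ℝ)) (Ici 0) τ :=
    ((hasDerivAt_const τ θ).prodMk (hasDerivAt_id τ)).hasDerivWithinAt
  have hmaps : MapsTo (fun s : ℝ => (θ, s)) (Ici 0) (univ ×ˢ Ici 0) := fun _ hs => ⟨mem_univ _, hs⟩
  exact (h.comp_hasDerivWithinAt τ hg hmaps).hasDerivAt (Ici_mem_nhds hτ)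

theorem halfPlaneDeriv_comm {f : ℝ × ℝ → ℝ}
    (hf : ContDiffOn ℝ (⊤ : ℕ∞) f (univ ×ˢ Ici 0)) (v w : ℝ × ℝ) :
    EqOn (halfPlaneDeriv v (halfPlaneDeriv w f)) (halfPlaneDeriv w (halfPlaneDeriv v f))
      (univ ×ˢ Ici 0) := by
  intro q hq
  have key : ∀ v w : ℝ × ℝ, halfPlaneDeriv v (halfPlaneDeriv w f) q =
      fderivWithin ℝ (fderivWithin ℝ f (univ ×ˢ Ici 0)) (univ ×ˢ Ici 0) q v w := by
    intro v w
    have hd : DifferentiableWithinAt ℝ (fderivWithin ℝ f (univ ×ˢ Ici 0)) (univ ×ˢ Ici 0) q :=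
      (hf.fderivWithin (m := (⊤ : ℕ∞)) uniqueDiffOn_halfPlane (by simp)).differentiableOn
        (by simp) q hq
    have h := (hd.hasFDerivWithinAt.clm_apply (hasFDerivWithinAt_const w q _)).fderivWithin
      (uniqueDiffOn_halfPlane q hq)
    change fderivWithin ℝ (fun z => fderivWithin ℝ f (univ ×ˢ Ici 0) z w) _ q v = _
    rw [h]
    simp
  rw [key, key]
  refine ((hf q hq).isSymmSndFDerivWithinAt ?_ uniqueDiffOn_halfPlane ?_ hq).eq v w
  · rw [minSmoothness_of_isRCLikeNormedField]
    exact WithTop.coe_le_coe.2 (le_top : (2 : ℕ∞) ≤ ⊤)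
  have hcl : closure (interior ((univ : Set ℝ) ×ˢ Ici (0 : ℝ))) = univ ×ˢ Ici 0 := by
    rw [interior_prod_eq, closure_prod_eq]
    simp
  rw [hcl]
  exact hq

theorem halfPlaneDeriv_congr {f g : ℝ × ℝ → ℝ} (h : EqOn f g (univ ×ˢ Ici 0)) (v : ℝ × ℝ) :
    EqOn (halfPlaneDeriv v f) (halfPlaneDeriv v g) (univ ×ˢ Ici 0) := fun q hq => by
  simp only [halfPlaneDeriv, fderivWithin_congr h (h hq)]

theorem halfPlaneDeriv_fst_periodic {f : ℝ × ℝ → ℝ} {L τ : ℝ}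
    (hf : ContDiffOn ℝ (⊤ : ℕ∞) f (univ ×ˢ Ici 0)) (hτ : 0 ≤ τ)
    (hper : Function.Periodic (fun θ => f (θ, τ)) L) :
    Function.Periodic (fun θ => halfPlaneDeriv (1, 0) f (θ, τ)) L := by
  intro θ
  have h := (hasDerivAt_fst_halfPlane hf hτ (θ + L)).comp_add_const θ L
  exact h.unique ((hasDerivAt_fst_halfPlane hf hτ θ).congr_of_eventuallyEq
    (Eventually.of_forall hper))

theorem continuous_fst_of_halfPlane {f : ℝ × ℝ → ℝ}
    (hf : ContDiffOn ℝ (⊤ : ℕ∞) f (univ ×ˢ Ici 0)) {τ : ℝ} (hτ : 0 ≤ τ) :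
    Continuous fun θ => f (θ, τ) :=
  continuous_iff_continuousAt.2 fun θ => (hasDerivAt_fst_halfPlane hf hτ θ).continuousAt

theorem exists_abs_le_of_halfPlane {f : ℝ × ℝ → ℝ}
    (hf : ContDiffOn ℝ (⊤ : ℕ∞) f (univ ×ˢ Ici 0)) (L T : ℝ) :
    ∃ M, 0 ≤ M ∧ ∀ θ ∈ Icc 0 L, ∀ τ ∈ Icc 0 T, |f (θ, τ)| ≤ M := by
  obtain ⟨M, hM⟩ := (isCompact_Icc.prod isCompact_Icc).exists_bound_of_continuousOn
    (s := Icc 0 L ×ˢ Icc 0 T) (hf.continuousOn.mono fun q hq => ⟨mem_univ _, hq.2.1⟩)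
  exact ⟨max M 0, le_max_right _ _, fun θ hθ τ hτ => (hM (θ, τ) ⟨hθ, hτ⟩).trans (le_max_left _ _)⟩

/-- Differentiation of the square integral over `[0, L]` with respect to the second variable. -/
theorem hasDerivAt_integral_sq_halfPlane {f : ℝ × ℝ → ℝ}
    (hf : ContDiffOn ℝ (⊤ : ℕ∞) f (univ ×ˢ Ici 0)) {L τ : ℝ} (hL : 0 ≤ L) (hτ : 0 < τ) :
    HasDerivAt (fun s => ∫ θ in (0 : ℝ)..L, f (θ, s) ^ 2)
      (∫ θ in (0 : ℝ)..L, 2 * (f (θ, τ) * halfPlaneDeriv (0, 1) f (θ, τ))) τ := by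
  obtain ⟨M, hM0, hM⟩ := exists_abs_le_of_halfPlane hf L (τ + 1)
  obtain ⟨M', hM0', hM'⟩ := exists_abs_le_of_halfPlane (hf.halfPlaneDeriv (0, 1)) L (τ + 1)
  have hnhds : Ioo 0 (τ + 1) ∈ nhds τ := Ioo_mem_nhds hτ (by linarith)
  refine (intervalIntegral.hasDerivAt_integral_of_dominated_loc_of_deriv_le
    (F := fun s θ => f (θ, s) ^ 2)
    (F' := fun s θ => 2 * (f (θ, s) * halfPlaneDeriv (0, 1) f (θ, s)))
    (bound := fun _ => 2 * (M * M')) hnhds ?_ ?_ ?_ ?_ ?_ ?_).2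
  · filter_upwards [hnhds] with s hs
    exact ((continuous_fst_of_halfPlane hf hs.1.le).pow 2).aestronglyMeasurable
  · exact ((continuous_fst_of_halfPlane hf hτ.le).pow 2).intervalIntegrable _ _
  · exact (continuous_const.mul ((continuous_fst_of_halfPlane hf hτ.le).mul
      (continuous_fst_of_halfPlane (hf.halfPlaneDeriv (0, 1)) hτ.le))).aestronglyMeasurable
  · refine Eventually.of_forall fun θ hθ s hs => ?_
    rw [uIoc_of_le hL] at hθ
    have h1 := hM θ ⟨hθ.1.le, hθ.2⟩ s ⟨hs.1.le, hs.2.le⟩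
    have h2 := hM' θ ⟨hθ.1.le, hθ.2⟩ s ⟨hs.1.le, hs.2.le⟩
    rw [norm_eq_abs, abs_mul, abs_mul, abs_two]
    gcongr
  · exact intervalIntegrable_const
  · refine Eventually.of_forall fun θ _ s hs => ?_
    refine ((hasDerivAt_snd_halfPlane hf θ hs.1).pow 2).congr_deriv ?_
    push_cast
    ring

/-- Derivative in time of the square integral of the second space derivative of a solution of
`∂ₜ f = R`, after one integration by parts. -/
theorem hasDerivAt_integral_sq_second_halfPlaneDeriv {f : ℝ × ℝ → ℝ} {L τ : ℝ} {H : ℝ → ℝ}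
    (hf : ContDiffOn ℝ (⊤ : ℕ∞) f (univ ×ˢ Ici 0)) (hL : 0 ≤ L) (hτ : 0 < τ)
    (hper : Function.Periodic (fun θ => f (θ, τ)) L) (hHper : H L = H 0)
    (hH : ∀ θ, HasDerivAt (fun x => halfPlaneDeriv (0, 1) f (x, τ)) (H θ) θ) :
    HasDerivAt
      (fun s => ∫ θ in (0 : ℝ)..L, halfPlaneDeriv (1, 0) (halfPlaneDeriv (1, 0) f) (θ, s) ^ 2)
      (2 * ∫ θ in (0 : ℝ)..L,
        -(halfPlaneDeriv (1, 0) (halfPlaneDeriv (1, 0) (halfPlaneDeriv (1, 0) f)) (θ, τ) * H θ))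
      τ := by
  have hf₁ := hf.halfPlaneDeriv (1, 0)
  have hf₂ := hf₁.halfPlaneDeriv (1, 0)
  have hf₃ := hf₂.halfPlaneDeriv (1, 0)
  have hft := hf.halfPlaneDeriv (0, 1)
  have hft₁ := hft.halfPlaneDeriv (1, 0)
  have hft₂ := hft₁.halfPlaneDeriv (1, 0)
  have hHeq : (fun θ => halfPlaneDeriv (1, 0) (halfPlaneDeriv (0, 1) f) (θ, τ)) = H :=
    funext fun θ => (hasDerivAt_fst_halfPlane hft hτ.le θ).unique (hH θ)
  have hcomm : ∀ θ : ℝ, halfPlaneDeriv (0, 1) (halfPlaneDeriv (1, 0) (halfPlaneDeriv (1, 0) f))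
      (θ, τ) = halfPlaneDeriv (1, 0) (halfPlaneDeriv (1, 0) (halfPlaneDeriv (0, 1) f)) (θ, τ) := by
    intro θ
    have hq : (θ, τ) ∈ (univ : Set ℝ) ×ˢ Ici (0 : ℝ) := ⟨mem_univ _, hτ.le⟩
    rw [halfPlaneDeriv_comm hf₁ (0, 1) (1, 0) hq]
    exact halfPlaneDeriv_congr (halfPlaneDeriv_comm hf (0, 1) (1, 0)) (1, 0) hq
  have hHd : ∀ θ, HasDerivAt H
      (halfPlaneDeriv (1, 0) (halfPlaneDeriv (1, 0) (halfPlaneDeriv (0, 1) f)) (θ, τ)) θ := by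
    intro θ
    rw [← hHeq]
    exact hasDerivAt_fst_halfPlane hft₁ hτ.le θ
  have hper₂ := halfPlaneDeriv_fst_periodic hf₁ hτ.le (halfPlaneDeriv_fst_periodic hf hτ.le hper) 0
  simp only [zero_add] at hper₂
  refine (hasDerivAt_integral_sq_halfPlane hf₂ hL hτ).congr_deriv ?_
  rw [intervalIntegral.integral_const_mul, intervalIntegral.integral_neg]
  congr 1
  simp only [hcomm]
  rw [intervalIntegral.integral_mul_deriv_eq_deriv_mul
    (fun θ _ => hasDerivAt_fst_halfPlane hf₂ hτ.le θ) (fun θ _ => hHd θ)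
    ((continuous_fst_of_halfPlane hf₃ hτ.le).intervalIntegrable _ _)
    ((continuous_fst_of_halfPlane hft₂ hτ.le).intervalIntegrable _ _), hper₂, hHper]
  ring

/-- Lemma 3.2: uniform-in-time `L²` bound on the second angular derivative
of the normalized curvature. -/
theorem second_derivative_L2_bound
    (p : ℝ) (hp : 1 ≤ p) (K : ℝ → ℝ → ℝ)
    (hsmooth : ContDiffOn ℝ (⊤ : ℕ∞) (fun q : ℝ × ℝ => K q.1 q.2) (univ ×ˢ Ici 0))
    (hper : ∀ τ : ℝ, Function.Periodic (fun θ => K θ τ) (2 * π))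
    (hpos : ∀ θ τ : ℝ, 0 ≤ τ → 0 < K θ τ)
    (hpde : ∀ θ : ℝ, ∀ τ ∈ Ioi (0:ℝ),
      deriv (fun s => K θ s) τ =
        p * K θ τ ^ (1 + 1 / p) * deriv (deriv (fun x => K x τ)) θ
          + p * K θ τ ^ (2 + 1 / p) - p * K θ τ)
    (hconv : TendstoUniformly (fun τ θ => K θ τ) (fun _ => 1) atTop) :
    ∃ C : ℝ, 0 < C ∧ ∀ τ : ℝ, 0 ≤ τ →
      (∫ θ in (0:ℝ)..(2 * π), (deriv (deriv (fun x => K x τ)) θ) ^ 2) ^ ((1:ℝ) / 2) ≤ C := by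
  set f : ℝ × ℝ → ℝ := fun q => K q.1 q.2 with hfdef
  have hp0 : 0 < p := by linarith
  have hpinv : 0 < 1 / p := by positivity
  have hL : (0 : ℝ) ≤ 2 * π := by positivity
  have hf₁ := hsmooth.halfPlaneDeriv (1, 0)
  have hf₂ := hf₁.halfPlaneDeriv (1, 0)
  have hf₃ := hf₂.halfPlaneDeriv (1, 0)
  have hd₀ : ∀ τ, 0 ≤ τ → ∀ θ,
      HasDerivAt (fun x => K x τ) (halfPlaneDeriv (1, 0) f (θ, τ)) θ :=
    fun τ hτ θ => hasDerivAt_fst_halfPlane hsmooth hτ θ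
  have hd₁ : ∀ τ, 0 ≤ τ → ∀ θ, HasDerivAt (fun x => halfPlaneDeriv (1, 0) f (x, τ))
      (halfPlaneDeriv (1, 0) (halfPlaneDeriv (1, 0) f) (θ, τ)) θ :=
    fun τ hτ θ => hasDerivAt_fst_halfPlane hf₁ hτ θ
  have hd₂ : ∀ τ, 0 ≤ τ → ∀ θ, HasDerivAt
      (fun x => halfPlaneDeriv (1, 0) (halfPlaneDeriv (1, 0) f) (x, τ))
      (halfPlaneDeriv (1, 0) (halfPlaneDeriv (1, 0) (halfPlaneDeriv (1, 0) f)) (θ, τ)) θ :=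
    fun τ hτ θ => hasDerivAt_fst_halfPlane hf₂ hτ θ
  have hderiv : ∀ τ, 0 ≤ τ → ∀ θ, deriv (deriv (fun x => K x τ)) θ =
      halfPlaneDeriv (1, 0) (halfPlaneDeriv (1, 0) f) (θ, τ) := by
    intro τ hτ θ
    rw [funext fun θ => (hd₀ τ hτ θ).deriv]
    exact (hd₁ τ hτ θ).deriv
  set f₁ := halfPlaneDeriv (1, 0) f with hf₁def
  set f₂ := halfPlaneDeriv (1, 0) f₁ with hf₂def
  set f₃ := halfPlaneDeriv (1, 0) f₂ with hf₃def
  set Y : ℝ → ℝ := fun τ => ∫ θ in (0 : ℝ)..(2 * π), f₂ (θ, τ) ^ 2 with hY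
  have hYnonneg : ∀ τ, 0 ≤ Y τ := fun τ =>
    intervalIntegral.integral_nonneg hL fun θ _ => sq_nonneg _
  suffices hbound : ∃ M, ∀ τ, 0 ≤ τ → Y τ ≤ M by
    obtain ⟨M, hM⟩ := hbound
    have hM0 : 0 ≤ M := (hYnonneg 0).trans (hM 0 le_rfl)
    refine ⟨(M + 1) ^ ((1 : ℝ) / 2), by positivity, fun τ hτ => ?_⟩
    simp only [hderiv τ hτ]
    exact rpow_le_rpow (hYnonneg τ) (by linarith [hM τ hτ]) (by norm_num)
  set c : ℝ := p * (1 / 2) ^ (1 + 1 / p) with hcdef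
  set C₁ : ℝ := p * (1 + 1 / p) * 2 ^ (1 + 1 / p - 1) with hC₁def
  set C₂ : ℝ := p * (2 + 1 / p) * 2 ^ (2 + 1 / p - 1) + p with hC₂def
  have hc : 0 < c := by positivity
  have hC₁ : 0 ≤ C₁ := by positivity
  have hC₂ : 0 ≤ C₂ := by positivity
  set N := (C₁ + 1) ^ 2 / (2 * c) with hN
  have hNpos : 0 < N := by positivity
  set ε : ℝ := min (1 / 2) (1 / (4 * N)) with hε
  have hεpos : 0 < ε := by positivity
  have hε2 : ε ≤ 1 / 2 := min_le_left _ _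
  have hεN : 4 * N * ε ≤ 1 := by
    calc 4 * N * ε ≤ 4 * N * (1 / (4 * N)) := by gcongr; exact min_le_right _ _
      _ = 1 := by field_simp
  obtain ⟨T, hT1, hT⟩ : ∃ T : ℝ, 1 ≤ T ∧ ∀ τ, T ≤ τ → ∀ θ, |K θ τ - 1| ≤ ε := by
    obtain ⟨T, hT⟩ := eventually_atTop.1 (Metric.tendstoUniformly_iff.1 hconv ε hεpos)
    refine ⟨max T 1, le_max_right _ _, fun τ hτ θ => ?_⟩
    have h := hT τ ((le_max_left _ _).trans hτ) θ
    rw [dist_comm, dist_eq] at h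
    exact h.le
  obtain ⟨M₀, hM₀, hM₀le⟩ := exists_abs_le_of_halfPlane hf₂ (2 * π) T
  have hearly : ∀ τ, 0 ≤ τ → τ ≤ T → Y τ ≤ 2 * π * M₀ ^ 2 := by
    intro τ hτ hτT
    calc Y τ ≤ ∫ _ in (0 : ℝ)..(2 * π), M₀ ^ 2 := by
          refine intervalIntegral.integral_mono_on hL
            (((continuous_fst_of_halfPlane hf₂ hτ).pow 2).intervalIntegrable _ _)
            intervalIntegrable_const fun θ hθ => ?_
          exact sq_le_sq.2 ((hM₀le θ hθ τ ⟨hτ, hτT⟩).trans (le_abs_self _))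
      _ = 2 * π * M₀ ^ 2 := by simp
  set A : ℝ → ℝ → ℝ := fun τ θ => p * K θ τ ^ (1 + 1 / p) with hA
  set B : ℝ → ℝ → ℝ := fun τ θ => p * (1 + 1 / p) * K θ τ ^ (1 + 1 / p - 1) with hB
  set G : ℝ → ℝ → ℝ := fun τ θ => p * (2 + 1 / p) * K θ τ ^ (2 + 1 / p - 1) - p with hG
  set H : ℝ → ℝ → ℝ := fun τ θ =>
    A τ θ * f₃ (θ, τ) + B τ θ * (f₁ (θ, τ) * f₂ (θ, τ)) + G τ θ * f₁ (θ, τ) with hH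
  have hHd : ∀ τ, 0 < τ → ∀ θ,
      HasDerivAt (fun x => halfPlaneDeriv (0, 1) f (x, τ)) (H τ θ) θ := by
    intro τ hτ θ
    have hrhs : (fun x => halfPlaneDeriv (0, 1) f (x, τ)) = fun x =>
        p * K x τ ^ (1 + 1 / p) * f₂ (x, τ) + p * K x τ ^ (2 + 1 / p) - p * K x τ := by
      funext x
      rw [← hderiv τ hτ.le x, ← hpde x τ hτ]
      exact (hasDerivAt_snd_halfPlane hsmooth x hτ).deriv.symm
    rw [hrhs]
    have hne : K θ τ ≠ 0 := (hpos θ τ hτ.le).ne'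
    have hK := hd₀ τ hτ.le θ
    have h := ((((hK.rpow_const (p := 1 + 1 / p) (Or.inl hne)).const_mul p).mul
      (hd₂ τ hτ.le θ)).add ((hK.rpow_const (p := 2 + 1 / p) (Or.inl hne)).const_mul p)).sub
      (hK.const_mul p)
    refine h.congr_deriv ?_
    simp only [hH, hA, hB, hG]
    ring
  have hper₀ : ∀ τ, K (2 * π) τ = K 0 τ := fun τ => by simpa using hper τ 0
  have hper₁ : ∀ τ, 0 ≤ τ → Function.Periodic (fun θ => f₁ (θ, τ)) (2 * π) := fun τ hτ =>
    halfPlaneDeriv_fst_periodic hsmooth hτ (hper τ)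
  have hper₂ : ∀ τ, 0 ≤ τ → Function.Periodic (fun θ => f₂ (θ, τ)) (2 * π) := fun τ hτ =>
    halfPlaneDeriv_fst_periodic hf₁ hτ (hper₁ τ hτ)
  have hper₃ : ∀ τ, 0 ≤ τ → Function.Periodic (fun θ => f₃ (θ, τ)) (2 * π) := fun τ hτ =>
    halfPlaneDeriv_fst_periodic hf₂ hτ (hper₂ τ hτ)
  have hYd : ∀ τ, T ≤ τ → HasDerivAt Y
      (2 * ∫ θ in (0 : ℝ)..(2 * π), -(f₃ (θ, τ) * H τ θ)) τ := by
    intro τ hτ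
    have hτ0 : 0 < τ := by linarith
    refine hasDerivAt_integral_sq_second_halfPlaneDeriv hsmooth hL hτ0 (hper τ) ?_ (hHd τ hτ0)
    have e₁ := (hper₁ τ hτ0.le).eq
    have e₂ := (hper₂ τ hτ0.le).eq
    have e₃ := (hper₃ τ hτ0.le).eq
    simp only [hH, hA, hB, hG, hper₀, e₁, e₂, e₃]
  set M := 2 * π * ((C₂ + 1) ^ 2 / (2 * c)) ^ 2 with hMdef
  have hle : ∀ τ, T ≤ τ → 2 * ∫ θ in (0 : ℝ)..(2 * π), -(f₃ (θ, τ) * H τ θ) ≤ -Y τ + M := by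
    intro τ hτ
    have hτ0 : 0 ≤ τ := by linarith
    have hKlow : ∀ θ, 1 / 2 ≤ K θ τ := fun θ => by
      linarith [(abs_le.1 (hT τ hτ θ)).1]
    have hKup : ∀ θ, K θ τ ≤ 2 := fun θ => by
      linarith [(abs_le.1 (hT τ hτ θ)).2]
    have hKc : Continuous fun θ => K θ τ := continuous_fst_of_halfPlane hsmooth hτ0
    have hKr : ∀ r : ℝ, Continuous fun θ => K θ τ ^ r := fun r =>
      hKc.rpow_const fun θ => Or.inl (hpos θ τ hτ0).ne'
    have hKpow : ∀ r : ℝ, 0 ≤ r → ∀ θ, K θ τ ^ r ≤ 2 ^ r := fun r hr θ =>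
      rpow_le_rpow (hpos θ τ hτ0).le (hKup θ) hr
    have hKpos : ∀ r : ℝ, ∀ θ, 0 < K θ τ ^ r := fun r θ => rpow_pos_of_pos (hpos θ τ hτ0) r
    refine integral_dissipation_le (u₀ := fun θ => K θ τ - 1) (u₁ := fun θ => f₁ (θ, τ))
      (u₂ := fun θ => f₂ (θ, τ)) (u₃ := fun θ => f₃ (θ, τ)) (A := A τ) (B := B τ) (G := G τ)
      hL hc hC₁ hC₂ (by linarith) hεN (fun θ => (hd₀ τ hτ0 θ).sub_const 1) (hd₁ τ hτ0) (hd₂ τ hτ0)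
      (continuous_fst_of_halfPlane hf₃ hτ0) (continuous_const.mul (hKr _))
      (continuous_const.mul (hKr _)) ((continuous_const.mul (hKr _)).sub continuous_const)
      (by rw [hper₀]) (hper₁ τ hτ0).eq (hper₂ τ hτ0).eq (hT τ hτ) ?_ ?_ ?_
    · intro θ
      have := rpow_le_rpow (by norm_num) (hKlow θ) (show 0 ≤ 1 + 1 / p by positivity)
      simp only [hA, hcdef]
      gcongr
    · intro θ
      have h := hKpow (1 + 1 / p - 1) (by linarith) θ
      have h0 := hKpos (1 + 1 / p - 1) θ
      simp only [hB, hC₁def]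
      rw [abs_of_nonneg (by positivity)]
      gcongr
    · intro θ
      have h := hKpow (2 + 1 / p - 1) (by linarith) θ
      have h0 := hKpos (2 + 1 / p - 1) θ
      simp only [hG, hC₂def]
      refine (abs_sub _ _).trans ?_
      rw [abs_of_nonneg (by positivity), abs_of_pos hp0]
      gcongr
  have hMnonneg : 0 ≤ M := by positivity
  refine ⟨2 * π * M₀ ^ 2 + M, fun τ hτ => ?_⟩
  rcases le_total τ T with h | h
  · linarith [hearly τ hτ h]
  · have h1 := le_add_of_deriv_le_neg_add hMnonneg (hYnonneg T) hYd hle h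
    linarith [hearly T (by linarith) le_rfl]
end

section
/- Let p ≥ 1 be a real number. Let k̃ : ℝ × [0,∞) → ℝ be a smooth function, 2π-periodic in its first (angular) variable θ, with k̃(θ,τ) > 0 everywhere, satisfying the rescaled curve-shortening equation ∂k̃/∂τ = p·k̃^{1+1/p}·∂²k̃/∂θ² + p·k̃^{2+1/p} − p·k̃ on ℝ × (0,∞), and suppose sup_θ |k̃(θ,τ) − 1| → 0 as τ → ∞. Then sup_θ |∂k̃/∂θ (θ,τ)| → 0 as τ → ∞. -/
open Real Filter Set

/-- The second derivative of a function is nonpositive at a local maximum. -/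
lemma deriv_deriv_nonpos_of_isLocalMax {g : ℝ → ℝ} {x : ℝ} (hmax : IsLocalMax g x)
    (hg : ContinuousAt g x) : deriv (deriv g) x ≤ 0 := by
  by_contra! h
  have hmin : IsLocalMin g x := isLocalMin_of_deriv_deriv_pos h hmax.deriv_eq_zero hg
  have hconst : g =ᶠ[nhds x] fun _ => g x := by
    filter_upwards [hmax, hmin] with y h1 h2 using le_antisymm h1 h2
  have h0 : deriv (deriv g) x = 0 := by
    rw [hconst.deriv.deriv_eq]
    simp
  exact h.ne' h0

/-- The second derivative of the sum of a `C²` function and a quadratic polynomial. -/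
lemma deriv_deriv_add_quadratic {g : ℝ → ℝ} (hg : ContDiff ℝ 2 g) (a b c x : ℝ) :
    deriv (deriv (fun y => g y + (a + b * y + c * y ^ 2))) x = deriv (deriv g) x + 2 * c := by
  have hd : Differentiable ℝ g := hg.differentiable (by norm_num)
  have hdd : Differentiable ℝ (deriv g) := by
    have h : ContDiff ℝ (1 + 1) g := by simpa [one_add_one_eq_two] using hg
    exact (contDiff_succ_iff_deriv.1 h).2.2.differentiable (by norm_num)
  have h1 : deriv (fun y => g y + (a + b * y + c * y ^ 2)) =
      fun y => deriv g y + (b + 2 * c * y) := by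
    funext y
    have hq : HasDerivAt (fun y : ℝ => a + b * y + c * y ^ 2) (b + 2 * c * y) y := by
      refine ((((hasDerivAt_id y).const_mul b).const_add a).add
        ((hasDerivAt_pow 2 y).const_mul c)).congr_deriv ?_
      push_cast
      ring
    exact ((hd y).hasDerivAt.add hq).deriv
  rw [h1]
  have hl : HasDerivAt (fun y : ℝ => b + 2 * c * y) (2 * c) x := by
    simpa using ((hasDerivAt_id x).const_mul (2 * c)).const_add b
  exact ((hdd x).hasDerivAt.add hl).deriv

/-- The derivative is nonnegative at a point that maximizes the function to its left. -/
lemma HasDerivAt.nonneg_of_left_max {g : ℝ → ℝ} {g' a s : ℝ} (hg : HasDerivAt g g' s)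
    (has : a < s) (hmax : ∀ r ∈ Icc a s, g r ≤ g s) : 0 ≤ g' := by
  have ht : Tendsto (slope g s) (nhdsWithin s (Iio s)) (nhds g') :=
    (hasDerivWithinAt_iff_tendsto_slope' (by simp)).1 hg.hasDerivWithinAt
  refine ge_of_tendsto ht ?_
  filter_upwards [Ioo_mem_nhdsLT has] with r hr
  rw [slope_def_field]
  exact div_nonneg_of_nonpos (sub_nonpos.2 (hmax r ⟨hr.1.le, hr.2.le⟩)) (by linarith [hr.2])

/-- A one-sided Lipschitz bound after unit time for spatially periodic solutions of a uniformly
parabolic equation with small oscillation and small source, obtained from the maximum principle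
for the two-point function `f x τ - f y τ`. -/
lemma parabolic_two_point_bound {f a R : ℝ → ℝ → ℝ} {T ε c : ℝ} (hε : 0 < ε) (hc : 0 < c)
    (hcont : ContinuousOn (fun q : ℝ × ℝ => f q.1 q.2) (univ ×ˢ Icc T (T + 1)))
    (hper : ∀ τ, Function.Periodic (fun θ => f θ τ) c)
    (hdiff : ∀ θ, ∀ τ ∈ Ioc T (T + 1), DifferentiableAt ℝ (fun s => f θ s) τ)
    (hspace : ∀ τ ∈ Ioc T (T + 1), ContDiff ℝ 2 (fun x => f x τ))
    (hpde : ∀ θ, ∀ τ ∈ Ioc T (T + 1), deriv (fun s => f θ s) τ =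
      a θ τ * deriv (deriv (fun x => f x τ)) θ + R θ τ)
    (ha : ∀ θ, ∀ τ ∈ Ioc T (T + 1), 1 / 2 ≤ a θ τ)
    (hR : ∀ θ, ∀ τ ∈ Ioc T (T + 1), |R θ τ| ≤ ε)
    (hosc : ∀ x y, ∀ τ ∈ Icc T (T + 1), f x τ - f y τ ≤ 2 * ε)
    {x y : ℝ} (hyx : y ≤ x) (hxy : x ≤ y + 1) :
    f x (T + 1) - f y (T + 1) ≤ 5 * ε * (x - y) := by
  set Z : ℝ × ℝ × ℝ → ℝ := fun q => f (q.1 + q.2.1) q.2.2 - f q.1 q.2.2 -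
    (5 * ε * q.2.1 - 3 * ε * q.2.1 ^ 2 + 2 * ε * (T + 1 - q.2.2)) with hZ
  set S : Set (ℝ × ℝ × ℝ) := Icc 0 c ×ˢ Icc 0 1 ×ˢ Icc T (T + 1)
  have hZc : ContinuousOn Z S := by
    have h1 : ContinuousOn (fun q : ℝ × ℝ × ℝ => f (q.1 + q.2.1) q.2.2) S :=
      hcont.comp (f := fun q : ℝ × ℝ × ℝ => (q.1 + q.2.1, q.2.2)) (by fun_prop)
        fun q hq => ⟨mem_univ _, hq.2.2⟩
    have h2 : ContinuousOn (fun q : ℝ × ℝ × ℝ => f q.1 q.2.2) S :=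
      hcont.comp (f := fun q : ℝ × ℝ × ℝ => (q.1, q.2.2)) (by fun_prop)
        fun q hq => ⟨mem_univ _, hq.2.2⟩
    exact (h1.sub h2).sub (by fun_prop)
  obtain ⟨⟨y₀, d, s⟩, hq, hmax⟩ := (isCompact_Icc.prod (isCompact_Icc.prod isCompact_Icc) :
    IsCompact S).exists_isMaxOn
      ⟨(0, 0, T), ⟨le_rfl, hc.le⟩, ⟨le_rfl, zero_le_one⟩, ⟨le_rfl, by linarith⟩⟩ hZc
  obtain ⟨-, ⟨hd0, hd1⟩, hsT, hsT1⟩ := hq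
  have hglob : ∀ y' d' s', d' ∈ Icc (0 : ℝ) 1 → s' ∈ Icc T (T + 1) →
      Z (y', d', s') ≤ Z (y₀, d, s) := by
    intro y' d' s' hd' hs'
    obtain ⟨n, hn⟩ : ∃ n : ℤ, y' - n * c ∈ Icc 0 c :=
      ⟨⌊y' / c⌋, by
        have := Int.floor_le (y' / c)
        have := (le_div_iff₀ hc).1 this
        linarith, by
        have := (Int.lt_floor_add_one (y' / c)).le
        have := (div_le_iff₀ hc).1 this
        linarith⟩
    have h := hmax (show (y' - n * c, d', s') ∈ S from ⟨hn, hd', hs'⟩)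
    have e1 : f (y' - n * c) s' = f y' s' := (hper s').sub_int_mul_eq n
    have e2 : f (y' - n * c + d') s' = f (y' + d') s' := by
      rw [sub_add_eq_add_sub]
      exact (hper s').sub_int_mul_eq n
    simpa [hZ, e1, e2] using h
  have hneg : Z (y₀, d, s) ≤ 0 := by
    by_contra! hp
    have ho := hosc (y₀ + d) y₀ s ⟨hsT, hsT1⟩
    have hd0' : 0 < d := by
      refine hd0.lt_of_ne fun h => ?_
      subst h
      simp only [hZ, add_zero] at hp
      nlinarith
    have hd1' : d < 1 := by
      refine hd1.lt_of_ne fun h => ?_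
      subst h
      simp only [hZ] at hp
      nlinarith
    have hsT' : T < s := by
      refine hsT.lt_of_ne fun h => ?_
      subst h
      simp only [hZ] at hp
      nlinarith [mul_nonneg (mul_nonneg hε.le hd0) (sub_nonneg.2 hd1), mul_nonneg hε.le hd0]
    have hs : s ∈ Ioc T (T + 1) := ⟨hsT', hsT1⟩
    have hx2 : deriv (deriv (fun x => f x s)) (y₀ + d) ≤ -(6 * ε) := by
      have hm : IsLocalMax (fun x => f x s + ((5 * ε * y₀ + 3 * ε * y₀ ^ 2) +
          (-(5 * ε) - 6 * ε * y₀) * x + 3 * ε * x ^ 2)) (y₀ + d) := by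
        filter_upwards [Ioo_mem_nhds (show y₀ < y₀ + d by linarith)
          (show y₀ + d < y₀ + 1 by linarith)] with x hx
        have h := hglob y₀ (x - y₀) s ⟨by linarith [hx.1], by linarith [hx.2]⟩ ⟨hsT, hsT1⟩
        simp only [hZ, add_sub_cancel] at h
        nlinarith
      have h := deriv_deriv_nonpos_of_isLocalMax hm
        ((hspace s hs).continuous.add (by fun_prop)).continuousAt
      rw [deriv_deriv_add_quadratic (hspace s hs)] at h
      linarith
    have hy2 : 6 * ε ≤ deriv (deriv (fun x => f x s)) y₀ := by
      have hm : IsLocalMax (fun y => -f y s + ((-(5 * ε) * (y₀ + d) + 3 * ε * (y₀ + d) ^ 2) +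
          (5 * ε - 6 * ε * (y₀ + d)) * y + 3 * ε * y ^ 2)) y₀ := by
        filter_upwards [Ioo_mem_nhds (show y₀ + d - 1 < y₀ by linarith)
          (show y₀ < y₀ + d by linarith)] with y hy
        have h := hglob y (y₀ + d - y) s ⟨by linarith [hy.2], by linarith [hy.1]⟩ ⟨hsT, hsT1⟩
        simp only [hZ, add_sub_cancel] at h
        nlinarith
      have h := deriv_deriv_nonpos_of_isLocalMax hm
        ((hspace s hs).continuous.neg.add (by fun_prop)).continuousAt
      rw [deriv_deriv_add_quadratic (hspace s hs).neg] at h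
      simp only [deriv.fun_neg', deriv.fun_neg] at h
      linarith
    have ht : 0 ≤ deriv (fun r => f (y₀ + d) r) s - deriv (fun r => f y₀ r) s + 2 * ε := by
      have hl : HasDerivAt (fun r : ℝ => 2 * ε * r) (2 * ε) s := by
        simpa using (hasDerivAt_id s).const_mul (2 * ε)
      refine (((hdiff (y₀ + d) s hs).hasDerivAt.sub (hdiff y₀ s hs).hasDerivAt).add
        hl).nonneg_of_left_max hsT' fun r hr => ?_
      have h := hglob y₀ d r ⟨hd0, hd1⟩ ⟨hr.1, hr.2.trans hsT1⟩
      simp only [hZ] at h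
      simp only [Pi.add_apply, Pi.sub_apply]
      linarith
    rw [hpde _ s hs, hpde _ s hs] at ht
    have h1 := ha (y₀ + d) s hs
    have h2 := ha y₀ s hs
    have h3 := abs_le.1 (hR (y₀ + d) s hs)
    have h4 := abs_le.1 (hR y₀ s hs)
    nlinarith [mul_nonneg (show (0 : ℝ) ≤ a (y₀ + d) s by linarith) (sub_nonneg.2 hx2),
      mul_nonneg (show (0 : ℝ) ≤ a y₀ s by linarith) (sub_nonneg.2 hy2),
      mul_nonneg (sub_nonneg.2 h1) hε.le, mul_nonneg (sub_nonneg.2 h2) hε.le]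
  have h := (hglob y (x - y) (T + 1) ⟨by linarith, by linarith⟩
    ⟨by linarith, le_rfl⟩).trans hneg
  simp only [hZ, add_sub_cancel, sub_self, mul_zero, add_zero] at h
  nlinarith [mul_nonneg hε.le (sq_nonneg (x - y))]

/-- The two-sided version of `parabolic_two_point_bound`, as a bound on the derivative. -/
lemma parabolic_abs_deriv_le {f a R : ℝ → ℝ → ℝ} {T ε c : ℝ} (hε : 0 < ε) (hc : 0 < c)
    (hcont : ContinuousOn (fun q : ℝ × ℝ => f q.1 q.2) (univ ×ˢ Icc T (T + 1)))
    (hper : ∀ τ, Function.Periodic (fun θ => f θ τ) c)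
    (hdiff : ∀ θ, ∀ τ ∈ Ioc T (T + 1), DifferentiableAt ℝ (fun s => f θ s) τ)
    (hspace : ∀ τ ∈ Ioc T (T + 1), ContDiff ℝ 2 (fun x => f x τ))
    (hpde : ∀ θ, ∀ τ ∈ Ioc T (T + 1), deriv (fun s => f θ s) τ =
      a θ τ * deriv (deriv (fun x => f x τ)) θ + R θ τ)
    (ha : ∀ θ, ∀ τ ∈ Ioc T (T + 1), 1 / 2 ≤ a θ τ)
    (hR : ∀ θ, ∀ τ ∈ Ioc T (T + 1), |R θ τ| ≤ ε)
    (hosc : ∀ x y, ∀ τ ∈ Icc T (T + 1), f x τ - f y τ ≤ 2 * ε) (θ : ℝ) :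
    |deriv (fun x => f x (T + 1)) θ| ≤ 5 * ε := by
  have hup : ∀ {x y : ℝ}, y ≤ x → x ≤ y + 1 →
      f x (T + 1) - f y (T + 1) ≤ 5 * ε * (x - y) := fun h h' =>
    parabolic_two_point_bound hε hc hcont hper hdiff hspace hpde ha hR hosc h h'
  have hdown : ∀ {x y : ℝ}, y ≤ x → x ≤ y + 1 →
      f (-x) (T + 1) - f (-y) (T + 1) ≤ 5 * ε * (x - y) := fun h h' =>
    parabolic_two_point_bound (f := fun x τ => f (-x) τ) (a := fun x τ => a (-x) τ)
      (R := fun x τ => R (-x) τ) hε hc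
      (hcont.comp (f := fun q : ℝ × ℝ => (-q.1, q.2)) (by fun_prop)
        fun q hq => ⟨mem_univ _, hq.2⟩)
      (fun τ x => by simpa [neg_add, sub_eq_add_neg, add_comm] using (hper τ).sub_eq (-x))
      (fun x => hdiff (-x)) (fun τ hτ => (hspace τ hτ).comp contDiff_neg)
      (fun x τ hτ => by
        rw [hpde (-x) τ hτ]
        have h1 : deriv (fun x => f (-x) τ) = fun x => -deriv (fun x => f x τ) (-x) :=
          funext fun x => deriv_comp_neg (fun x => f x τ) x
        rw [h1, deriv.fun_neg, deriv_comp_neg, neg_neg])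
      (fun x => ha (-x)) (fun x => hR (-x)) (fun x y => hosc (-x) (-y)) h h'
  refine norm_deriv_le_of_lip' (𝕜 := ℝ) (f := fun x => f x (T + 1)) (C := 5 * ε)
    (by positivity) ?_
  filter_upwards [Ioo_mem_nhds (show θ - 1 < θ by linarith) (show θ < θ + 1 by linarith)]
    with x hx
  rw [Real.norm_eq_abs, Real.norm_eq_abs]
  rcases le_total θ x with h | h
  · rw [abs_of_nonneg (sub_nonneg.2 h), abs_le]
    have h1 := hup h hx.2.le
    have h2 := hdown (neg_le_neg h) (by linarith [hx.2])
    simp only [neg_neg] at h2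
    constructor <;> linarith
  · rw [abs_of_nonpos (sub_nonpos.2 h), abs_le]
    have h1 := hup h (by linarith [hx.1])
    have h2 := hdown (neg_le_neg h) (by linarith [hx.1])
    simp only [neg_neg] at h2
    constructor <;> linarith

/-- Corollary 3.3: the uniform norm of the first angular derivative of the
normalized curvature converges to zero as τ → ∞. -/
theorem first_derivative_sup_tendsto_zero
    (p : ℝ) (hp : 1 ≤ p) (K : ℝ → ℝ → ℝ)
    (hsmooth : ContDiffOn ℝ (⊤ : ℕ∞) (fun q : ℝ × ℝ => K q.1 q.2) (univ ×ˢ Ici 0))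
    (hper : ∀ τ : ℝ, Function.Periodic (fun θ => K θ τ) (2 * π))
    (hpos : ∀ θ τ : ℝ, 0 ≤ τ → 0 < K θ τ)
    (hpde : ∀ θ : ℝ, ∀ τ ∈ Ioi (0:ℝ),
      deriv (fun s => K θ s) τ =
        p * K θ τ ^ (1 + 1 / p) * deriv (deriv (fun x => K x τ)) θ
          + p * K θ τ ^ (2 + 1 / p) - p * K θ τ)
    (hconv : TendstoUniformly (fun τ θ => K θ τ) (fun _ => 1) atTop) :
    TendstoUniformly (fun τ θ => deriv (fun x => K x τ) θ) (fun _ => 0) atTop := by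
  rw [Metric.tendstoUniformly_iff] at hconv ⊢
  intro η hη
  set ε := η / 6 with hεdef
  have hε : 0 < ε := by positivity
  have hA : ∀ᶠ u in nhds (1 : ℝ), 1 / 2 ≤ p * u ^ (1 + 1 / p) := by
    have hc : ContinuousAt (fun u : ℝ => p * u ^ (1 + 1 / p)) 1 :=
      continuousAt_const.mul (continuousAt_id.rpow_const (Or.inl one_ne_zero))
    refine (hc.eventually (lt_mem_nhds (show (1 / 2 : ℝ) < _ from ?_))).mono fun u h => h.le
    simp only [one_rpow]
    linarith
  have hB : ∀ᶠ u in nhds (1 : ℝ), |p * u ^ (2 + 1 / p) - p * u| ≤ ε := by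
    have hc : ContinuousAt (fun u : ℝ => |p * u ^ (2 + 1 / p) - p * u|) 1 :=
      ((continuousAt_const.mul (continuousAt_id.rpow_const (Or.inl one_ne_zero))).sub
        (continuousAt_const.mul continuousAt_id)).abs
    refine (hc.eventually (gt_mem_nhds (show _ < ε from ?_))).mono fun u h => h.le
    simpa using hε
  obtain ⟨δ, hδ, hδAB⟩ := Metric.eventually_nhds_iff.1 (hA.and hB)
  obtain ⟨T₀, hT₀⟩ := eventually_atTop.1 (hconv (min δ ε) (lt_min hδ hε))
  have hK : ∀ θ τ, T₀ ≤ τ → dist (K θ τ) 1 < min δ ε := fun θ τ h => by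
    rw [dist_comm]
    exact hT₀ τ h θ
  have hAt : ∀ θ τ, 0 < τ →
      ContDiffAt ℝ (⊤ : ℕ∞) (fun q : ℝ × ℝ => K q.1 q.2) (θ, τ) := fun θ τ hτ =>
    hsmooth.contDiffAt (prod_mem_nhds univ_mem (Ici_mem_nhds hτ))
  filter_upwards [eventually_ge_atTop (max T₀ 0 + 1)] with τ hτ θ
  obtain ⟨T, rfl⟩ : ∃ T, τ = T + 1 := ⟨τ - 1, by ring⟩
  have hT : max T₀ 0 ≤ T := by linarith
  have hTT : T₀ ≤ T := (le_max_left _ _).trans hT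
  have hT0 : 0 ≤ T := (le_max_right _ _).trans hT
  have key := parabolic_abs_deriv_le (f := K) (a := fun θ τ => p * K θ τ ^ (1 + 1 / p))
    (R := fun θ τ => p * K θ τ ^ (2 + 1 / p) - p * K θ τ) (T := T) hε two_pi_pos
    (hsmooth.continuousOn.mono (prod_mono_right fun s hs => hT0.trans hs.1)) hper
    (fun x s hs => ((hAt x s (hT0.trans_lt hs.1)).differentiableAt (by simp)).comp s
      (f := fun s => (x, s)) (by fun_prop))
    (fun s hs => contDiff_iff_contDiffAt.2 fun x =>
      ((hAt x s (hT0.trans_lt hs.1)).of_le (WithTop.coe_le_coe.2 (le_top (a := (2 : ℕ∞))))).comp x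
        (f := fun x => (x, s)) (by fun_prop))
    (fun x s hs => by rw [hpde x s (hT0.trans_lt hs.1)]; ring)
    (fun x s hs => (hδAB ((hK x s (hTT.trans hs.1.le)).trans_le (min_le_left _ _))).1)
    (fun x s hs => (hδAB ((hK x s (hTT.trans hs.1.le)).trans_le (min_le_left _ _))).2)
    (fun x y s hs => by
      have h1 := abs_lt.1 ((hK x s (hTT.trans hs.1)).trans_le (min_le_right _ _))
      have h2 := abs_lt.1 ((hK y s (hTT.trans hs.1)).trans_le (min_le_right _ _))
      linarith [h1.2, h2.1]) θ
  rw [dist_comm, Real.dist_eq, sub_zero]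
  exact key.trans_lt (by linarith)
end
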